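/- arXiv:1312.0668 — 2 statements merged into one kernel-verified Lean document; each statement's English description precedes it below -/
import Mathlib

section
/- For any sequence (ε_k) of positive reals tending to 0, there exist a sequence (n_k) of positive integers satisfying n_{k+1}/n_k ≥ 1 + ε_k for all k ≥ k₀, a permutation σ of the positive integers, a bounded sequence of reals (b_N), and a Borel probability measure G on ℝ, such that: (i) the random variables N^{-1/2} Σ_{k=1}^N cos(2π n_{σ(k)} x) − b_N, where x is uniformly distributed on (0,1), converge in distribution to G as N → ∞; (ii) G is not a Gaussian distribution; and (iii) the characteristic function of G at t equals exp( ∫_{ℝ\{0}} ( e^{itx} − 1 − itx/(1+x²) ) dL(x) ), where dL is the measure on ℝ\{0} that is absolutely continuous with respect to Lebesgue measure with density F(x)/(πx) for 0 < x ≤ 1, density G₀(−x)/(π(−x)) for −1 ≤ x < 0, and density 0 for |x| > 1, where F(t) = λ{ x > 0 : sin x / x ≥ t } and G₀(t) = λ{ x > 0 : sin x / x ≤ −t } for t > 0, λ being Lebesgue measure. -/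
/-!
The frequencies are grouped into blocks, each an arithmetic progression `μ, 2μ, …, lμ`. The ratio
of consecutive terms of such a block is at least `1 + 1/l`, which is admissible as soon as
`ε_k l ≤ 1`, hence sufficiently far out in the sequence. In front of each block there are filler
indices, numerous enough to reach that range, and the bases `μ` grow so fast that consecutive
blocks are separated by huge gaps (`freq_gap`). The permutation `perm` puts the fillers at the
sparse set of fourth powers and keeps the block terms in order everywhere else.

Round `i` consists of a block of length `i + 1` and, only when `i + 1` is a fourth power, of one
long block; the long blocks of the first `K` rounds have total length about `K²/2`. Thus `K`
rounds use `N ~ K²` terms (`rounds_ratio`). A block sum `dk l θ = ∑_{j ≤ l} cos(2π j θ)` has `L¹`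
norm `O(l^{1/4})`, so the few long blocks, the last incomplete block and the fillers contribute
`o(√N)` in mean (`integral_abs_remainder_le`). They only serve to adjust the normalization.

The blocks of lengths `1, …, K` are nearly independent since their bases grow rapidly
(`charFun_blockSum_sub_prod`), and so the characteristic function of the normalized sum is close
to `∏_{l ≤ K} φ_l(t/√N)`, with `φ_l` the characteristic function of `dk l`. Since `dk l` has mean
zero, the substitution `θ = v/(2πl)` gives
`φ_l(s) - 1 = (1/(πl)) ∫_0^{πl} ψ(s l · dkn l v) dv`, where `ψ(y) = e^{iy} - 1 - iy` and
`dkn l v = dk l (v/(2πl)) / l` tends to `sin v / v`. Summation over `l = uK` is a Riemann sum with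
limit `∫_0^1 (1/(πu)) ∫_0^∞ ψ(t u sinc v) dv du` (`sum_blockChar_tendsto`). The image of
`du/(πu) ⊗ dv` under `(u, v) ↦ u sinc v` is exactly the measure `L` (`levyMeasure_eq_map`), so the
product converges to `exp (∫ (e^{itx} - 1 - itx) dL)`. The constant centering
`b_N = -∫ x³/(1+x²) dL` replaces the compensator `itx` by `itx/(1+x²)`, and Lévy's continuity
theorem yields the limit law `G`. It is not Gaussian because its Lévy measure does not vanish
(`not_gaussian`).
-/

open MeasureTheory Filter Real Topology

noncomputable section

/-- `F(t) = λ{x > 0 : sin x / x ≥ t}`. -/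
def Ffun (t : ℝ) : ℝ := (volume {x : ℝ | 0 < x ∧ t ≤ Real.sin x / x}).toReal

/-- `G₀(t) = λ{x > 0 : sin x / x ≤ -t}`. -/
def G0fun (t : ℝ) : ℝ := (volume {x : ℝ | 0 < x ∧ Real.sin x / x ≤ -t}).toReal

/-- The density of the Lévy measure `dL`: `F(x)/(πx)` for `0 < x ≤ 1`,
`G₀(-x)/(π(-x))` for `-1 ≤ x < 0`, and `0` for other `x` (in particular for `|x| > 1`). -/
def levyDensity (x : ℝ) : ℝ :=
  if 0 < x ∧ x ≤ 1 then Ffun x / (π * x)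
  else if -1 ≤ x ∧ x < 0 then G0fun (-x) / (π * (-x))
  else 0

/-- The Lévy measure `L`, absolutely continuous with respect to Lebesgue measure with
density `levyDensity`. -/
def levyMeasure : Measure ℝ :=
  volume.withDensity (fun x => ENNReal.ofReal (levyDensity x))

/-! ### Lévy's continuity theorem -/

/-- Lévy's continuity theorem in existence form: a pointwise limit of characteristic functions that
is continuous at `0` forces tightness, hence is itself a characteristic function. -/
lemma levy_continuity (μ : ℕ → ProbabilityMeasure ℝ) (f : ℝ → ℂ) (hf : ContinuousAt f 0)
    (h : ∀ t, Tendsto (fun n => charFun (μ n : Measure ℝ) t) atTop (𝓝 (f t))) :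
    ∃ G : ProbabilityMeasure ℝ, (∀ t, charFun (G : Measure ℝ) t = f t) ∧
      Tendsto μ atTop (𝓝 G) := by
  have ht := isTightMeasureSet_of_tendsto_charFun (μ := fun n => (μ n : Measure ℝ)) hf h
  have hc : IsCompact (closure (Set.range μ)) := by
    apply isCompact_closure_of_isTightMeasureSet
    convert ht using 1
    ext x; simp [eq_comm]
  obtain ⟨G, -, φ, hφ, hG⟩ := hc.tendsto_subseq (x := μ) (fun n => subset_closure ⟨n, rfl⟩)
  have hGf : ∀ t, charFun (G : Measure ℝ) t = f t := fun t =>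
    tendsto_nhds_unique ((ProbabilityMeasure.tendsto_iff_tendsto_charFun.1 hG) t)
      ((h t).comp hφ.tendsto_atTop)
  refine ⟨G, hGf, ProbabilityMeasure.tendsto_iff_tendsto_charFun.2 fun t => ?_⟩
  rw [hGf]; exact h t

/-! ### The Lévy measure as an image measure -/

/-- The measure `du / (π u) ⊗ dv` on `(0,1] × (0,∞)`. -/
def srcMeasure : Measure (ℝ × ℝ) :=
  ((volume.restrict (Set.Ioc (0:ℝ) 1)).withDensity (fun u => ENNReal.ofReal (1 / (π * u)))).prod
    (volume.restrict (Set.Ioi (0:ℝ)))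

lemma ae_sinc_ne_zero : ∀ᵐ v : ℝ ∂(volume.restrict (Set.Ioi (0:ℝ))), Real.sinc v ≠ 0 := by
  rw [ae_restrict_iff' measurableSet_Ioi]
  have : (Set.range fun n : ℤ => (n : ℝ) * π).Countable := Set.countable_range _
  filter_upwards [this.ae_notMem volume] with v hv hv0 h
  rw [Real.sinc_of_ne_zero (ne_of_gt hv0), div_eq_zero_iff] at h
  rcases h with h | h
  · exact hv (Real.sin_eq_zero_iff.1 h)
  · exact (ne_of_gt hv0) h

/-- The substitution `x = u s`, under which `du / u` is invariant. -/
lemma inner_scaling (S : Set ℝ) (hS : MeasurableSet S) (s : ℝ) (hs : s ≠ 0) :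
    ∫⁻ u in Set.Ioc (0:ℝ) 1, ENNReal.ofReal (1 / (π * u)) * S.indicator 1 (u * s) =
      ∫⁻ x, S.indicator (fun x => ENNReal.ofReal (1 / (π * |x|))) x *
        {y : ℝ | 0 < y / s ∧ y / s ≤ 1}.indicator 1 x := by
  have hm : MeasurableSet {y : ℝ | 0 < y / s ∧ y / s ≤ 1} :=
    have hd : Measurable fun y : ℝ => y / s := by fun_prop
    (measurableSet_lt measurable_const hd).inter (measurableSet_le hd measurable_const)
  have key : ∀ g : ℝ → ENNReal, Measurable g →
      ∫⁻ x, g x = ENNReal.ofReal |s| * ∫⁻ u, g (u * s) := by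
    intro g hg
    conv_lhs => rw [← Real.smul_map_volume_mul_right hs]
    rw [lintegral_smul_measure, lintegral_map hg (by fun_prop), smul_eq_mul]
  have hi : Measurable (S.indicator (fun x : ℝ => ENNReal.ofReal (1 / (π * |x|)))) :=
    Measurable.indicator (by fun_prop) hS
  rw [key (fun x => S.indicator (fun x => ENNReal.ofReal (1 / (π * |x|))) x *
        {y : ℝ | 0 < y / s ∧ y / s ≤ 1}.indicator 1 x) (hi.mul (measurable_one.indicator hm)),
    ← lintegral_indicator measurableSet_Ioc, ← lintegral_const_mul' _ _ (by simp)]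
  congr 1; ext u
  have : u * s / s = u := by field_simp
  simp only [Set.indicator_apply, Set.mem_Ioc, Set.mem_ofPred_eq, this, Pi.one_apply]
  split_ifs with h1
  · by_cases hu : u * s ∈ S
    · rw [Set.indicator_of_mem hu, Set.indicator_of_mem hu, Pi.one_apply, mul_one, mul_one,
        ← ENNReal.ofReal_mul (abs_nonneg _), abs_mul, abs_of_pos h1.1]
      congr 1
      have := abs_pos.2 hs
      have := h1.1
      field_simp
    · rw [Set.indicator_of_notMem hu, Set.indicator_of_notMem hu]; simp
  · simp

lemma vol_F (x : ℝ) (hx : 0 < x) :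
    volume {v : ℝ | 0 < v ∧ x ≤ Real.sin v / v} = ENNReal.ofReal (Ffun x) := by
  rw [Ffun, ENNReal.ofReal_toReal]
  refine ne_of_lt (lt_of_le_of_lt (measure_mono (t := Set.Icc 0 (1/x)) ?_) (by simp))
  rintro v ⟨hv, h⟩
  refine ⟨hv.le, ?_⟩
  rw [le_div_iff₀ hv] at h
  rw [le_div_iff₀ hx]
  nlinarith [Real.sin_le_one v]

lemma vol_G (x : ℝ) (hx : 0 < x) :
    volume {v : ℝ | 0 < v ∧ Real.sin v / v ≤ -x} = ENNReal.ofReal (G0fun x) := by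
  rw [G0fun, ENNReal.ofReal_toReal]
  refine ne_of_lt (lt_of_le_of_lt (measure_mono (t := Set.Icc 0 (1/x)) ?_) (by simp))
  rintro v ⟨hv, h⟩
  refine ⟨hv.le, ?_⟩
  rw [div_le_iff₀ hv] at h
  rw [le_div_iff₀ hx]
  nlinarith [Real.neg_one_le_sin v]

lemma sinc_le_inv {v : ℝ} (hv : 0 < v) : |Real.sinc v| ≤ 1 / v := by
  rw [Real.sinc_of_ne_zero hv.ne', abs_div, abs_of_pos hv]
  gcongr
  exact Real.abs_sin_le_one v

/-- For fixed `x`, the condition `0 < x / sinc v ≤ 1` says that `sinc v` has the sign of `x` and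
`|sinc v| ≥ |x|`; the measure of such `v` is `F(x)` or `G₀(-x)`. -/
lemma outer_density (x : ℝ) (hx : x ≠ 0) :
    ENNReal.ofReal (1 / (π * |x|)) *
      ∫⁻ v in Set.Ioi (0:ℝ), {v : ℝ | 0 < x / Real.sinc v ∧ x / Real.sinc v ≤ 1}.indicator 1 v
      = ENNReal.ofReal (levyDensity x) := by
  have hm : MeasurableSet {v : ℝ | 0 < x / Real.sinc v ∧ x / Real.sinc v ≤ 1} :=
    (measurableSet_lt measurable_const (measurable_const.div measurable_sinc)).inter
      (measurableSet_le (measurable_const.div measurable_sinc) measurable_const)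
  rw [lintegral_indicator_one hm, Measure.restrict_apply hm]
  rcases lt_or_gt_of_ne hx with h | h
  · have e : {v : ℝ | 0 < x / Real.sinc v ∧ x / Real.sinc v ≤ 1} ∩ Set.Ioi 0
        = {v : ℝ | 0 < v ∧ Real.sin v / v ≤ - (-x)} := by
      ext v
      simp only [Set.mem_inter_iff, Set.mem_ofPred_eq, Set.mem_Ioi, neg_neg]
      rw [and_comm]
      refine and_congr_right fun hv => ?_
      rw [← Real.sinc_of_ne_zero hv.ne']
      constructor
      · rintro ⟨h1, h2⟩
        have : Real.sinc v < 0 := by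
          by_contra hc
          push Not at hc
          exact absurd h1 (not_lt.2 (div_nonpos_of_nonpos_of_nonneg h.le hc))
        rwa [div_le_one_of_neg this] at h2
      · intro h1
        have : Real.sinc v < 0 := lt_of_le_of_lt h1 h
        exact ⟨div_pos_of_neg_of_neg h this, (div_le_one_of_neg this).2 h1⟩
    rw [e, vol_G _ (by linarith), ← ENNReal.ofReal_mul (by positivity), abs_of_neg h, levyDensity]
    rw [if_neg (by intro hc; linarith [hc.1])]
    split_ifs with hc
    · congr 1; ring
    · have : x < -1 := by by_contra hh; exact hc ⟨not_lt.1 hh, h⟩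
      have e2 : {v : ℝ | 0 < v ∧ Real.sin v / v ≤ - (-x)} = ∅ := by
        ext v
        simp only [Set.mem_ofPred_eq, Set.mem_empty_iff_false, iff_false, not_and, not_le, neg_neg]
        intro hv
        rw [← Real.sinc_of_ne_zero hv.ne']
        linarith [Real.neg_one_le_sinc v]
      rw [G0fun, e2]; simp
  · have e : {v : ℝ | 0 < x / Real.sinc v ∧ x / Real.sinc v ≤ 1} ∩ Set.Ioi 0
        = {v : ℝ | 0 < v ∧ x ≤ Real.sin v / v} := by
      ext v
      simp only [Set.mem_inter_iff, Set.mem_ofPred_eq, Set.mem_Ioi]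
      rw [and_comm]
      refine and_congr_right fun hv => ?_
      rw [← Real.sinc_of_ne_zero hv.ne']
      constructor
      · rintro ⟨h1, h2⟩
        have : 0 < Real.sinc v := by
          by_contra hc
          push Not at hc
          exact absurd h1 (not_lt.2 (div_nonpos_of_nonneg_of_nonpos h.le hc))
        rwa [div_le_one this] at h2
      · intro h1
        have : 0 < Real.sinc v := lt_of_lt_of_le h h1
        exact ⟨div_pos h this, (div_le_one this).2 h1⟩
    rw [e, vol_F _ h, ← ENNReal.ofReal_mul (by positivity), abs_of_pos h, levyDensity]
    split_ifs with hc hc2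
    · congr 1; ring
    · linarith [hc2.2]
    · have : 1 < x := by by_contra hh; exact hc ⟨h, not_lt.1 hh⟩
      have e2 : {v : ℝ | 0 < v ∧ x ≤ Real.sin v / v} = ∅ := by
        ext v
        simp only [Set.mem_ofPred_eq, Set.mem_empty_iff_false, iff_false, not_and, not_le]
        intro hv
        rw [← Real.sinc_of_ne_zero hv.ne']
        linarith [Real.sinc_le_one v]
      rw [Ffun, e2]; simp

lemma measurable_prodmap : Measurable (fun p : ℝ × ℝ => p.1 * Real.sinc p.2) :=
  measurable_fst.mul (measurable_sinc.comp measurable_snd)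

/-- The Lévy measure is the image of `du / (π u) ⊗ dv` under `(u, v) ↦ u sinc v`. -/
theorem levyMeasure_eq_map :
    levyMeasure = srcMeasure.map (fun p : ℝ × ℝ => p.1 * Real.sinc p.2) := by
  ext S hS
  have h1 : srcMeasure.map (fun p : ℝ × ℝ => p.1 * Real.sinc p.2) S =
      ∫⁻ v in Set.Ioi (0:ℝ), ∫⁻ u in Set.Ioc (0:ℝ) 1,
        ENNReal.ofReal (1 / (π * u)) * S.indicator 1 (u * Real.sinc v) := by
    rw [← lintegral_indicator_one hS, lintegral_map (measurable_one.indicator hS)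
      measurable_prodmap, srcMeasure, lintegral_prod_symm]
    · congr 1; ext v
      rw [lintegral_withDensity_eq_lintegral_mul _ (by fun_prop)]
      · rfl
      · exact (measurable_one.indicator hS).comp (by fun_prop)
    · exact ((measurable_one.indicator hS).comp measurable_prodmap).aemeasurable
  have h2 : ∫⁻ v in Set.Ioi (0:ℝ), ∫⁻ u in Set.Ioc (0:ℝ) 1,
        ENNReal.ofReal (1 / (π * u)) * S.indicator 1 (u * Real.sinc v) =
      ∫⁻ v in Set.Ioi (0:ℝ), ∫⁻ x, S.indicator (fun x => ENNReal.ofReal (1 / (π * |x|))) x *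
        {p : ℝ × ℝ | 0 < p.1 / Real.sinc p.2 ∧ p.1 / Real.sinc p.2 ≤ 1}.indicator 1 (x, v) := by
    apply lintegral_congr_ae
    filter_upwards [ae_sinc_ne_zero] with v hv
    rw [inner_scaling S hS _ hv]
    rfl
  have hm2 : Measurable fun p : ℝ × ℝ => p.1 / Real.sinc p.2 :=
    measurable_fst.div (measurable_sinc.comp measurable_snd)
  have hm : MeasurableSet {p : ℝ × ℝ | 0 < p.1 / Real.sinc p.2 ∧ p.1 / Real.sinc p.2 ≤ 1} :=
    (measurableSet_lt measurable_const hm2).inter (measurableSet_le hm2 measurable_const)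
  have hi : Measurable (S.indicator (fun x : ℝ => ENNReal.ofReal (1 / (π * |x|)))) :=
    Measurable.indicator (by fun_prop) hS
  rw [h1, h2, lintegral_lintegral_swap, levyMeasure, withDensity_apply _ hS,
    ← lintegral_indicator hS]
  · apply lintegral_congr_ae
    have : ∀ᵐ x : ℝ, x ≠ 0 := by simp [ae_iff]
    filter_upwards [this] with x hx
    rw [lintegral_const_mul]
    · by_cases hxS : x ∈ S
      · rw [Set.indicator_of_mem hxS, Set.indicator_of_mem hxS, ← outer_density x hx]; rfl
      · rw [Set.indicator_of_notMem hxS, Set.indicator_of_notMem hxS, zero_mul]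
    · exact (measurable_one.indicator hm).comp (by fun_prop)
  · refine Measurable.aemeasurable ?_
    refine Measurable.mul (hi.comp measurable_snd) ?_
    exact (measurable_one.indicator hm).comp (measurable_snd.prodMk measurable_fst)

/-! ### The exponent of the limit law -/

/-- `ψ(y) = e^{iy} - 1 - iy`, the characteristic exponent of a compensated unit jump. -/
def psi (y : ℝ) : ℂ := Complex.exp (y * Complex.I) - 1 - y * Complex.I

lemma psi_continuous : Continuous psi := by unfold psi; fun_prop

lemma norm_exp_ofReal_sub_one_le (y : ℝ) : ‖Complex.exp (y * Complex.I) - 1‖ ≤ |y| := by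
  have := Real.norm_exp_I_mul_ofReal_sub_one_le (x := y)
  rwa [mul_comm, Real.norm_eq_abs] at this

lemma norm_psi_le (y : ℝ) : ‖psi y‖ ≤ 2 * y ^ 2 := by
  have hn : ‖(y : ℂ) * Complex.I‖ = |y| := by simp
  rcases le_or_gt |y| 1 with h | h
  · have := Complex.norm_exp_sub_one_sub_id_le (x := (y : ℂ) * Complex.I) (by rw [hn]; exact h)
    rw [hn, sq_abs] at this
    unfold psi
    nlinarith [sq_nonneg y]
  · unfold psi
    have h1 := norm_sub_le (Complex.exp (y * Complex.I) - 1) (y * Complex.I)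
    rw [hn] at h1
    have := norm_exp_ofReal_sub_one_le y
    nlinarith [sq_abs y]

lemma sinc_sq_le {v : ℝ} (hv : 0 < v) : Real.sinc v ^ 2 ≤ 2 * (1 + v ^ 2)⁻¹ := by
  rw [← div_eq_mul_inv, le_div_iff₀ (by positivity), ← sq_abs]
  have h1 := Real.abs_sinc_le_one v
  have h2 := sinc_le_inv hv
  rw [le_div_iff₀ hv] at h2
  have h3 : |Real.sinc v| ^ 2 ≤ 1 := pow_le_one₀ (abs_nonneg _) h1
  have h4 : (|Real.sinc v| * v) ^ 2 ≤ 1 := pow_le_one₀ (by positivity) h2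
  nlinarith

lemma integrable_sinc_sq : Integrable (fun v => Real.sinc v ^ 2)
    (volume.restrict (Set.Ioi (0:ℝ))) := by
  refine Integrable.mono' (g := fun v : ℝ => 2 * (1 + v ^ 2)⁻¹)
    (integrable_inv_one_add_sq.const_mul 2).integrableOn
    ((Real.continuous_sinc.pow 2).aestronglyMeasurable) ?_
  filter_upwards [ae_restrict_mem measurableSet_Ioi] with v hv
  rw [Real.norm_eq_abs, abs_of_nonneg (sq_nonneg _)]
  exact sinc_sq_le hv

lemma integrable_sq_levy : Integrable (fun x : ℝ => x ^ 2) levyMeasure := by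
  rw [levyMeasure_eq_map, integrable_map_measure (by fun_prop) measurable_prodmap.aemeasurable]
  have : ((fun x : ℝ => x ^ 2) ∘ fun p : ℝ × ℝ => p.1 * Real.sinc p.2) =
      fun p : ℝ × ℝ => p.1 ^ 2 * Real.sinc p.2 ^ 2 := by ext p; simp [mul_pow]
  rw [this, srcMeasure]
  refine Integrable.mul_prod (f := fun u : ℝ => u ^ 2) (g := fun v => Real.sinc v ^ 2) ?_
    integrable_sinc_sq
  rw [integrable_withDensity_iff_integrable_smul' (by fun_prop) (by simp)]
  have : IntegrableOn (fun u : ℝ => u / π) (Set.Ioc 0 1) :=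
    (Continuous.integrableOn_Icc (by fun_prop)).mono_set Set.Ioc_subset_Icc_self
  refine this.congr ?_
  filter_upwards [ae_restrict_mem measurableSet_Ioc] with u hu
  have := hu.1
  rw [ENNReal.toReal_ofReal (by positivity), smul_eq_mul]
  field_simp

lemma integrable_of_le_sq {f : ℝ → ℂ} (hf : Continuous f) (C : ℝ) (h : ∀ x, ‖f x‖ ≤ C * x ^ 2) :
    Integrable f levyMeasure :=
  (integrable_sq_levy.const_mul C).mono' hf.aestronglyMeasurable (Eventually.of_forall h)

/-- The exponent of the mean-zero law with Lévy measure `L`. -/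
def levyI (t : ℝ) : ℂ := ∫ x, psi (t * x) ∂levyMeasure

lemma norm_psi_mul_le (t x : ℝ) : ‖psi (t * x)‖ ≤ (2 * t ^ 2) * x ^ 2 := by
  have := norm_psi_le (t * x)
  nlinarith

lemma integrable_psi (t : ℝ) : Integrable (fun x => psi (t * x)) levyMeasure :=
  integrable_of_le_sq (psi_continuous.comp (by fun_prop)) (2 * t ^ 2) (norm_psi_mul_le t)

lemma norm_levyI_le (t : ℝ) : ‖levyI t‖ ≤ 2 * t ^ 2 * ∫ x, x ^ 2 ∂levyMeasure := by
  rw [← integral_const_mul]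
  exact norm_integral_le_of_norm_le (integrable_sq_levy.const_mul _)
    (Eventually.of_forall (norm_psi_mul_le t))

/-- The centering constant `∫ x³/(1+x²) dL`. -/
def levyC : ℝ := ∫ x, x ^ 3 / (1 + x ^ 2) ∂levyMeasure

lemma integrable_cube : Integrable (fun x : ℝ => x ^ 3 / (1 + x ^ 2)) levyMeasure := by
  refine integrable_sq_levy.mono' ?_ (Eventually.of_forall fun x => ?_)
  · refine Continuous.aestronglyMeasurable ?_
    refine Continuous.div (by fun_prop) (by fun_prop) fun x => by positivity
  · rw [Real.norm_eq_abs, abs_div, abs_of_pos (by positivity : 0 < 1 + x ^ 2),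
      div_le_iff₀ (by positivity), abs_pow, ← sq_abs x]
    nlinarith [abs_nonneg x, sq_nonneg (|x| * (|x| - 1)), sq_nonneg (|x|), sq_nonneg (|x|^2)]

/-- Passing from the compensator `itx` to `itx / (1 + x²)` adds the drift `levyC`. -/
lemma exponent_eq (t : ℝ) :
    (∫ x : ℝ, (Complex.exp (t * x * Complex.I) - 1 -
                (t * x * Complex.I) / (1 + (x : ℂ) ^ 2)) ∂levyMeasure)
      = levyI t + t * levyC * Complex.I := by
  have h2 : Integrable (fun x : ℝ => (t : ℂ) * Complex.I * ((x ^ 3 / (1 + x ^ 2) : ℝ) : ℂ))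
      levyMeasure := integrable_cube.ofReal.const_mul _
  have : (t : ℂ) * levyC * Complex.I =
      ∫ x : ℝ, (t : ℂ) * Complex.I * ((x ^ 3 / (1 + x ^ 2) : ℝ) : ℂ) ∂levyMeasure := by
    rw [integral_const_mul, integral_complex_ofReal, levyC]; ring
  rw [this, levyI, ← integral_add (integrable_psi t) h2]
  congr 1; ext x
  have hx : (1 + (x : ℂ) ^ 2) ≠ 0 := by
    have : (1 + x ^ 2 : ℝ) ≠ 0 := by positivity
    exact_mod_cast this
  simp only [psi]
  push_cast
  field_simp
  ring

lemma levyI_eq_iterated (t : ℝ) :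
    levyI t = ∫ u in (0:ℝ)..1, ((1 / (π * u) : ℝ) : ℂ) *
      ∫ v in Set.Ioi (0:ℝ), psi (t * (u * Real.sinc v)) := by
  have hc : Continuous fun x => psi (t * x) := psi_continuous.comp (by fun_prop)
  have hintg := integrable_psi t
  rw [levyMeasure_eq_map, integrable_map_measure hc.aestronglyMeasurable
    measurable_prodmap.aemeasurable] at hintg
  rw [levyI, levyMeasure_eq_map, integral_map measurable_prodmap.aemeasurable
    hc.aestronglyMeasurable]
  unfold srcMeasure at hintg ⊢
  change Integrable (fun p : ℝ × ℝ => psi (t * (p.1 * Real.sinc p.2))) _ at hintg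
  rw [integral_prod _ hintg, integral_withDensity_eq_integral_toReal_smul (by fun_prop) (by simp),
    intervalIntegral.integral_of_le zero_le_one]
  refine setIntegral_congr_fun measurableSet_Ioc fun u hu => ?_
  have := hu.1
  simp only
  rw [ENNReal.toReal_ofReal (by positivity), Complex.real_smul]

lemma levyMeasure_ne_zero : levyMeasure ≠ 0 := by
  intro h
  have h1 : srcMeasure Set.univ = 0 := by
    have := congrArg (fun μ : Measure ℝ => μ Set.univ) h
    rw [levyMeasure_eq_map] at this
    simpa [Measure.map_apply measurable_prodmap] using this
  rw [srcMeasure, ← Set.univ_prod_univ, Measure.prod_prod, mul_eq_zero] at h1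
  rcases h1 with h1 | h1
  · rw [withDensity_apply _ MeasurableSet.univ, Measure.restrict_univ] at h1
    have : ∫⁻ u in Set.Ioc (0:ℝ) 1, ENNReal.ofReal (1 / π) ≤
        ∫⁻ u in Set.Ioc (0:ℝ) 1, ENNReal.ofReal (1 / (π * u)) := by
      refine setLIntegral_mono (by fun_prop) fun u hu => ?_
      apply ENNReal.ofReal_le_ofReal
      have := hu.1
      have := pi_pos
      apply one_div_le_one_div_of_le (by positivity)
      nlinarith [hu.2]
    rw [h1] at this
    simp [pi_pos] at this
  · simp at h1

/-- A Gaussian `G` would give `∫ (1 - cos tx) dL = v t² / 2` for all `t`. Dividing by `t²` and letting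
`t → ∞` yields `v = 0`, so `cos x = 1` holds `L`-almost everywhere, which is impossible for a nonzero
measure that is absolutely continuous with respect to Lebesgue measure. -/
lemma not_gaussian (G : Measure ℝ)
    (hG : ∀ t : ℝ, charFun G t = Complex.exp (levyI t + t * levyC * Complex.I))
    (m : ℝ) (v : NNReal) : G ≠ ProbabilityTheory.gaussianReal m v := by
  rintro rfl
  have hre : ∀ t, (levyI t).re = - ∫ x, (1 - Real.cos (t * x)) ∂levyMeasure := by
    intro t
    have h := integral_re (integrable_psi t)
    rw [levyI, ← integral_neg]
    refine h.symm.trans ?_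
    congr 1; ext x
    simp [psi, Complex.exp_ofReal_mul_I_re, -Complex.ofReal_mul]
  have hq : ∀ t, ∫ x, (1 - Real.cos (t * x)) ∂levyMeasure = v * t ^ 2 / 2 := by
    intro t
    have h := congrArg norm (hG t)
    rw [ProbabilityTheory.charFun_gaussianReal, Complex.norm_exp, Complex.norm_exp,
      Real.exp_eq_exp] at h
    have e2 : (levyI t + t * levyC * Complex.I).re = (levyI t).re := by simp
    have e3 : ((t * m * Complex.I - v * t ^ 2 / 2 : ℂ)).re = - (v * t ^ 2 / 2) := by
      have : (v * (t:ℂ) ^ 2 / 2 : ℂ) = ((v * t ^ 2 / 2 : ℝ) : ℂ) := by push_cast; rfl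
      rw [this, Complex.sub_re, Complex.ofReal_re]; simp
    rw [e2, e3, hre] at h
    linarith
  have hcos : ∀ y : ℝ, 1 - Real.cos y ≤ y ^ 2 := fun y => by
    nlinarith [Real.one_sub_sq_div_two_le_cos (x := y), sq_nonneg y]
  have hlim : Tendsto (fun n : ℕ => ∫ x, (1 - Real.cos (((n:ℝ) + 1) * x)) / ((n:ℝ) + 1) ^ 2
      ∂levyMeasure) atTop (𝓝 (∫ _x : ℝ, (0:ℝ) ∂levyMeasure)) := by
    refine tendsto_integral_of_dominated_convergence (fun x => x ^ 2) (fun n => ?_)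
      integrable_sq_levy (fun n => Eventually.of_forall fun x => ?_)
      (Eventually.of_forall fun x => ?_)
    · exact Continuous.aestronglyMeasurable (by fun_prop)
    · have h1 := hcos (((n:ℝ) + 1) * x)
      have h2 := Real.cos_le_one (((n:ℝ) + 1) * x)
      rw [Real.norm_eq_abs, abs_of_nonneg (div_nonneg (by linarith) (by positivity)),
        div_le_iff₀ (by positivity)]
      nlinarith
    · have h1 : Tendsto (fun n : ℕ => 2 * (1 / ((n:ℝ) + 1))) atTop (𝓝 0) := by
        simpa using tendsto_one_div_add_atTop_nhds_zero_nat.const_mul (2:ℝ)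
      refine squeeze_zero (fun n => ?_) (fun n => ?_) h1
      · exact div_nonneg (by linarith [Real.cos_le_one (((n:ℝ) + 1) * x)]) (by positivity)
      · rw [mul_one_div, div_le_div_iff₀ (by positivity) (by positivity)]
        have := Real.neg_one_le_cos (((n:ℝ) + 1) * x)
        have hn : (0:ℝ) ≤ n := by positivity
        nlinarith [mul_nonneg hn (by linarith : 0 ≤ 1 + Real.cos (((n:ℝ) + 1) * x))]
  have hv : (v : ℝ) = 0 := by
    have : ∀ n : ℕ, ∫ x, (1 - Real.cos (((n:ℝ) + 1) * x)) / ((n:ℝ) + 1) ^ 2 ∂levyMeasure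
        = (v:ℝ) / 2 := by
      intro n
      rw [integral_div, hq]; field_simp
    simp_rw [this] at hlim
    have := tendsto_nhds_unique hlim tendsto_const_nhds
    simp only [integral_zero] at this
    linarith
  have h1 := hq 1
  simp only [hv, one_mul, zero_mul, zero_div] at h1
  rw [integral_eq_zero_iff_of_nonneg (fun x => by simp [Real.cos_le_one])] at h1
  · have hne : ∀ᵐ x ∂levyMeasure, Real.cos x ≠ 1 := by
      have : (Set.range fun n : ℤ => (n : ℝ) * (2 * π)).Countable := Set.countable_range _
      have hac : levyMeasure ≪ volume := withDensity_absolutelyContinuous _ _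
      refine hac.ae_le ?_
      filter_upwards [this.ae_notMem volume] with x hx h
      exact hx ((Real.cos_eq_one_iff x).1 h)
    apply levyMeasure_ne_zero
    rw [← Measure.measure_univ_eq_zero]
    have : ∀ᵐ x ∂levyMeasure, False := by
      filter_upwards [h1, hne] with x h2 h3
      simp only [Pi.zero_apply] at h2
      exact h3 (by linarith)
    simpa [ae_iff] using this
  · refine integrable_sq_levy.mono' (Continuous.aestronglyMeasurable (by fun_prop))
      (Eventually.of_forall fun x => ?_)
    rw [Real.norm_eq_abs, abs_of_nonneg (by simp [Real.cos_le_one])]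
    exact hcos x

/-! ### Sums of cosines over arithmetic progressions, and Riemann sums -/

/-- The sum `∑_{j=1}^l cos(2π j θ)`. -/
def dk (l : ℕ) (θ : ℝ) : ℝ := ∑ j ∈ Finset.range l, Real.cos (2 * π * (j + 1) * θ)

lemma dk_continuous (l : ℕ) : Continuous (dk l) := by unfold dk; fun_prop

lemma dk_abs_le (l : ℕ) (θ : ℝ) : |dk l θ| ≤ l := by
  unfold dk
  refine (Finset.abs_sum_le_sum_abs _ _).trans ?_
  refine (Finset.sum_le_sum fun j _ => Real.abs_cos_le_one _).trans ?_
  simp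

/-- The Dirichlet kernel identity. -/
lemma dk_mul_sin (l : ℕ) (θ : ℝ) :
    2 * Real.sin (π * θ) * dk l θ = Real.sin ((2 * l + 1) * (π * θ)) - Real.sin (π * θ) := by
  induction l with
  | zero => simp [dk]
  | succ n ih =>
    have : dk (n + 1) θ = dk n θ + Real.cos (2 * π * (n + 1) * θ) := by
      simp [dk, Finset.sum_range_succ]
    rw [this, mul_add, ih]
    have e1 : (2 * ((n + 1 : ℕ) : ℝ) + 1) * (π * θ) = 2 * π * (n + 1) * θ + π * θ := by
      push_cast; ring
    have e2 : (2 * (n : ℝ) + 1) * (π * θ) = 2 * π * (n + 1) * θ - π * θ := by ring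
    rw [e1, e2, Real.sin_add, Real.sin_sub]; ring

lemma dk_abs_le_inv (l : ℕ) {θ : ℝ} (h0 : 0 < θ) (h1 : θ ≤ 1 / 2) :
    |dk l θ| ≤ 1 / (2 * θ) := by
  have hs : 2 * θ ≤ Real.sin (π * θ) := by
    have := Real.mul_le_sin (x := π * θ) (by positivity) (by nlinarith [pi_pos])
    have e : 2 / π * (π * θ) = 2 * θ := by field_simp
    linarith
  rw [le_div_iff₀ (by positivity)]
  have h := congrArg abs (dk_mul_sin l θ)
  rw [abs_mul, abs_of_pos (by linarith : 0 < 2 * Real.sin (π * θ))] at h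
  have h2 : |Real.sin ((2 * l + 1) * (π * θ)) - Real.sin (π * θ)| ≤ 2 := by
    refine (abs_sub _ _).trans ?_
    linarith [Real.abs_sin_le_one ((2 * l + 1) * (π * θ)), Real.abs_sin_le_one (π * θ)]
  nlinarith [abs_nonneg (dk l θ)]

lemma dk_periodic (l : ℕ) : Function.Periodic (dk l) 1 := by
  intro θ
  unfold dk
  refine Finset.sum_congr rfl fun j _ => ?_
  have : 2 * π * (j + 1) * (θ + 1) = 2 * π * (j + 1) * θ + ((j + 1 : ℕ) : ℝ) * (2 * π) := by
    push_cast; ring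
  rw [this, Real.cos_add_nat_mul_two_pi]

lemma dk_one_sub (l : ℕ) (θ : ℝ) : dk l (1 - θ) = dk l θ := by
  have : 1 - θ = -θ + 1 := by ring
  rw [this, dk_periodic l]
  simp [dk]

lemma dk_lipschitz (l : ℕ) (x y : ℝ) : |dk l x - dk l y| ≤ 2 * π * l ^ 2 * |x - y| := by
  unfold dk
  rw [← Finset.sum_sub_distrib]
  refine (Finset.abs_sum_le_sum_abs _ _).trans ?_
  have : ∀ j ∈ Finset.range l, |Real.cos (2 * π * (j + 1) * x) - Real.cos (2 * π * (j + 1) * y)|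
      ≤ 2 * π * l * |x - y| := by
    intro j hj
    have h1 := Real.abs_cos_sub_cos_le (2 * π * (j + 1) * x) (2 * π * (j + 1) * y)
    refine h1.trans ?_
    rw [← mul_sub, abs_mul, abs_of_pos (by positivity)]
    have : (j : ℝ) + 1 ≤ l := by exact_mod_cast Finset.mem_range.1 hj
    gcongr
  refine (Finset.sum_le_sum this).trans ?_
  simp only [Finset.sum_const, Finset.card_range, nsmul_eq_mul]
  apply le_of_eq; ring

/-- The symmetry `θ ↦ 1 - θ` of `dk l`. -/
lemma integral_comp_dk {E : Type*} [NormedAddCommGroup E] [NormedSpace ℝ E] [CompleteSpace E]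
    (l : ℕ) (f : ℝ → E) (hf : Continuous f) :
    ∫ θ in (0:ℝ)..1, f (dk l θ) = (2:ℝ) • ∫ θ in (0:ℝ)..(1/2), f (dk l θ) := by
  have hc : Continuous fun θ => f (dk l θ) := hf.comp (dk_continuous l)
  rw [← intervalIntegral.integral_add_adjacent_intervals (b := 1/2)
    (hc.intervalIntegrable _ _) (hc.intervalIntegrable _ _), two_smul]
  congr 1
  have := intervalIntegral.integral_comp_sub_left (a := 0) (b := 1/2)
    (fun θ => f (dk l θ)) (1:ℝ)
  simp only [dk_one_sub] at this
  rw [this]; norm_num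

/-- Interpolates between `|dk l θ| ≤ l` and `|dk l θ| ≤ 1 / θ`. The true order is `log l`; any power
of `l` below `1/2` suffices here. -/
lemma integral_abs_dk_le (l : ℕ) : ∫ θ in (0:ℝ)..1, |dk l θ| ≤ 8 * (l:ℝ) ^ (1/4 : ℝ) := by
  rw [integral_comp_dk l _ continuous_abs, smul_eq_mul]
  have hb : ∫ θ in (0:ℝ)..(1/2), |dk l θ| ≤
      ∫ θ in (0:ℝ)..(1/2), (l:ℝ) ^ (1/4 : ℝ) * θ ^ (-(3/4) : ℝ) := by
    refine intervalIntegral.integral_mono_on_of_le_Ioo (by norm_num)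
      ((continuous_abs.comp (dk_continuous l)).intervalIntegrable _ _)
      ((intervalIntegral.intervalIntegrable_rpow' (by norm_num)).const_mul _) fun θ hθ => ?_
    have h0 := hθ.1
    have h1 := dk_abs_le l θ
    have h2 := dk_abs_le_inv l hθ.1 hθ.2.le
    have h3 : |dk l θ| ≤ θ⁻¹ := h2.trans (by rw [← one_div]; gcongr; linarith)
    calc |dk l θ| = |dk l θ| ^ (1/4 : ℝ) * |dk l θ| ^ (3/4 : ℝ) := by
          rw [← Real.rpow_add_of_nonneg (abs_nonneg _) (by norm_num) (by norm_num)]; norm_num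
      _ ≤ (l:ℝ) ^ (1/4 : ℝ) * (θ⁻¹) ^ (3/4 : ℝ) := by gcongr
      _ = _ := by rw [Real.inv_rpow h0.le, Real.rpow_neg h0.le]
  have hv : ∫ θ in (0:ℝ)..(1/2), θ ^ (-(3/4) : ℝ) ≤ 4 := by
    rw [integral_rpow (Or.inl (by norm_num)), Real.zero_rpow (by norm_num)]
    have : ((1:ℝ)/2) ^ (-(3/4) + 1 : ℝ) ≤ 1 :=
      Real.rpow_le_one (by norm_num) (by norm_num) (by norm_num)
    rw [div_le_iff₀ (by norm_num)]; linarith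
  rw [intervalIntegral.integral_const_mul] at hb
  have hl : 0 ≤ (l:ℝ) ^ (1/4 : ℝ) := by positivity
  nlinarith

lemma integral_dk (l : ℕ) : ∫ θ in (0:ℝ)..1, dk l θ = 0 := by
  unfold dk
  rw [intervalIntegral.integral_finsetSum fun j _ =>
    (Continuous.intervalIntegrable (by fun_prop) _ _)]
  refine Finset.sum_eq_zero fun j _ => ?_
  have hne : 2 * π * ((j:ℝ) + 1) ≠ 0 := by positivity
  rw [intervalIntegral.integral_comp_mul_left (fun x => Real.cos x) hne, integral_cos]
  have : 2 * π * ((j:ℝ) + 1) * 1 = ((j + 1 : ℕ) : ℝ) * (2 * π) := by push_cast; ring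
  have h2 := Real.sin_nat_mul_pi (2 * (j + 1))
  have e : 2 * π * ((j:ℝ) + 1) * 1 = ((2 * (j + 1) : ℕ) : ℝ) * π := by push_cast; ring
  rw [e, h2]; simp

/-- The block sum on the scale `v / (2π l)`, divided by its maximum `l`. -/
def dkn (l : ℕ) (v : ℝ) : ℝ := dk l (v / (2 * π * l)) / l

lemma dkn_continuous (l : ℕ) : Continuous (dkn l) := by
  unfold dkn
  exact ((dk_continuous l).comp (by fun_prop)).div_const _

/-- An integrable bound, uniform in `l`, on the range `v ≤ π l` corresponding to `θ ≤ 1/2`. -/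
lemma dkn_sq_le (l : ℕ) {v : ℝ} (hv : 0 < v) (hl : v ≤ π * l) :
    dkn l v ^ 2 ≤ (1 + π ^ 2) * (1 + v ^ 2)⁻¹ := by
  have hlpos : (0:ℝ) < l := by
    by_contra h
    push Not at h
    nlinarith [pi_pos]
  have h1 : |dkn l v| ≤ 1 := by
    rw [dkn, abs_div, Nat.abs_cast, div_le_one hlpos]; exact dk_abs_le _ _
  have h2 : |dkn l v| * v ≤ π := by
    have := dk_abs_le_inv l (θ := v / (2 * π * l)) (by positivity)
      (by rw [div_le_iff₀ (by positivity)]; linarith)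
    have e : 1 / (2 * (v / (2 * π * l))) = π * l / v := by field_simp
    rw [e, le_div_iff₀ hv] at this
    rw [dkn, abs_div, Nat.abs_cast, div_mul_eq_mul_div, div_le_iff₀ hlpos]
    exact this
  rw [← div_eq_mul_inv, le_div_iff₀ (by positivity), ← sq_abs]
  have h3 : |dkn l v| ^ 2 ≤ 1 := pow_le_one₀ (abs_nonneg _) h1
  have h4 : (|dkn l v| * v) ^ 2 ≤ π ^ 2 := by gcongr
  nlinarith

lemma sum_eq_integral_floor (K : ℕ) (a : ℕ → ℂ) :
    ∑ i ∈ Finset.range K, a i = ∫ u in (0:ℝ)..1, (K : ℂ) * a ⌊K * u⌋₊ := by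
  rcases Nat.eq_zero_or_pos K with rfl | hK
  · simp
  have hpiece : ∀ i : ℕ, IntervalIntegrable (fun x : ℝ => a ⌊x⌋₊) volume (i:ℝ) ((i + 1 : ℕ) : ℝ) ∧
      ∫ x in (i:ℝ)..((i + 1 : ℕ) : ℝ), a ⌊x⌋₊ = a i := by
    intro i
    have hle : (i:ℝ) ≤ ((i + 1 : ℕ) : ℝ) := by push_cast; linarith
    have hae : ∀ x ∈ Set.Ioo (i:ℝ) ((i + 1 : ℕ) : ℝ), a ⌊x⌋₊ = a i := by
      intro x hx
      congr 1
      rw [Nat.floor_eq_iff (le_trans (by positivity) hx.1.le)]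
      exact ⟨hx.1.le, by have := hx.2; push_cast at this; exact this⟩
    constructor
    · rw [intervalIntegrable_iff_integrableOn_Ioo_of_le hle]
      exact (integrableOn_const (by simp)).congr_fun (fun x hx => (hae x hx).symm)
        measurableSet_Ioo
    · rw [intervalIntegral.integral_of_le hle, integral_Ioc_eq_integral_Ioo,
        setIntegral_congr_fun measurableSet_Ioo hae]
      simp
  have h := intervalIntegral.sum_integral_adjacent_intervals (μ := volume)
    (f := fun x : ℝ => a ⌊x⌋₊) (a := fun i : ℕ => (i:ℝ)) (n := K) (fun i _ => (hpiece i).1)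
  simp only [fun i => (hpiece i).2] at h
  rw [h]
  have h2 := intervalIntegral.integral_comp_mul_left (a := 0) (b := 1)
    (fun x : ℝ => a ⌊x⌋₊) (c := (K:ℝ)) (by positivity)
  rw [intervalIntegral.integral_const_mul, h2]
  simp only [mul_zero, mul_one, Complex.real_smul, Nat.cast_zero]
  push_cast
  have hK' : (K:ℂ) ≠ 0 := by exact_mod_cast hK.ne'
  field_simp

/-- Convergence of Riemann-type sums by dominated convergence: the sum is the integral over `[0, 1]` of
a step function. -/
lemma riemann_tendsto (K : ℕ → ℕ) (c : ℕ → ℕ → ℂ) (h : ℝ → ℂ) (B : ℝ) (hB0 : 0 ≤ B)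
    (hlim : ∀ u ∈ Set.Ioo (0:ℝ) 1, Tendsto (fun N => (K N : ℂ) * c N ⌊K N * u⌋₊) atTop (𝓝 (h u)))
    (hB : ∀ᶠ N in atTop, ∀ i < K N, ‖(K N : ℂ) * c N i‖ ≤ B) :
    Tendsto (fun N => ∑ i ∈ Finset.range (K N), c N i) atTop (𝓝 (∫ u in (0:ℝ)..1, h u)) := by
  simp_rw [sum_eq_integral_floor, intervalIntegral.integral_of_le zero_le_one,
    integral_Ioc_eq_integral_Ioo]
  refine tendsto_integral_filter_of_dominated_convergence (fun _ => B) ?_ ?_ ?_ ?_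
  · refine Eventually.of_forall fun N => Measurable.aestronglyMeasurable ?_
    have : Measurable fun u : ℝ => ⌊(K N : ℝ) * u⌋₊ := Nat.measurable_floor.comp (by fun_prop)
    exact measurable_const.mul ((measurable_of_countable (c N)).comp this)
  · filter_upwards [hB] with N hN
    filter_upwards [ae_restrict_mem measurableSet_Ioo] with u hu
    rcases Nat.eq_zero_or_pos (K N) with h0 | hK
    · simpa [h0] using hB0
    apply hN
    rw [Nat.floor_lt (by have := hu.1; positivity)]
    have : (0:ℝ) < K N := by exact_mod_cast hK
    nlinarith [hu.2]
  · exact integrable_const _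
  · filter_upwards [ae_restrict_mem measurableSet_Ioo] with u hu
    exact hlim u hu

/-! ### Characteristic functions of blocks and their product -/

lemma floor_ratio_tendsto {K : ℕ → ℕ} (hK : Tendsto K atTop atTop) {u : ℝ} (hu : 0 < u) :
    Tendsto (fun N => ((⌊K N * u⌋₊ + 1 : ℕ) : ℝ) / K N) atTop (𝓝 u) := by
  have hKr : Tendsto (fun N => (K N : ℝ)) atTop atTop := tendsto_natCast_atTop_atTop.comp hK
  have h1 : Tendsto (fun N => u + (K N : ℝ)⁻¹) atTop (𝓝 u) := by
    simpa using (tendsto_inv_atTop_zero.comp hKr).const_add u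
  refine tendsto_of_tendsto_of_tendsto_of_le_of_le' tendsto_const_nhds h1 ?_ ?_
  · filter_upwards [hK.eventually_gt_atTop 0] with N hN
    have : (0:ℝ) < K N := by exact_mod_cast hN
    rw [le_div_iff₀ this]
    push_cast
    have := Nat.lt_floor_add_one ((K N : ℝ) * u)
    linarith
  · filter_upwards [hK.eventually_gt_atTop 0] with N hN
    have : (0:ℝ) < K N := by exact_mod_cast hN
    rw [div_le_iff₀ this]
    push_cast
    have := Nat.floor_le (a := (K N : ℝ) * u) (by positivity)
    field_simp
    linarith

lemma floor_tendsto {K : ℕ → ℕ} (hK : Tendsto K atTop atTop) {u : ℝ} (hu : 0 < u) :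
    Tendsto (fun N => ⌊K N * u⌋₊ + 1) atTop atTop := by
  have hKr : Tendsto (fun N => (K N : ℝ)) atTop atTop := tendsto_natCast_atTop_atTop.comp hK
  exact tendsto_atTop_mono (fun N => Nat.le_succ _)
    (tendsto_nat_floor_atTop.comp (hKr.atTop_mul_const hu))

/-- `dkn l v` is a Riemann sum of `∫_0^1 cos (u v) du = sinc v`. -/
lemma dkn_tendsto (v : ℝ) : Tendsto (fun l => dkn l v) atTop (𝓝 (Real.sinc v)) := by
  have h := riemann_tendsto (fun N => N)
    (fun N i => ((Real.cos ((i + 1 : ℕ) / (N:ℝ) * v) / N : ℝ) : ℂ))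
    (fun u => ((Real.cos (u * v) : ℝ) : ℂ)) 1 zero_le_one ?_ ?_
  · have e1 : ∀ N : ℕ, ∑ i ∈ Finset.range N,
        ((Real.cos ((i + 1 : ℕ) / (N:ℝ) * v) / N : ℝ) : ℂ) = ((dkn N v : ℝ) : ℂ) := by
      intro N
      rw [← Complex.ofReal_sum]
      congr 1
      rw [dkn, dk, Finset.sum_div]
      refine Finset.sum_congr rfl fun i _ => ?_
      congr 2
      push_cast
      field_simp
    have e2 : ∫ u in (0:ℝ)..1, ((Real.cos (u * v) : ℝ) : ℂ) = ((Real.sinc v : ℝ) : ℂ) := by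
      rw [intervalIntegral.integral_ofReal]
      congr 1
      rcases eq_or_ne v 0 with rfl | hv
      · simp
      · rw [intervalIntegral.integral_comp_mul_right (fun x => Real.cos x) hv, integral_cos,
          Real.sinc_of_ne_zero hv]
        simp; ring
    simp only [e1, e2] at h
    exact (Complex.continuous_re.tendsto _).comp h
  · intro u hu
    have h1 := floor_ratio_tendsto (K := fun N => N) tendsto_id hu.1
    have h2 : Tendsto (fun N : ℕ => ((Real.cos (((⌊(N:ℝ) * u⌋₊ + 1 : ℕ) : ℝ) / N * v) : ℝ) : ℂ))
        atTop (𝓝 ((Real.cos (u * v) : ℝ) : ℂ)) :=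
      ((Complex.continuous_ofReal.comp Real.continuous_cos).tendsto _).comp (h1.mul_const v)
    refine h2.congr' ?_
    filter_upwards [eventually_gt_atTop 0] with N hN
    have : (N:ℂ) ≠ 0 := by exact_mod_cast hN.ne'
    push_cast
    field_simp
  · refine Eventually.of_forall fun N i hi => ?_
    have hN : (0:ℝ) < N := by exact_mod_cast (Nat.zero_lt_of_lt hi)
    rw [norm_mul, Complex.norm_real, Complex.norm_natCast, Real.norm_eq_abs, abs_div,
      Nat.abs_cast, mul_div_cancel₀ _ hN.ne']
    exact Real.abs_cos_le_one _

/-- The rescaled centered exponent of one block of length `l`. -/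
def Mfun (l : ℕ) (y : ℝ) : ℂ :=
  ∫ v in Set.Ioi (0:ℝ), (Set.Ioc (0:ℝ) (π * l)).indicator (fun v => psi (y * dkn l v)) v

/-- A constant dominating `Mfun l y / y²`. -/
def Mconst : ℝ := ∫ v in Set.Ioi (0:ℝ), 2 * ((1 + π ^ 2) * (1 + v ^ 2)⁻¹)

lemma Mconst_nonneg : 0 ≤ Mconst := by
  unfold Mconst
  exact integral_nonneg fun v => by positivity

lemma Mdom_integrable : IntegrableOn (fun v : ℝ => 2 * ((1 + π ^ 2) * (1 + v ^ 2)⁻¹)) (Set.Ioi 0) :=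
  ((integrable_inv_one_add_sq.const_mul _).const_mul _).integrableOn

lemma Mfun_integrand_le (l : ℕ) (y v : ℝ) :
    ‖(Set.Ioc (0:ℝ) (π * l)).indicator (fun v => psi (y * dkn l v)) v‖ ≤
      y ^ 2 * (2 * ((1 + π ^ 2) * (1 + v ^ 2)⁻¹)) := by
  by_cases hv : v ∈ Set.Ioc (0:ℝ) (π * l)
  · rw [Set.indicator_of_mem hv]
    refine (norm_psi_mul_le _ _).trans ?_
    have := dkn_sq_le l hv.1 hv.2
    nlinarith [mul_le_mul_of_nonneg_left this (sq_nonneg y)]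
  · rw [Set.indicator_of_notMem hv, norm_zero]; positivity

lemma norm_Mfun_le (l : ℕ) (y : ℝ) : ‖Mfun l y‖ ≤ y ^ 2 * Mconst := by
  rw [Mconst, ← integral_const_mul]
  exact norm_integral_le_of_norm_le (Mdom_integrable.const_mul _)
    (Eventually.of_forall (Mfun_integrand_le l y))

lemma Mfun_tendsto {l : ℕ → ℕ} (hl : Tendsto l atTop atTop) {y : ℕ → ℝ} {y₀ : ℝ}
    (hy : Tendsto y atTop (𝓝 y₀)) :
    Tendsto (fun N => Mfun (l N) (y N)) atTop
      (𝓝 (∫ v in Set.Ioi (0:ℝ), psi (y₀ * Real.sinc v))) := by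
  unfold Mfun
  have hbd : ∀ᶠ N in atTop, y N ^ 2 ≤ y₀ ^ 2 + 1 :=
    (hy.pow 2).eventually_le_const (by linarith)
  refine tendsto_integral_filter_of_dominated_convergence
    (fun v => (y₀ ^ 2 + 1) * (2 * ((1 + π ^ 2) * (1 + v ^ 2)⁻¹))) ?_ ?_ ?_ ?_
  · refine Eventually.of_forall fun N => ?_
    refine AEStronglyMeasurable.indicator ?_ measurableSet_Ioc
    exact (psi_continuous.comp (continuous_const.mul (dkn_continuous _))).aestronglyMeasurable
  · filter_upwards [hbd] with N hN
    refine Eventually.of_forall fun v => (Mfun_integrand_le _ _ _).trans ?_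
    gcongr
  · exact Mdom_integrable.const_mul _
  · filter_upwards [ae_restrict_mem measurableSet_Ioi] with v hv
    have h1 : Tendsto (fun N => psi (y N * dkn (l N) v)) atTop (𝓝 (psi (y₀ * Real.sinc v))) :=
      (psi_continuous.tendsto _).comp (hy.mul ((dkn_tendsto v).comp hl))
    refine h1.congr' ?_
    have h2 : Tendsto (fun N => π * (l N : ℝ)) atTop atTop :=
      (tendsto_natCast_atTop_atTop.comp hl).const_mul_atTop pi_pos
    filter_upwards [h2.eventually_ge_atTop v] with N hN
    have hmem : v ∈ Set.Ioc (0:ℝ) (π * (l N : ℝ)) := ⟨hv, hN⟩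
    rw [Set.indicator_of_mem hmem]

/-- The characteristic function of one block of length `l`. -/
def blockChar (l : ℕ) (s : ℝ) : ℂ := ∫ θ in (0:ℝ)..1, Complex.exp ((s * dk l θ : ℝ) * Complex.I)

/-- As `dk l` has mean zero, `e^{iy} - 1` may be replaced by `ψ(y)`; then symmetry and the substitution
`θ = v / (2π l)` apply. -/
lemma blockChar_sub_one (l : ℕ) (hl : 0 < l) (s : ℝ) :
    blockChar l s - 1 = ((1 / (π * l) : ℝ) : ℂ) * Mfun l (s * l) := by
  have hc1 : Continuous fun θ => Complex.exp ((s * dk l θ : ℝ) * Complex.I) := by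
    have := dk_continuous l
    fun_prop
  have h1 : blockChar l s - 1 = ∫ θ in (0:ℝ)..1, psi (s * dk l θ) := by
    have hc2 : Continuous fun θ => ((s * dk l θ : ℝ) : ℂ) * Complex.I := by
      have := dk_continuous l
      fun_prop
    have h0 : ∫ θ in (0:ℝ)..1, ((s * dk l θ : ℝ) : ℂ) * Complex.I = 0 := by
      rw [intervalIntegral.integral_mul_const, intervalIntegral.integral_ofReal,
        intervalIntegral.integral_const_mul, integral_dk]
      simp
    simp only [psi]
    have hc3 : Continuous fun θ => Complex.exp ((s * dk l θ : ℝ) * Complex.I) - 1 :=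
      hc1.sub continuous_const
    rw [intervalIntegral.integral_sub (hc3.intervalIntegrable _ _)
      (hc2.intervalIntegrable _ _), intervalIntegral.integral_sub (hc1.intervalIntegrable _ _)
      (continuous_const.intervalIntegrable _ _), h0]
    simp [blockChar]
  have hl' : (0:ℝ) < l := by exact_mod_cast hl
  rw [h1, integral_comp_dk l (fun x => psi (s * x)) (psi_continuous.comp (by fun_prop))]
  have h2 := intervalIntegral.integral_comp_div (a := 0) (b := π * l)
    (fun θ => psi (s * dk l θ)) (c := 2 * π * l) (by positivity)
  have e : π * l / (2 * π * l) = 1 / 2 := by field_simp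
  rw [zero_div, e] at h2
  have h3 : Mfun l (s * l) = ∫ v in (0:ℝ)..(π * l), psi (s * dk l (v / (2 * π * l))) := by
    rw [Mfun, integral_indicator measurableSet_Ioc, Measure.restrict_restrict measurableSet_Ioc,
      Set.inter_eq_left.2 (fun x hx => hx.1), intervalIntegral.integral_of_le (by positivity)]
    congr 1; ext v
    rw [dkn]; congr 1; field_simp
  rw [h3, h2, Complex.real_smul, Complex.real_smul]
  push_cast
  have : (π:ℂ) ≠ 0 := by exact_mod_cast pi_ne_zero
  have : (l:ℂ) ≠ 0 := by exact_mod_cast hl.ne'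
  field_simp

lemma norm_blockChar_sub_one_le (l : ℕ) (hl : 0 < l) (s : ℝ) :
    ‖blockChar l s - 1‖ ≤ Mconst * s ^ 2 * l := by
  have hl' : (0:ℝ) < l := by exact_mod_cast hl
  rw [blockChar_sub_one l hl, norm_mul, Complex.norm_real, Real.norm_eq_abs,
    abs_of_pos (by positivity)]
  calc 1 / (π * l) * ‖Mfun l (s * l)‖ ≤ 1 / (1 * l) * ((s * l) ^ 2 * Mconst) := by
        gcongr
        · linarith [pi_gt_three]
        · exact norm_Mfun_le _ _
    _ = _ := by field_simp

lemma norm_blockChar_le (l : ℕ) (s : ℝ) : ‖blockChar l s‖ ≤ 1 := by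
  unfold blockChar
  have := intervalIntegral.norm_integral_le_of_norm_le_const (a := (0:ℝ)) (b := 1) (C := 1)
    (f := fun θ => Complex.exp ((s * dk l θ : ℝ) * Complex.I))
    (fun θ _ => by rw [Complex.norm_exp_ofReal_mul_I])
  simpa using this

/-- Along `i + 1 ≈ u K`, the terms multiplied by `K` converge to the integrand of `levyI_eq_iterated`. -/
lemma sum_blockChar_tendsto (t : ℝ) (K : ℕ → ℕ) (s : ℕ → ℝ) (hK : Tendsto K atTop atTop)
    (hs : Tendsto (fun N => s N * K N) atTop (𝓝 1)) :
    Tendsto (fun N => ∑ i ∈ Finset.range (K N), (blockChar (i + 1) (t * s N) - 1)) atTop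
      (𝓝 (levyI t)) := by
  rw [levyI_eq_iterated]
  refine riemann_tendsto K _ _ (Mconst * t ^ 2 * 4)
    (by have := Mconst_nonneg; positivity) ?_ ?_
  · intro u hu
    have hr := floor_ratio_tendsto hK hu.1
    have hl := floor_tendsto hK hu.1
    have hy : Tendsto (fun N => t * s N * ((⌊K N * u⌋₊ + 1 : ℕ) : ℝ)) atTop (𝓝 (t * u)) := by
      have h := (hs.mul hr).const_mul t
      rw [one_mul] at h
      refine h.congr' ?_
      filter_upwards [hK.eventually_gt_atTop 0] with N hN
      have : (K N : ℝ) ≠ 0 := by exact_mod_cast hN.ne'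
      field_simp
    have hM := Mfun_tendsto hl hy
    have hcoef : Tendsto (fun N => ((1 / (π * (((⌊K N * u⌋₊ + 1 : ℕ) : ℝ) / K N)) : ℝ) : ℂ)) atTop
        (𝓝 ((1 / (π * u) : ℝ) : ℂ)) := by
      refine (Complex.continuous_ofReal.tendsto _).comp ?_
      exact tendsto_const_nhds.div (hr.const_mul π) (by have := hu.1; positivity)
    have h := hcoef.mul hM
    simp only [mul_assoc t u] at h
    refine h.congr' ?_
    filter_upwards [hK.eventually_gt_atTop 0] with N hN
    rw [blockChar_sub_one _ (Nat.succ_pos _)]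
    have : (K N : ℂ) ≠ 0 := by exact_mod_cast hN.ne'
    push_cast
    field_simp
  · have hb : ∀ᶠ N in atTop, |s N * K N| ≤ 2 := by
      have := hs.abs
      rw [abs_one] at this
      exact this.eventually_le_const (by norm_num)
    filter_upwards [hb] with N hN i hi
    rw [norm_mul, Complex.norm_natCast]
    have h1 := norm_blockChar_sub_one_le (i + 1) (Nat.succ_pos _) (t * s N)
    have h2 : ((i + 1 : ℕ) : ℝ) ≤ K N := by exact_mod_cast hi
    have hM := Mconst_nonneg
    calc (K N : ℝ) * ‖blockChar (i + 1) (t * s N) - 1‖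
        ≤ K N * (Mconst * (t * s N) ^ 2 * K N) := by
          gcongr
          exact h1.trans (by gcongr)
      _ = Mconst * t ^ 2 * |s N * K N| ^ 2 := by rw [sq_abs]; ring
      _ ≤ Mconst * t ^ 2 * 2 ^ 2 := by gcongr
      _ = _ := by norm_num

lemma norm_prod_sub_prod_le {ι : Type*} (S : Finset ι) (z w : ι → ℂ) (hz : ∀ i ∈ S, ‖z i‖ ≤ 1)
    (hw : ∀ i ∈ S, ‖w i‖ ≤ 1) : ‖∏ i ∈ S, z i - ∏ i ∈ S, w i‖ ≤ ∑ i ∈ S, ‖z i - w i‖ := by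
  classical
  induction S using Finset.induction_on with
  | empty => simp
  | insert a S ha ih =>
    rw [Finset.prod_insert ha, Finset.prod_insert ha, Finset.sum_insert ha]
    have e : z a * ∏ i ∈ S, z i - w a * ∏ i ∈ S, w i =
        (z a - w a) * ∏ i ∈ S, z i + w a * (∏ i ∈ S, z i - ∏ i ∈ S, w i) := by ring
    rw [e]
    refine (norm_add_le _ _).trans ?_
    rw [norm_mul, norm_mul]
    have h1 : ‖∏ i ∈ S, z i‖ ≤ 1 := by
      rw [norm_prod]
      exact Finset.prod_le_one (fun _ _ => norm_nonneg _)
        fun i hi => hz i (Finset.mem_insert_of_mem hi)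
    have h2 := hw a (Finset.mem_insert_self _ _)
    have h3 := ih (fun i hi => hz i (Finset.mem_insert_of_mem hi))
      (fun i hi => hw i (Finset.mem_insert_of_mem hi))
    gcongr
    · exact mul_le_of_le_one_right (norm_nonneg _) h1
    · exact (mul_le_of_le_one_left (norm_nonneg _) h2).trans h3

/-- Each factor is `1 + O(1/K)`, so replacing it by the exponential of its difference with `1` costs
`O(1/K)` in total. -/
lemma prod_blockChar_tendsto (t : ℝ) (K : ℕ → ℕ) (s : ℕ → ℝ) (hK : Tendsto K atTop atTop)
    (hs : Tendsto (fun N => s N * K N) atTop (𝓝 1)) :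
    Tendsto (fun N => ∏ i ∈ Finset.range (K N), blockChar (i + 1) (t * s N)) atTop
      (𝓝 (Complex.exp (levyI t))) := by
  have hexp := (Complex.continuous_exp.tendsto _).comp (sum_blockChar_tendsto t K s hK hs)
  have hM := Mconst_nonneg
  have hKr : Tendsto (fun N => (K N : ℝ)) atTop atTop := tendsto_natCast_atTop_atTop.comp hK
  have hinv : Tendsto (fun N => (K N : ℝ)⁻¹) atTop (𝓝 0) := tendsto_inv_atTop_zero.comp hKr
  -- `A N` bounds `‖blockChar (i+1) (t s) - 1‖` for all `i < K N`.
  set A : ℕ → ℝ := fun N => Mconst * t ^ 2 * (s N * K N) ^ 2 * (K N : ℝ)⁻¹ with hA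
  have hA0 : Tendsto A atTop (𝓝 0) := by
    simpa using ((hs.pow 2).const_mul (Mconst * t ^ 2)).mul hinv
  have hAK : Tendsto (fun N => K N * A N ^ 2) atTop (𝓝 0) := by
    have h : Tendsto (fun N => (Mconst * t ^ 2 * (s N * K N) ^ 2) ^ 2 * (K N : ℝ)⁻¹) atTop
        (𝓝 0) := by
      simpa using (((hs.pow 2).const_mul (Mconst * t ^ 2)).pow 2).mul hinv
    refine h.congr' ?_
    filter_upwards [hK.eventually_gt_atTop 0] with N hN
    have : (K N : ℝ) ≠ 0 := by exact_mod_cast hN.ne'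
    rw [hA]; field_simp
  have hdiff : Tendsto (fun N => ∏ i ∈ Finset.range (K N), blockChar (i + 1) (t * s N) -
      Complex.exp (∑ i ∈ Finset.range (K N), (blockChar (i + 1) (t * s N) - 1))) atTop (𝓝 0) := by
    refine squeeze_zero_norm' ?_ hAK
    filter_upwards [hA0.eventually_le_const zero_lt_one, hK.eventually_gt_atTop 0] with N hN hKN
    rw [Complex.exp_sum]
    have hb : ∀ i ∈ Finset.range (K N), ‖blockChar (i + 1) (t * s N) - 1‖ ≤ A N := by
      intro i hi
      refine (norm_blockChar_sub_one_le (i + 1) (Nat.succ_pos _) (t * s N)).trans ?_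
      have h2 : ((i + 1 : ℕ) : ℝ) ≤ K N := by exact_mod_cast Finset.mem_range.1 hi
      have : (K N : ℝ) ≠ 0 := by exact_mod_cast hKN.ne'
      calc Mconst * (t * s N) ^ 2 * ((i + 1 : ℕ) : ℝ) ≤ Mconst * (t * s N) ^ 2 * K N := by gcongr
        _ = A N := by rw [hA]; field_simp
    refine (norm_prod_sub_prod_le _ _ _ (fun i _ => norm_blockChar_le _ _) ?_).trans ?_
    · intro i _
      rw [Complex.norm_exp, Real.exp_le_one_iff, Complex.sub_re, Complex.one_re]
      linarith [(Complex.re_le_norm _).trans (norm_blockChar_le (i + 1) (t * s N))]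
    · calc _ ≤ ∑ i ∈ Finset.range (K N), A N ^ 2 := by
            refine Finset.sum_le_sum fun i hi => ?_
            have h1 := Complex.norm_exp_sub_one_sub_id_le
              (x := blockChar (i + 1) (t * s N) - 1) ((hb i hi).trans hN)
            rw [norm_sub_rev]
            have e : Complex.exp (blockChar (i + 1) (t * s N) - 1) - blockChar (i + 1) (t * s N)
              = Complex.exp (blockChar (i + 1) (t * s N) - 1) - 1 -
                (blockChar (i + 1) (t * s N) - 1) := by ring
            rw [e]
            refine h1.trans ?_
            have := hb i hi
            gcongr
        _ = K N * A N ^ 2 := by simp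
  have := hdiff.add hexp
  simpa using this

/-! ### Asymptotic independence of dilated blocks -/

/-- Quantitative asymptotic independence: a rapidly oscillating periodic function `g (m x)` is
nearly uncorrelated with a Lipschitz periodic function `h`. The integral is unchanged by the shift
`x ↦ x + y / m`; averaging over `y ∈ [0, 1]` gives the product of the means up to `A / m`. -/
lemma indep_step (h g : ℝ → ℂ) (hp : Function.Periodic h 1) (hg : Function.Periodic g 1)
    (hhc : Continuous h) (hgc : Continuous g) (A : ℝ)
    (hL : ∀ x y, ‖h x - h y‖ ≤ A * |x - y|) (hb : ∀ x, ‖g x‖ ≤ 1) (m : ℕ) (hm : 1 ≤ m) :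
    ‖(∫ x in (0:ℝ)..1, h x * g (m * x)) - (∫ x in (0:ℝ)..1, h x) * (∫ x in (0:ℝ)..1, g x)‖
      ≤ A / m := by
  have hm0 : (0:ℝ) < m := by exact_mod_cast hm
  have hA : 0 ≤ A := by
    have := hL 1 0
    simp at this
    exact (norm_nonneg _).trans this
  have hgm : Function.Periodic (fun x : ℝ => g (m * x)) 1 := by
    intro x
    have := hg.nat_mul m (m * x)
    simp only [mul_add, mul_one] at this ⊢
    exact this
  have hgs : ∀ c : ℝ, (∫ y in (0:ℝ)..1, g (c + y)) = ∫ y in (0:ℝ)..1, g y := by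
    intro c
    rw [intervalIntegral.integral_comp_add_left]
    have := hg.intervalIntegral_add_eq c 0
    simpa using this
  have h1 : ∀ y : ℝ, (∫ x in (0:ℝ)..1, h (x + y / m) * g (m * x + y))
      = ∫ x in (0:ℝ)..1, h x * g (m * x) := by
    intro y
    have hφ : Function.Periodic (fun x : ℝ => h x * g (m * x)) 1 := hp.mul hgm
    have e1 : ∀ x : ℝ, h (x + y / m) * g (m * x + y)
        = (fun x : ℝ => h x * g (m * x)) (x + y / m) := by
      intro x
      have : (m:ℝ) * (x + y / m) = m * x + y := by field_simp
      simp only [this]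
    simp_rw [e1]
    rw [intervalIntegral.integral_comp_add_right (fun x : ℝ => h x * g (m * x))]
    have := hφ.intervalIntegral_add_eq (y / m) 0
    rw [zero_add, add_comm 1 (y / (m:ℝ)), this]
    simp
  have h2 : (∫ x in (0:ℝ)..1, h x * g (m * x))
      = ∫ y in (0:ℝ)..1, ∫ x in (0:ℝ)..1, h (x + y / m) * g (m * x + y) := by
    simp_rw [h1]
    simp
  have h3 : (∫ x in (0:ℝ)..1, h x) * (∫ x in (0:ℝ)..1, g x)
      = ∫ y in (0:ℝ)..1, ∫ x in (0:ℝ)..1, h x * g (m * x + y) := by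
    have hsw : (∫ y in (0:ℝ)..1, ∫ x in (0:ℝ)..1, h x * g (m * x + y))
        = ∫ x in (0:ℝ)..1, ∫ y in (0:ℝ)..1, h x * g (m * x + y) := by
      simp only [intervalIntegral.integral_of_le zero_le_one]
      refine integral_integral_swap ?_
      have hc : Continuous (Function.uncurry (fun y x : ℝ => h x * g (m * x + y))) := by
        simp only [Function.uncurry_def]; fun_prop
      rw [Measure.prod_restrict]
      refine IntegrableOn.mono_set ?_ (Set.prod_mono Set.Ioc_subset_Icc_self Set.Ioc_subset_Icc_self)
      exact hc.continuousOn.integrableOn_compact (isCompact_Icc.prod isCompact_Icc)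
    rw [hsw]
    simp_rw [intervalIntegral.integral_const_mul, hgs]
    rw [intervalIntegral.integral_mul_const]
  have hcx : ∀ y, Continuous (fun x : ℝ => h (x + y / m) * g (m * x + y)) := by intro y; fun_prop
  have hcx' : ∀ y, Continuous (fun x : ℝ => h x * g (m * x + y)) := by intro y; fun_prop
  rw [h2, h3, ← intervalIntegral.integral_sub]
  · have : ∀ y ∈ Set.uIoc (0:ℝ) 1, ‖(∫ x in (0:ℝ)..1, h (x + y / m) * g (m * x + y)) -
        ∫ x in (0:ℝ)..1, h x * g (m * x + y)‖ ≤ A / m := by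
      intro y hy
      rw [Set.uIoc_of_le zero_le_one] at hy
      rw [← intervalIntegral.integral_sub ((hcx y).intervalIntegrable _ _)
        ((hcx' y).intervalIntegrable _ _)]
      have : ∀ x ∈ Set.uIoc (0:ℝ) 1,
          ‖h (x + y / m) * g (m * x + y) - h x * g (m * x + y)‖ ≤ A / m := by
        intro x _
        rw [← sub_mul, norm_mul]
        have h5 := hL (x + y / m) x
        have h6 : |x + y / m - x| = y / m := by
          rw [add_sub_cancel_left, abs_of_nonneg (div_nonneg hy.1.le hm0.le)]
        rw [h6] at h5
        have h7 : A * (y / m) ≤ A / m := by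
          rw [← mul_div_assoc]
          gcongr
          nlinarith [hy.2]
        calc _ ≤ (A / m) * 1 := mul_le_mul (h5.trans h7) (hb _) (norm_nonneg _) (by positivity)
          _ = _ := mul_one _
      simpa using intervalIntegral.norm_integral_le_of_norm_le_const this
    simpa using intervalIntegral.norm_integral_le_of_norm_le_const this
  · simp_rw [h1]; simp
  · refine Continuous.intervalIntegrable ?_ _ _
    refine intervalIntegral.continuous_parametric_intervalIntegral_of_continuous' ?_ _ _
    simp only [Function.uncurry_def]; fun_prop

/-- Sum of the blocks `dk (i+1)` dilated by the bases `μ i`, `i < K`. -/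
def blockSum (μ : ℕ → ℕ) (K : ℕ) (x : ℝ) : ℝ :=
  ∑ i ∈ Finset.range K, dk (i + 1) (μ i * x)

/-- A Lipschitz constant for `blockSum μ K`. -/
def blockLip (μ : ℕ → ℕ) (K : ℕ) : ℝ :=
  ∑ i ∈ Finset.range K, 2 * π * ((i + 1 : ℕ) : ℝ) ^ 2 * μ i

lemma blockSum_continuous (μ : ℕ → ℕ) (K : ℕ) : Continuous (blockSum μ K) := by
  unfold blockSum
  refine continuous_finsetSum _ fun i _ => ?_
  exact (dk_continuous _).comp (by fun_prop)

lemma dk_dilate_periodic (l m : ℕ) : Function.Periodic (fun x : ℝ => dk l (m * x)) 1 := by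
  intro x
  have := (dk_periodic l).nat_mul m (m * x)
  simp only [mul_add, mul_one] at this ⊢
  exact this

lemma blockSum_periodic (μ : ℕ → ℕ) (K : ℕ) : Function.Periodic (blockSum μ K) 1 := by
  intro x
  unfold blockSum
  exact Finset.sum_congr rfl fun i _ => dk_dilate_periodic _ _ x

lemma blockSum_lipschitz (μ : ℕ → ℕ) (K : ℕ) (x y : ℝ) :
    |blockSum μ K x - blockSum μ K y| ≤ blockLip μ K * |x - y| := by
  unfold blockSum blockLip
  rw [← Finset.sum_sub_distrib, Finset.sum_mul]
  refine (Finset.abs_sum_le_sum_abs _ _).trans (Finset.sum_le_sum fun i _ => ?_)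
  refine (dk_lipschitz _ _ _).trans (le_of_eq ?_)
  rw [← mul_sub, abs_mul, Nat.abs_cast]
  ring

lemma blockLip_nonneg (μ : ℕ → ℕ) (K : ℕ) : 0 ≤ blockLip μ K :=
  Finset.sum_nonneg fun i _ => by positivity

/-- The characteristic function of a sum of blocks nearly factorizes when each base `μ i` is large
compared with the Lipschitz constant of the preceding blocks. -/
lemma charFun_blockSum_sub_prod (μ : ℕ → ℕ) (hμ : ∀ i, 1 ≤ μ i) (s : ℝ) (K : ℕ) :
    ‖(∫ x in (0:ℝ)..1, Complex.exp ((s * blockSum μ K x : ℝ) * Complex.I))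
        - ∏ i ∈ Finset.range K, blockChar (i + 1) s‖
      ≤ |s| * ∑ i ∈ Finset.range K, blockLip μ i / μ i := by
  induction K with
  | zero => simp [blockSum]
  | succ K ih =>
    set h : ℝ → ℂ := fun x => Complex.exp ((s * blockSum μ K x : ℝ) * Complex.I) with hh
    set g : ℝ → ℂ := fun x => Complex.exp ((s * dk (K + 1) x : ℝ) * Complex.I) with hg
    have hbc := blockSum_continuous μ K
    have hdc := dk_continuous (K + 1)
    have hL : ∀ x y, ‖h x - h y‖ ≤ (|s| * blockLip μ K) * |x - y| := by
      intro x y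
      have e : h x - h y = h y *
          (Complex.exp ((s * (blockSum μ K x - blockSum μ K y) : ℝ) * Complex.I) - 1) := by
        simp only [hh]
        rw [mul_sub, ← Complex.exp_add, mul_one]
        congr 2
        push_cast; ring
      rw [e, norm_mul, hh, Complex.norm_exp_ofReal_mul_I, one_mul]
      refine (norm_exp_ofReal_sub_one_le _).trans ?_
      rw [abs_mul, mul_assoc]
      exact mul_le_mul_of_nonneg_left (blockSum_lipschitz μ K x y) (abs_nonneg _)
    have hst := indep_step h g
      (fun x => by simp only [hh, blockSum_periodic μ K x])
      (fun x => by simp only [hg, dk_periodic (K + 1) x])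
      (by simp only [hh]; fun_prop) (by simp only [hg]; fun_prop) _ hL
      (fun x => by simp only [hg, Complex.norm_exp_ofReal_mul_I]; exact le_rfl) (μ K) (hμ K)
    have e1 : (∫ x in (0:ℝ)..1, Complex.exp ((s * blockSum μ (K + 1) x : ℝ) * Complex.I))
        = ∫ x in (0:ℝ)..1, h x * g (μ K * x) := by
      refine intervalIntegral.integral_congr fun x _ => ?_
      simp only [hh, hg, ← Complex.exp_add, blockSum, Finset.sum_range_succ]
      congr 1
      push_cast; ring
    have e2 : (∫ x in (0:ℝ)..1, g x) = blockChar (K + 1) s := rfl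
    rw [e2] at hst
    rw [e1, Finset.prod_range_succ, Finset.sum_range_succ]
    have e3 : (∫ x in (0:ℝ)..1, h x * g (μ K * x))
        - (∏ i ∈ Finset.range K, blockChar (i + 1) s) * blockChar (K + 1) s
        = ((∫ x in (0:ℝ)..1, h x * g (μ K * x)) - (∫ x in (0:ℝ)..1, h x) * blockChar (K + 1) s)
          + ((∫ x in (0:ℝ)..1, h x) - ∏ i ∈ Finset.range K, blockChar (i + 1) s)
            * blockChar (K + 1) s := by ring
    rw [e3]
    refine (norm_add_le _ _).trans ?_
    rw [norm_mul ((∫ x in (0:ℝ)..1, h x) - _)]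
    have h4 : ‖(∫ x in (0:ℝ)..1, h x) - ∏ i ∈ Finset.range K, blockChar (i + 1) s‖
        * ‖blockChar (K + 1) s‖ ≤ |s| * ∑ i ∈ Finset.range K, blockLip μ i / μ i :=
      calc _ ≤ (|s| * ∑ i ∈ Finset.range K, blockLip μ i / μ i) * 1 :=
            mul_le_mul ih (norm_blockChar_le _ _) (norm_nonneg _)
              ((norm_nonneg _).trans ih)
        _ = _ := mul_one _
    have h5 : |s| * blockLip μ K / μ K = |s| * (blockLip μ K / μ K) := by ring
    rw [h5] at hst
    linarith

lemma integral_abs_dk_dilate (l m : ℕ) (hm : 1 ≤ m) :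
    ∫ x in (0:ℝ)..1, |dk l (m * x)| = ∫ x in (0:ℝ)..1, |dk l x| := by
  have hm0 : (m:ℝ) ≠ 0 := by positivity
  rw [intervalIntegral.integral_comp_mul_left (fun x => |dk l x|) hm0]
  have hp : Function.Periodic (fun x => |dk l x|) 1 := fun x => by simp only [dk_periodic l x]
  have := hp.intervalIntegral_add_zsmul_eq m 0
  simp at this ⊢
  rw [this fun a b => (dk_continuous l).abs.intervalIntegrable a b]
  field_simp

/-! ### Construction of the frequencies -/

/-- Integer fourth root. -/
def qroot (K : ℕ) : ℕ := Nat.sqrt (Nat.sqrt K)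

/-- Total length of the long blocks in the first `K` rounds; asymptotically `K ^ 2 / 2`, but
increasing only when `K` is a fourth power. -/
def longTotal (K : ℕ) : ℕ := qroot K ^ 8 / 2

/-- Length of the long block in round `i`. -/
def longLen (i : ℕ) : ℕ := longTotal (i + 1) - longTotal i

/-- Length of the `b`-th block: round `i` consists of block `2 i`, of length `i + 1`, followed by
the long block `2 i + 1`, which is usually empty. -/
def len (b : ℕ) : ℕ := if b % 2 = 0 then b / 2 + 1 else longLen (b / 2)

/-- Starting position of the `b`-th block. -/
def start (b : ℕ) : ℕ := ∑ c ∈ Finset.range b, len c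

lemma len_even (i : ℕ) : len (2 * i) = i + 1 := by simp [len]

lemma len_odd (i : ℕ) : len (2 * i + 1) = longLen i := by
  have h1 : (2 * i + 1) % 2 = 1 := by omega
  have h2 : (2 * i + 1) / 2 = i := by omega
  simp [len, h1, h2]

lemma start_succ (b : ℕ) : start (b + 1) = start b + len b := Finset.sum_range_succ _ _

lemma start_mono : Monotone start := monotone_nat_of_le_succ fun b => by rw [start_succ]; omega

lemma start_even_succ (i : ℕ) : start (2 * (i + 1)) = start (2 * i) + (i + 1) + longLen i := by
  rw [show 2 * (i + 1) = 2 * i + 1 + 1 by ring, start_succ, start_succ, len_even, len_odd]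

lemma le_start_even (i : ℕ) : i ≤ start (2 * i) := by
  induction i with
  | zero => simp
  | succ i ih => rw [start_even_succ]; omega

lemma exists_block (q : ℕ) : ∃ b, q < start (b + 1) :=
  ⟨2 * q + 1, lt_of_lt_of_le (Nat.lt_succ_self q) (le_start_even (q + 1))⟩

/-- Index of the block containing the position `q`. -/
def blk (q : ℕ) : ℕ := Nat.find (exists_block q)

lemma lt_start_blk (q : ℕ) : q < start (blk q + 1) := Nat.find_spec (exists_block q)

lemma start_blk_le (q : ℕ) : start (blk q) ≤ q := by
  rcases Nat.eq_zero_or_pos (blk q) with h | h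
  · rw [h]; simp [start]
  · have := Nat.find_min (exists_block q) (m := blk q - 1) (by unfold blk at *; omega)
    rw [Nat.sub_add_cancel h] at this
    omega

lemma blk_eq {q b : ℕ} (h1 : start b ≤ q) (h2 : q < start (b + 1)) : blk q = b := by
  apply le_antisymm
  · exact Nat.find_min' _ h2
  · by_contra h
    push Not at h
    have := start_mono (show blk q + 1 ≤ b by omega)
    have := lt_start_blk q
    omega

lemma blk_mono : Monotone blk := by
  intro q qq h
  exact Nat.find_min' _ (h.trans_lt (lt_start_blk qq))

/-- Number of filler indices inserted up to the `b`-th block. It exceeds `thr (len b)`, the index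
beyond which a block of length `len b` may start. -/
def pad (thr : ℕ → ℕ) (b : ℕ) : ℕ := ∑ c ∈ Finset.range (b + 1), (thr (len c) + 1)

lemma pad_strictMono (thr : ℕ → ℕ) : StrictMono (pad thr) :=
  strictMono_nat_of_lt_succ fun b => by
    unfold pad
    rw [Finset.sum_range_succ _ (b + 1)]
    omega

lemma thr_lt_pad (thr : ℕ → ℕ) (b : ℕ) : thr (len b) < pad thr b := by
  unfold pad
  rw [Finset.sum_range_succ]
  omega

/-- The index, in the sequence of frequencies, of the term at main position `q`. -/
def emb (thr : ℕ → ℕ) (q : ℕ) : ℕ := q + pad thr (blk q)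

lemma emb_strictMono (thr : ℕ → ℕ) : StrictMono (emb thr) := by
  intro q qq h
  have := (pad_strictMono thr).monotone (blk_mono h.le)
  unfold emb; omega

/-- The indices in the complement of the range of `emb thr` carry the filler frequencies. -/
def IsFiller (thr : ℕ → ℕ) (k : ℕ) : Prop := ∀ q, emb thr q ≠ k

lemma filler_infinite (thr : ℕ → ℕ) : {k | IsFiller thr k}.Infinite := by
  rw [Set.infinite_iff_exists_gt]
  intro a
  set b := 2 * (a + 1) with hb
  set q := start b with hq
  have hqa : a + 1 ≤ q := le_start_even (a + 1)
  have hlen : len b = a + 1 + 1 := len_even (a + 1)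
  have hbq : blk q = b := blk_eq le_rfl (by rw [start_succ]; omega)
  have hbq' : blk (q - 1) < b := by
    by_contra h
    push Not at h
    have := start_mono h
    have := start_blk_le (q - 1)
    omega
  have hp := pad_strictMono thr hbq'
  have e1 : emb thr q = q + pad thr b := by rw [emb, hbq]
  have e2 : emb thr (q - 1) = q - 1 + pad thr (blk (q - 1)) := rfl
  refine ⟨emb thr q - 1, ?_, by omega⟩
  intro qq h
  -- the index just before the start of a block lies strictly between two values of `emb`
  rcases Nat.lt_or_ge qq q with h' | h'
  · have := (emb_strictMono thr).monotone (show qq ≤ q - 1 by omega)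
    omega
  · have := (emb_strictMono thr).monotone h'
    omega

open Classical in
/-- Offset of the index `k` inside its block, and `0` at filler indices. -/
def off (thr : ℕ → ℕ) (k : ℕ) : ℕ :=
  if h : ∃ q, emb thr q = k then h.choose - start (blk h.choose) else 0

lemma off_emb (thr : ℕ → ℕ) (q : ℕ) : off thr (emb thr q) = q - start (blk q) := by
  have h : ∃ qq, emb thr qq = emb thr q := ⟨q, rfl⟩
  have e : h.choose = q := (emb_strictMono thr).injective h.choose_spec
  rw [off, dif_pos h, e]

lemma off_le (thr : ℕ → ℕ) (k : ℕ) : off thr k ≤ k := by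
  by_cases h : ∃ q, emb thr q = k
  · obtain ⟨q, rfl⟩ := h
    rw [off_emb, emb]
    omega
  · rw [off, dif_neg h]; omega

/-- Rapidly growing bases. -/
def base (A k : ℕ) : ℕ := ∏ j ∈ Finset.range k, A * (j + 1) ^ 3 * 2 ^ j

lemma base_succ (A k : ℕ) : base A (k + 1) = base A k * (A * (k + 1) ^ 3 * 2 ^ k) :=
  Finset.prod_range_succ _ _

lemma base_pos {A : ℕ} (hA : 0 < A) (k : ℕ) : 0 < base A k :=
  Finset.prod_pos fun j _ => by positivity

lemma base_mono {A : ℕ} (hA : 0 < A) : Monotone (base A) :=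
  monotone_nat_of_le_succ fun k => by
    rw [base_succ]
    exact Nat.le_mul_of_pos_right _ (by positivity)

/-- The frequencies: in a block they form an arithmetic progression `μ, 2 μ, 3 μ, …`, where `μ` is
the base attached to the first index of the block. -/
def freq (A : ℕ) (thr : ℕ → ℕ) (k : ℕ) : ℕ := (off thr k + 1) * base A (k - off thr k)

lemma freq_pos {A : ℕ} (hA : 0 < A) (thr : ℕ → ℕ) (k : ℕ) : 0 < freq A thr k :=
  Nat.mul_pos (Nat.succ_pos _) (base_pos hA _)

/-- Two consecutive indices either belong to the same block, far enough out for its length, or the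
second one starts anew with offset `0`. -/
lemma off_succ (ε : ℕ → ℝ) (hε : ∀ k, 0 < ε k) (thr : ℕ → ℕ)
    (hthr : ∀ l k, thr l ≤ k → ε k * l ≤ 1) (k : ℕ) :
    off thr (k + 1) = 0 ∨ (off thr (k + 1) = off thr k + 1 ∧ ε k * (off thr k + 1) ≤ 1) := by
  by_cases h : ∃ q, emb thr q = k + 1
  · obtain ⟨q, hq⟩ := h
    rw [← hq, off_emb]
    have h1 := start_blk_le q
    have h2 := lt_start_blk q
    rcases Nat.eq_zero_or_pos (q - start (blk q)) with h0 | h0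
    · exact Or.inl h0
    · right
      have hb : blk (q - 1) = blk q := blk_eq (by omega) (by omega)
      have hk : emb thr (q - 1) = k := by
        have : emb thr q = q + pad thr (blk q) := rfl
        rw [emb, hb]; omega
      have ho : off thr k = q - 1 - start (blk q) := by rw [← hk, off_emb, hb]
      refine ⟨by omega, ?_⟩
      have h3 := hthr (len (blk q)) k (by
        have := thr_lt_pad thr (blk q)
        rw [← hk, emb, hb]; omega)
      refine le_trans (mul_le_mul_of_nonneg_left ?_ (hε k).le) h3
      rw [start_succ] at h2
      have : off thr k + 1 ≤ len (blk q) := by omega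
      exact_mod_cast this
  · left
    rw [off, dif_neg h]

/-- Inside a block the ratio of consecutive frequencies is `1 + 1/j` with `j` at most the block length;
when a new base starts, the ratio is at least `A`. -/
lemma freq_gap (ε : ℕ → ℝ) (hε : ∀ k, 0 < ε k) (thr : ℕ → ℕ)
    (hthr : ∀ l k, thr l ≤ k → ε k * l ≤ 1) (A : ℕ) (hA0 : 0 < A) (hA : ∀ k, 1 + ε k ≤ A) (k : ℕ) :
    (1 + ε k) * (freq A thr k : ℝ) ≤ (freq A thr (k + 1) : ℝ) := by
  have hle := off_le thr k
  rcases off_succ ε hε thr hthr k with h | ⟨h, h'⟩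
  · unfold freq
    rw [h, Nat.sub_zero, base_succ]
    have h1 : base A (k - off thr k) ≤ base A k := base_mono hA0 (Nat.sub_le _ _)
    have h2 : off thr k + 1 ≤ (k + 1) ^ 3 * 2 ^ k :=
      calc off thr k + 1 ≤ k + 1 := by omega
        _ ≤ (k + 1) ^ 3 := Nat.le_self_pow (by norm_num) _
        _ ≤ (k + 1) ^ 3 * 2 ^ k := Nat.le_mul_of_pos_right _ (by positivity)
    calc (1 + ε k) * (((off thr k + 1) * base A (k - off thr k) : ℕ) : ℝ)
        ≤ A * ((((k + 1) ^ 3 * 2 ^ k) * base A k : ℕ) : ℝ) := by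
          refine mul_le_mul (hA k) ?_ (Nat.cast_nonneg _) (Nat.cast_nonneg _)
          exact_mod_cast Nat.mul_le_mul h2 h1
      _ = _ := by push_cast; ring
  · unfold freq
    rw [h, show k + 1 - (off thr k + 1) = k - off thr k by omega]
    push_cast
    rw [← mul_assoc]
    refine mul_le_mul_of_nonneg_right ?_ (Nat.cast_nonneg _)
    nlinarith

/-- Base of the `b`-th block. -/
def blkBase (A : ℕ) (thr : ℕ → ℕ) (b : ℕ) : ℕ := base A (start b + pad thr b)

lemma sum_block (A : ℕ) (thr : ℕ → ℕ) (b r : ℕ) (hr : r ≤ len b) (x : ℝ) :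
    ∑ j ∈ Finset.range r, Real.cos (2 * π * (freq A thr (emb thr (start b + j))) * x)
      = dk r (blkBase A thr b * x) := by
  unfold dk
  refine Finset.sum_congr rfl fun j hj => ?_
  have hj := Finset.mem_range.1 hj
  have hb : blk (start b + j) = b := blk_eq (by omega) (by rw [start_succ]; omega)
  have ho : off thr (emb thr (start b + j)) = j := by rw [off_emb, hb]; omega
  have hf : freq A thr (emb thr (start b + j)) = (j + 1) * blkBase A thr b := by
    rw [freq, ho, blkBase, emb, hb]
    congr 2
    omega
  rw [hf]
  push_cast
  congr 1; ring

lemma sum_blocks (A : ℕ) (thr : ℕ → ℕ) (B : ℕ) (x : ℝ) :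
    ∑ q ∈ Finset.range (start B), Real.cos (2 * π * (freq A thr (emb thr q)) * x)
      = ∑ b ∈ Finset.range B, dk (len b) (blkBase A thr b * x) := by
  induction B with
  | zero => simp [start]
  | succ B ih =>
    rw [start_succ, Finset.sum_range_add, ih, Finset.sum_range_succ, sum_block _ _ _ _ le_rfl]

lemma sum_main (A : ℕ) (thr : ℕ → ℕ) (M : ℕ) (x : ℝ) :
    ∑ q ∈ Finset.range M, Real.cos (2 * π * (freq A thr (emb thr q)) * x)
      = ∑ b ∈ Finset.range (blk M), dk (len b) (blkBase A thr b * x)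
        + dk (M - start (blk M)) (blkBase A thr (blk M) * x) := by
  have h1 := start_blk_le M
  have h2 := lt_start_blk M
  rw [start_succ] at h2
  obtain ⟨r, hr⟩ := Nat.exists_eq_add_of_le h1
  have hr' : M - start (blk M) = r := by omega
  rw [hr', ← sum_block A thr (blk M) r (by omega), ← sum_blocks, ← Finset.sum_range_add, ← hr]

lemma sum_range_even_odd (g : ℕ → ℝ) (B : ℕ) :
    ∑ b ∈ Finset.range B, g b
      = ∑ i ∈ Finset.range ((B + 1) / 2), g (2 * i) + ∑ i ∈ Finset.range (B / 2), g (2 * i + 1) := by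
  induction B with
  | zero => simp
  | succ B ih =>
    rw [Finset.sum_range_succ, ih]
    rcases Nat.even_or_odd' B with ⟨c, rfl | rfl⟩
    · rw [show (2 * c + 1) / 2 = c by omega, show (2 * c) / 2 = c by omega,
        show (2 * c + 1 + 1) / 2 = c + 1 by omega, Finset.sum_range_succ _ c]
      ring
    · rw [show (2 * c + 1 + 1) / 2 = c + 1 by omega, show (2 * c + 1) / 2 = c by omega,
        show (2 * c + 1 + 1 + 1) / 2 = c + 1 by omega, Finset.sum_range_succ _ c,
        Finset.sum_range_succ _ c]
      ring

/-- Base of the block of length `i + 1` in round `i`. -/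
def roundBase (A : ℕ) (thr : ℕ → ℕ) (i : ℕ) : ℕ := blkBase A thr (2 * i)

/-- The first `M` main terms: complete blocks of lengths `1, 2, 3, …`, complete long blocks, and one
possibly incomplete block. -/
lemma sum_main_split (A : ℕ) (thr : ℕ → ℕ) (M : ℕ) (x : ℝ) :
    ∑ q ∈ Finset.range M, Real.cos (2 * π * (freq A thr (emb thr q)) * x)
      = blockSum (roundBase A thr) ((blk M + 1) / 2) x
        + (∑ i ∈ Finset.range (blk M / 2), dk (longLen i) (blkBase A thr (2 * i + 1) * x)
        + dk (M - start (blk M)) (blkBase A thr (blk M) * x)) := by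
  rw [sum_main, sum_range_even_odd]
  simp only [len_even, len_odd, blockSum, roundBase]
  ring

lemma le_blkBase_arg (thr : ℕ → ℕ) (i : ℕ) : i ≤ start (2 * i) + pad thr (2 * i) :=
  (le_start_even i).trans (Nat.le_add_right _ _)

lemma roundBase_mono {A : ℕ} (hA : 0 < A) (thr : ℕ → ℕ) : Monotone (roundBase A thr) := by
  intro i j h
  refine base_mono hA (Nat.add_le_add (start_mono (by omega)) ?_)
  exact (pad_strictMono thr).monotone (by omega)

lemma roundBase_succ {A : ℕ} (hA : 0 < A) (thr : ℕ → ℕ) (i : ℕ) :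
    roundBase A thr i * ((i + 1) ^ 3 * 2 ^ i) ≤ roundBase A thr (i + 1) := by
  set p := start (2 * i) + pad thr (2 * i) with hp
  have hip : i ≤ p := le_blkBase_arg thr i
  have h1 : p + 1 ≤ start (2 * (i + 1)) + pad thr (2 * (i + 1)) := by
    have := start_mono (show 2 * i ≤ 2 * (i + 1) by omega)
    have := pad_strictMono thr (show 2 * i < 2 * (i + 1) by omega)
    omega
  calc roundBase A thr i * ((i + 1) ^ 3 * 2 ^ i)
      ≤ base A p * (A * (p + 1) ^ 3 * 2 ^ p) := by
        refine Nat.mul_le_mul_left _ (Nat.mul_le_mul ?_ (Nat.pow_le_pow_right (by norm_num) hip))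
        exact (Nat.pow_le_pow_left (by omega) 3).trans (Nat.le_mul_of_pos_left _ hA)
    _ = base A (p + 1) := (base_succ _ _).symm
    _ ≤ _ := base_mono hA h1

/-- The growth of the bases bounds the terms by a geometric sequence. -/
lemma sum_blockLip_div_le {A : ℕ} (hA : 0 < A) (thr : ℕ → ℕ) (K : ℕ) :
    ∑ i ∈ Finset.range K, blockLip (roundBase A thr) i / roundBase A thr i ≤ 4 * π := by
  set μ := roundBase A thr with hμ
  have hpos : ∀ i, (0:ℝ) < μ i := fun i => by exact_mod_cast base_pos hA _
  have hterm : ∀ i, blockLip μ (i + 1) / μ (i + 1) ≤ 2 * π * (1 / 2) ^ i := by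
    intro i
    rw [div_le_iff₀ (hpos _)]
    have h1 : blockLip μ (i + 1) ≤ 2 * π * ((i:ℝ) + 1) ^ 3 * μ i := by
      unfold blockLip
      calc _ ≤ ∑ j ∈ Finset.range (i + 1), 2 * π * ((i:ℝ) + 1) ^ 2 * μ i := by
            refine Finset.sum_le_sum fun j hj => ?_
            have hj : j ≤ i := by have := Finset.mem_range.1 hj; omega
            have h2 : (μ j : ℝ) ≤ μ i := by exact_mod_cast roundBase_mono hA thr hj
            have h3 : (j:ℝ) ≤ i := by exact_mod_cast hj
            push_cast
            gcongr
        _ = _ := by simp; ring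
    have h2 : (μ i : ℝ) * (((i:ℝ) + 1) ^ 3 * 2 ^ i) ≤ μ (i + 1) := by
      exact_mod_cast roundBase_succ hA thr i
    have h3 : (1 / 2 : ℝ) ^ i * 2 ^ i = 1 := by rw [← mul_pow]; norm_num
    calc blockLip μ (i + 1) ≤ 2 * π * ((i:ℝ) + 1) ^ 3 * μ i := h1
      _ = 2 * π * (1 / 2) ^ i * (μ i * (((i:ℝ) + 1) ^ 3 * 2 ^ i)) := by
        linear_combination (-(2 * π * ((i:ℝ) + 1) ^ 3 * μ i)) * h3
      _ ≤ _ := by gcongr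
  rcases K with _ | K
  · simp; positivity
  · rw [Finset.sum_range_succ']
    have h0 : blockLip μ 0 = 0 := by simp [blockLip]
    rw [h0, zero_div, add_zero]
    refine (Finset.sum_le_sum fun i _ => hterm i).trans ?_
    rw [← Finset.mul_sum]
    have := sum_geometric_two_le K
    nlinarith [Real.pi_pos]

/-! ### The rearrangement and its counting estimates -/

/-- The positions at which `σ` places the filler indices: fourth powers. -/
def IsFourth (x : ℕ) : Prop := ∃ j : ℕ, j ^ 4 = x

lemma fourth_infinite : {x | IsFourth x}.Infinite :=
  Set.infinite_range_of_injective (Nat.pow_left_injective (n := 4) (by norm_num))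

lemma not_fourth_infinite : {x | ¬ IsFourth x}.Infinite := by
  refine Set.infinite_of_injective_forall_mem (f := fun j : ℕ => 4 * j + 2)
    (fun a b h => by simpa using h) ?_
  rintro j ⟨i, hi⟩
  have h1 : i ^ 4 % 4 = 2 := by rw [hi]; omega
  rw [Nat.pow_mod] at h1
  have : i % 4 < 4 := Nat.mod_lt _ (by norm_num)
  interval_cases h : i % 4 <;> simp at h1

open Classical in
/-- The rearrangement: main indices in increasing order at positions which are not fourth powers,
filler indices in increasing order at fourth powers. -/
def perm (thr : ℕ → ℕ) (x : ℕ) : ℕ :=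
  if IsFourth x then Nat.nth (IsFiller thr) (Nat.count IsFourth x)
  else emb thr (Nat.count (fun y => ¬ IsFourth y) x)

lemma perm_bijective (thr : ℕ → ℕ) : Function.Bijective (perm thr) := by
  classical
  have hF := filler_infinite thr
  constructor
  · intro x y h
    unfold perm at h
    split_ifs at h with hx hy hy
    · exact Nat.count_injective hx hy (Nat.nth_injective hF h)
    · exact absurd h.symm (Nat.nth_mem_of_infinite hF _ _)
    · exact absurd h (Nat.nth_mem_of_infinite hF _ _)
    · exact Nat.count_injective (p := fun y => ¬ IsFourth y) hx hy
        ((emb_strictMono thr).injective h)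
  · intro k
    by_cases hk : IsFiller thr k
    · refine ⟨Nat.nth IsFourth (Nat.count (IsFiller thr) k), ?_⟩
      rw [perm, if_pos (Nat.nth_mem_of_infinite fourth_infinite _),
        Nat.count_nth_of_infinite fourth_infinite, Nat.nth_count hk]
    · simp only [IsFiller, not_forall, not_not] at hk
      obtain ⟨q, hq⟩ := hk
      refine ⟨Nat.nth (fun y => ¬ IsFourth y) q, ?_⟩
      have h1 : ¬ IsFourth (Nat.nth (fun y => ¬ IsFourth y) q) :=
        Nat.nth_mem_of_infinite (p := fun y => ¬ IsFourth y) not_fourth_infinite q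
      rw [perm, if_neg h1, Nat.count_nth_of_infinite not_fourth_infinite, hq]

open Classical in
/-- Number of main positions among the first `N`. -/
def mainCount (N : ℕ) : ℕ := Nat.count (fun y => ¬ IsFourth y) N

open Classical in
/-- Number of filler positions among the first `N`. -/
def fillCount (N : ℕ) : ℕ := Nat.count IsFourth N

lemma sum_perm (thr : ℕ → ℕ) (f : ℕ → ℝ) (N : ℕ) :
    ∑ k ∈ Finset.range N, f (perm thr k)
      = ∑ q ∈ Finset.range (mainCount N), f (emb thr q)
        + ∑ q ∈ Finset.range (fillCount N), f (Nat.nth (IsFiller thr) q) := by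
  classical
  induction N with
  | zero => simp [mainCount, fillCount]
  | succ N ih =>
    rw [Finset.sum_range_succ, ih]
    by_cases h : IsFourth N
    · have h1 : mainCount (N + 1) = mainCount N := by simp [mainCount, Nat.count_succ, h]
      have h2 : fillCount (N + 1) = fillCount N + 1 := by simp [fillCount, Nat.count_succ, h]
      rw [h1, h2, Finset.sum_range_succ, perm, if_pos h, fillCount]
      ring
    · have h1 : mainCount (N + 1) = mainCount N + 1 := by simp [mainCount, Nat.count_succ, h]
      have h2 : fillCount (N + 1) = fillCount N := by simp [fillCount, Nat.count_succ, h]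
      rw [h1, h2, Finset.sum_range_succ, perm, if_neg h, mainCount]
      ring

lemma mainCount_add_fillCount (N : ℕ) : mainCount N + fillCount N = N := by
  classical
  induction N with
  | zero => simp [mainCount, fillCount]
  | succ N ih =>
    by_cases h : IsFourth N
    · have h1 : mainCount (N + 1) = mainCount N := by simp [mainCount, Nat.count_succ, h]
      have h2 : fillCount (N + 1) = fillCount N + 1 := by simp [fillCount, Nat.count_succ, h]
      omega
    · have h1 : mainCount (N + 1) = mainCount N + 1 := by simp [mainCount, Nat.count_succ, h]
      have h2 : fillCount (N + 1) = fillCount N := by simp [fillCount, Nat.count_succ, h]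
      omega

lemma qroot_pow_le (N : ℕ) : qroot N ^ 4 ≤ N := by
  have h1 : qroot N ^ 2 ≤ Nat.sqrt N := Nat.sqrt_le' _
  calc qroot N ^ 4 = (qroot N ^ 2) ^ 2 := by ring
    _ ≤ (Nat.sqrt N) ^ 2 := Nat.pow_le_pow_left h1 2
    _ ≤ N := Nat.sqrt_le' N

lemma lt_qroot_succ_pow (N : ℕ) : N < (qroot N + 1) ^ 4 := by
  have h1 : Nat.sqrt N < (qroot N + 1) ^ 2 := Nat.lt_succ_sqrt' _
  have h2 : N < (Nat.sqrt N + 1) ^ 2 := Nat.lt_succ_sqrt' _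
  calc N < (Nat.sqrt N + 1) ^ 2 := h2
    _ ≤ ((qroot N + 1) ^ 2) ^ 2 := Nat.pow_le_pow_left h1 2
    _ = _ := by ring

lemma fillCount_le (N : ℕ) : fillCount N ≤ qroot N + 1 := by
  classical
  unfold fillCount
  rw [Nat.count_eq_card_filter_range]
  calc _ ≤ ((Finset.range (qroot N + 1)).image (fun j => j ^ 4)).card := by
        refine Finset.card_le_card fun x hx => ?_
        simp only [Finset.mem_filter, Finset.mem_range, Finset.mem_image] at hx ⊢
        obtain ⟨hx, j, rfl⟩ := hx
        refine ⟨j, ?_, rfl⟩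
        exact lt_of_pow_lt_pow_left₀ 4 (by omega) (hx.trans (lt_qroot_succ_pow N))
    _ ≤ _ := Finset.card_image_le.trans (by simp)

lemma qroot_mono : Monotone qroot := fun _ _ h => Nat.sqrt_le_sqrt (Nat.sqrt_le_sqrt h)

lemma longTotal_mono : Monotone longTotal := fun _ _ h =>
  Nat.div_le_div_right (Nat.pow_le_pow_left (qroot_mono h) 8)

lemma start_even (K : ℕ) : (start (2 * K) : ℝ) = K * (K + 1) / 2 + longTotal K := by
  induction K with
  | zero => simp [start, longTotal, qroot]
  | succ K ih =>
    rw [start_even_succ]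
    have h : (longLen K : ℝ) = longTotal (K + 1) - longTotal K := by
      rw [longLen, Nat.cast_sub (longTotal_mono (Nat.le_succ K))]
    push_cast
    rw [ih, h]; ring

lemma qroot_tendsto : Tendsto qroot atTop atTop := by
  refine tendsto_atTop.2 fun a => ?_
  filter_upwards [eventually_ge_atTop (a ^ 4)] with N hN
  have h := lt_qroot_succ_pow N
  have : a < qroot N + 1 := lt_of_pow_lt_pow_left₀ 4 (by omega) (hN.trans_lt h)
  omega

lemma qroot_ratio : Tendsto (fun K : ℕ => (qroot K : ℝ) ^ 4 / K) atTop (𝓝 1) := by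
  have h1 : Tendsto (fun q : ℕ => ((q:ℝ) / (q + 1)) ^ 4) atTop (𝓝 1) := by
    have := (tendsto_natCast_div_add_atTop (1:ℝ)).pow 4
    simpa using this
  refine tendsto_of_tendsto_of_tendsto_of_le_of_le' (h1.comp qroot_tendsto) tendsto_const_nhds ?_ ?_
  · filter_upwards [eventually_gt_atTop 0] with K hK
    have hK' : (0:ℝ) < K := by exact_mod_cast hK
    have : (K:ℝ) ≤ (qroot K + 1) ^ 4 := by exact_mod_cast (lt_qroot_succ_pow K).le
    simp only [Function.comp, div_pow]
    gcongr
  · filter_upwards with K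
    refine div_le_one_of_le₀ ?_ (Nat.cast_nonneg _)
    exact_mod_cast qroot_pow_le K

/-- The first `K` rounds have total length asymptotic to `K²`: half of it comes from the blocks of lengths
`1, …, K` and half from the long blocks. -/
lemma start_even_ratio : Tendsto (fun K : ℕ => (start (2 * K) : ℝ) / (K:ℝ) ^ 2) atTop (𝓝 1) := by
  have hinv : Tendsto (fun K : ℕ => (1:ℝ) / K) atTop (𝓝 0) := tendsto_one_div_atTop_nhds_zero_nat
  have hq : Tendsto (fun K : ℕ => ((qroot K : ℝ) ^ 4 / K) ^ 2 / 2) atTop (𝓝 (1 / 2)) := by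
    have := (qroot_ratio.pow 2).div_const 2
    simpa using this
  have hl : Tendsto (fun K : ℕ => (longTotal K : ℝ) / (K:ℝ) ^ 2) atTop (𝓝 (1 / 2)) := by
    have hlow : Tendsto (fun K : ℕ => ((qroot K : ℝ) ^ 4 / K) ^ 2 / 2 - ((1:ℝ) / K) ^ 2) atTop
        (𝓝 (1 / 2)) := by
      have := hq.sub (hinv.pow 2)
      simpa using this
    refine tendsto_of_tendsto_of_tendsto_of_le_of_le' hlow hq ?_ ?_
    · filter_upwards [eventually_gt_atTop 0] with K hK
      have hK' : (0:ℝ) < K := by exact_mod_cast hK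
      have h2 : (qroot K : ℝ) ^ 8 ≤ 2 * longTotal K + 2 := by
        have : qroot K ^ 8 ≤ 2 * longTotal K + 2 := by unfold longTotal; omega
        exact_mod_cast this
      rw [show ((qroot K : ℝ) ^ 4 / K) ^ 2 / 2 - ((1:ℝ) / K) ^ 2
        = ((qroot K : ℝ) ^ 8 / 2 - 1) / (K:ℝ) ^ 2 by field_simp]
      gcongr
      linarith
    · filter_upwards [eventually_gt_atTop 0] with K hK
      have hK' : (0:ℝ) < K := by exact_mod_cast hK
      have h2 : 2 * (longTotal K : ℝ) ≤ (qroot K : ℝ) ^ 8 := by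
        have : 2 * longTotal K ≤ qroot K ^ 8 := by unfold longTotal; omega
        exact_mod_cast this
      rw [show ((qroot K : ℝ) ^ 4 / K) ^ 2 / 2 = ((qroot K : ℝ) ^ 8 / 2) / (K:ℝ) ^ 2 by
        field_simp]
      gcongr
      linarith
  have hs : Tendsto (fun K : ℕ => 1 / 2 + (1:ℝ) / K / 2 + (longTotal K : ℝ) / (K:ℝ) ^ 2) atTop
      (𝓝 1) := by
    have := ((tendsto_const_nhds (x := (1 / 2 : ℝ))).add (hinv.div_const 2)).add hl
    norm_num at this
    simpa using this
  refine hs.congr' ?_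
  filter_upwards [eventually_gt_atTop 0] with K hK
  have hK' : (K:ℝ) ≠ 0 := by positivity
  rw [start_even]
  field_simp

/-- Number of rounds whose block of length `i + 1` is complete within the first `N` terms. -/
def rounds (N : ℕ) : ℕ := (blk (mainCount N) + 1) / 2

lemma mainCount_lt (N : ℕ) : mainCount N < start (2 * (rounds N + 1)) :=
  (lt_start_blk _).trans_le (start_mono (by unfold rounds; omega))

lemma le_mainCount (N : ℕ) : start (2 * (rounds N - 1)) ≤ mainCount N :=
  (start_mono (by unfold rounds; omega)).trans (start_blk_le _)

lemma fourthRoot_bound (N : ℕ) : (qroot N : ℝ) ≤ (N:ℝ) ^ (1 / 4 : ℝ) := by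
  have h : ((qroot N : ℝ) ^ 4) ^ (1 / 4 : ℝ) ≤ (N:ℝ) ^ (1 / 4 : ℝ) := by
    refine Real.rpow_le_rpow (by positivity) ?_ (by norm_num)
    exact_mod_cast qroot_pow_le N
  rwa [← Real.rpow_natCast, ← Real.rpow_mul (Nat.cast_nonneg _),
    show ((4:ℕ):ℝ) * (1 / 4) = 1 by norm_num, Real.rpow_one] at h

lemma fourthRoot_div_sqrt : Tendsto (fun N : ℕ => (N:ℝ) ^ (1 / 4 : ℝ) / Real.sqrt N) atTop (𝓝 0) := by
  have h := (tendsto_rpow_neg_atTop (show (0:ℝ) < 1 / 4 by norm_num)).comp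
    tendsto_natCast_atTop_atTop (α := ℕ)
  refine h.congr' ?_
  filter_upwards [eventually_gt_atTop 0] with N hN
  have hN' : (0:ℝ) < N := by exact_mod_cast hN
  simp only [Function.comp]
  rw [Real.sqrt_eq_rpow, ← Real.rpow_sub hN']
  norm_num

lemma sqrt_tendsto : Tendsto (fun N : ℕ => Real.sqrt N) atTop atTop :=
  Real.tendsto_sqrt_atTop.comp tendsto_natCast_atTop_atTop

lemma fillCount_div_sqrt : Tendsto (fun N : ℕ => (fillCount N : ℝ) / Real.sqrt N) atTop (𝓝 0) := by
  have h : Tendsto (fun N : ℕ => (N:ℝ) ^ (1 / 4 : ℝ) / Real.sqrt N + 1 / Real.sqrt N) atTop (𝓝 0) := by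
    have := fourthRoot_div_sqrt.add (sqrt_tendsto.const_div_atTop 1)
    simpa using this
  refine squeeze_zero (fun N => by positivity) (fun N => ?_) h
  rw [← add_div]
  gcongr
  have : (fillCount N : ℝ) ≤ qroot N + 1 := by exact_mod_cast fillCount_le N
  linarith [fourthRoot_bound N]

lemma mainCount_ratio : Tendsto (fun N : ℕ => (mainCount N : ℝ) / N) atTop (𝓝 1) := by
  have h : Tendsto (fun N : ℕ => 1 - (fillCount N : ℝ) / Real.sqrt N * (1 / Real.sqrt N)) atTop
      (𝓝 1) := by
    have := (tendsto_const_nhds (x := (1:ℝ))).sub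
      (fillCount_div_sqrt.mul (sqrt_tendsto.const_div_atTop 1))
    simpa using this
  refine h.congr' ?_
  filter_upwards [eventually_gt_atTop 0] with N hN
  have hN' : (0:ℝ) < N := by exact_mod_cast hN
  have h1 : (mainCount N : ℝ) = N - fillCount N := by
    have : (mainCount N : ℝ) + fillCount N = N := by exact_mod_cast mainCount_add_fillCount N
    linarith
  rw [h1, div_mul_div_comm, mul_one, Real.mul_self_sqrt hN'.le, sub_div, div_self hN'.ne']

lemma mainCount_tendsto : Tendsto mainCount atTop atTop := by
  have h : Tendsto (fun N : ℕ => (mainCount N : ℝ) / N * N) atTop atTop :=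
    mainCount_ratio.pos_mul_atTop one_pos tendsto_natCast_atTop_atTop
  refine tendsto_natCast_atTop_iff.1 (h.congr' ?_)
  filter_upwards [eventually_gt_atTop 0] with N hN
  have hN' : (N:ℝ) ≠ 0 := by positivity
  field_simp

lemma rounds_tendsto : Tendsto rounds atTop atTop := by
  refine tendsto_atTop.2 fun a => ?_
  filter_upwards [mainCount_tendsto.eventually_ge_atTop (start (2 * (a + 1)))] with N hN
  by_contra h
  push Not at h
  have h1 := mainCount_lt N
  have := start_mono (show 2 * (rounds N + 1) ≤ 2 * (a + 1) by omega)
  omega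

lemma rounds_ratio : Tendsto (fun N : ℕ => 1 / Real.sqrt N * (rounds N : ℝ)) atTop (𝓝 1) := by
  have hup : Tendsto (fun K : ℕ => (start (2 * (K + 1)) : ℝ) / (K:ℝ) ^ 2) atTop (𝓝 1) := by
    have h1 := start_even_ratio.comp (tendsto_add_atTop_nat 1)
    have h2 : Tendsto (fun K : ℕ => (((K:ℝ) + 1) / K) ^ 2) atTop (𝓝 1) := by
      have := ((tendsto_natCast_div_add_atTop (1:ℝ)).inv₀ one_ne_zero).pow 2
      simpa using this
    have h3 := h1.mul h2
    rw [one_mul] at h3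
    refine h3.congr' ?_
    filter_upwards [eventually_gt_atTop 0] with K hK
    have hK' : (K:ℝ) ≠ 0 := by positivity
    have hK'' : (K:ℝ) + 1 ≠ 0 := by positivity
    simp only [Function.comp]
    push_cast
    field_simp
  have hlo : Tendsto (fun K : ℕ => (start (2 * (K - 1)) : ℝ) / (K:ℝ) ^ 2) atTop (𝓝 1) := by
    rw [← tendsto_add_atTop_iff_nat 1]
    have h2 : Tendsto (fun K : ℕ => ((K:ℝ) / (K + 1)) ^ 2) atTop (𝓝 1) := by
      have := (tendsto_natCast_div_add_atTop (1:ℝ)).pow 2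
      simpa using this
    have h3 := start_even_ratio.mul h2
    rw [one_mul] at h3
    refine h3.congr' ?_
    filter_upwards [eventually_gt_atTop 0] with K hK
    have hK' : (K:ℝ) ≠ 0 := by positivity
    have hK'' : (K:ℝ) + 1 ≠ 0 := by positivity
    simp only [Nat.add_sub_cancel]
    push_cast
    field_simp
  have hM : Tendsto (fun N : ℕ => (mainCount N : ℝ) / (rounds N : ℝ) ^ 2) atTop (𝓝 1) := by
    refine tendsto_of_tendsto_of_tendsto_of_le_of_le (hlo.comp rounds_tendsto)
      (hup.comp rounds_tendsto) (fun N => ?_) (fun N => ?_)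
    · simp only [Function.comp]
      gcongr
      exact le_mainCount N
    · simp only [Function.comp]
      gcongr
      exact (mainCount_lt N).le
  have h1 : Tendsto (fun N : ℕ => Real.sqrt ((mainCount N : ℝ) / N / ((mainCount N : ℝ) /
      (rounds N : ℝ) ^ 2))) atTop (𝓝 1) := by
    have := (mainCount_ratio.div hM one_ne_zero).sqrt
    simpa using this
  refine h1.congr' ?_
  filter_upwards [mainCount_tendsto.eventually_gt_atTop 0, eventually_gt_atTop 0] with N hN hN0
  have h2 : (mainCount N : ℝ) ≠ 0 := by positivity
  have h3 : (N : ℝ) ≠ 0 := by positivity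
  have h4 : (mainCount N : ℝ) / N / ((mainCount N : ℝ) / (rounds N : ℝ) ^ 2)
      = (rounds N : ℝ) ^ 2 / N := by
    by_cases hr : (rounds N : ℝ) = 0
    · simp [hr]
    · field_simp
  rw [h4, Real.sqrt_div (by positivity), Real.sqrt_sq (Nat.cast_nonneg _)]
  ring

/-- The right-hand side vanishes unless `i + 1` is a fourth power, in which case
`longLen i ≤ (i + 1)²` suffices. -/
lemma longLen_rpow_le (i : ℕ) :
    (longLen i : ℝ) ^ (1 / 4 : ℝ) ≤ Real.sqrt (i + 1) * ((qroot (i + 1) : ℝ) - qroot i) := by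
  have hm := qroot_mono (Nat.le_succ i)
  rcases hm.eq_or_lt with h | h
  · have : longLen i = 0 := by
      have h' : qroot (i + 1) = qroot i := h.symm
      simp [longLen, longTotal, h']
    rw [this]
    have h2 : (qroot (i + 1) : ℝ) = qroot i := by exact_mod_cast h.symm
    rw [h2]
    simp
  · have h1 : (1:ℝ) ≤ (qroot (i + 1) : ℝ) - qroot i := by
      have : (qroot i : ℝ) + 1 ≤ qroot (i + 1) := by exact_mod_cast h
      linarith
    have h2 : longLen i ≤ (i + 1) ^ 2 := by
      calc longLen i ≤ longTotal (i + 1) := Nat.sub_le _ _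
        _ ≤ qroot (i + 1) ^ 8 := Nat.div_le_self _ _
        _ = (qroot (i + 1) ^ 4) ^ 2 := by ring
        _ ≤ _ := Nat.pow_le_pow_left (qroot_pow_le _) 2
    have h3 : (longLen i : ℝ) ≤ ((i:ℝ) + 1) ^ 2 := by exact_mod_cast h2
    have h4 : (longLen i : ℝ) ^ (1 / 4 : ℝ) ≤ Real.sqrt (i + 1) := by
      refine (Real.rpow_le_rpow (Nat.cast_nonneg _) h3 (by norm_num)).trans (le_of_eq ?_)
      rw [← Real.rpow_natCast, ← Real.rpow_mul (by positivity), Real.sqrt_eq_rpow]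
      norm_num
    nlinarith [Real.sqrt_nonneg ((i:ℝ) + 1)]

/-- The bounds of `longLen_rpow_le` telescope. -/
lemma sum_longLen_le (K : ℕ) :
    ∑ i ∈ Finset.range K, (longLen i : ℝ) ^ (1 / 4 : ℝ) ≤ Real.sqrt K * (K:ℝ) ^ (1 / 4 : ℝ) := by
  have h1 : ∀ i ∈ Finset.range K, (longLen i : ℝ) ^ (1 / 4 : ℝ)
      ≤ Real.sqrt K * ((qroot (i + 1) : ℝ) - qroot i) := by
    intro i hi
    have hi : (i:ℝ) + 1 ≤ K := by exact_mod_cast Finset.mem_range.1 hi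
    refine (longLen_rpow_le i).trans ?_
    have : (qroot i : ℝ) ≤ qroot (i + 1) := by exact_mod_cast qroot_mono (Nat.le_succ i)
    exact mul_le_mul_of_nonneg_right (Real.sqrt_le_sqrt hi) (by linarith)
  refine (Finset.sum_le_sum h1).trans ?_
  rw [← Finset.mul_sum, Finset.sum_range_sub (fun i => (qroot i : ℝ))]
  have : (qroot 0 : ℝ) = 0 := by simp [qroot]
  rw [this, sub_zero]
  gcongr
  exact fourthRoot_bound K

lemma sum_longLen_div_sqrt : Tendsto (fun N : ℕ =>
    (∑ i ∈ Finset.range (rounds N), (longLen i : ℝ) ^ (1 / 4 : ℝ)) / Real.sqrt N) atTop (𝓝 0) := by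
  have h1 := (fourthRoot_div_sqrt.comp rounds_tendsto).mul rounds_ratio
  rw [zero_mul] at h1
  refine squeeze_zero (fun N => ?_) (fun N => ?_) h1
  · exact div_nonneg (Finset.sum_nonneg fun i _ => by positivity) (Real.sqrt_nonneg _)
  · have h2 : ((rounds N : ℝ) ^ (1 / 4 : ℝ) / Real.sqrt (rounds N)) * (1 / Real.sqrt N * rounds N)
        = Real.sqrt (rounds N) * (rounds N : ℝ) ^ (1 / 4 : ℝ) / Real.sqrt N := by
      by_cases hr : rounds N = 0
      · simp [hr]
      · have h3 : Real.sqrt (rounds N) ≠ 0 := by positivity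
        have h4 : Real.sqrt (rounds N) * Real.sqrt (rounds N) = rounds N :=
          Real.mul_self_sqrt (Nat.cast_nonneg _)
        rw [show ((rounds N : ℝ) ^ (1 / 4 : ℝ) / Real.sqrt (rounds N)) *
          (1 / Real.sqrt N * rounds N) = (rounds N : ℝ) ^ (1 / 4 : ℝ) / Real.sqrt (rounds N) *
          (1 / Real.sqrt N * (Real.sqrt (rounds N) * Real.sqrt (rounds N))) by rw [h4]]
        field_simp
    simp only [Function.comp]
    rw [h2]
    gcongr
    exact sum_longLen_le _

/-! ### Convergence of the rearranged sums -/

/-- The rearranged trigonometric sum. -/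
def trigSum (A : ℕ) (thr : ℕ → ℕ) (N : ℕ) (x : ℝ) : ℝ :=
  ∑ k ∈ Finset.range N, Real.cos (2 * π * (freq A thr (perm thr k)) * x)

/-- Difference between `trigSum` and the sum of its complete blocks of lengths `1, 2, 3, …`. -/
def remainder (A : ℕ) (thr : ℕ → ℕ) (N : ℕ) (x : ℝ) : ℝ :=
  trigSum A thr N x - blockSum (roundBase A thr) (rounds N) x

lemma trigSum_continuous (A : ℕ) (thr : ℕ → ℕ) (N : ℕ) : Continuous (trigSum A thr N) := by
  unfold trigSum; fun_prop

lemma remainder_continuous (A : ℕ) (thr : ℕ → ℕ) (N : ℕ) : Continuous (remainder A thr N) :=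
  (trigSum_continuous A thr N).sub (blockSum_continuous _ _)

lemma integral_abs_dk_dilate_le (l m : ℕ) (hm : 1 ≤ m) :
    ∫ x in (0:ℝ)..1, |dk l (m * x)| ≤ 8 * (l:ℝ) ^ (1 / 4 : ℝ) := by
  rw [integral_abs_dk_dilate l m hm]
  exact integral_abs_dk_le l

/-- Long blocks, the last incomplete block and the fillers are negligible in mean, because a block
of length `l` has `L¹` norm of much smaller order than `√l`. -/
lemma integral_abs_remainder_le {A : ℕ} (hA : 0 < A) (thr : ℕ → ℕ) (N : ℕ) :
    ∫ x in (0:ℝ)..1, |remainder A thr N x| ≤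
      8 * ∑ i ∈ Finset.range (rounds N), (longLen i : ℝ) ^ (1 / 4 : ℝ)
        + 8 * (N:ℝ) ^ (1 / 4 : ℝ) + fillCount N := by
  set M := mainCount N with hM
  have hdc : ∀ l m : ℕ, Continuous (fun x : ℝ => |dk l (m * x)|) := fun l m =>
    ((dk_continuous l).comp (by fun_prop : Continuous fun x : ℝ => (m:ℝ) * x)).abs
  have hbound : ∀ x, |remainder A thr N x| ≤
      (∑ i ∈ Finset.range (rounds N), |dk (longLen i) (blkBase A thr (2 * i + 1) * x)|
        + |dk (M - start (blk M)) (blkBase A thr (blk M) * x)|) + fillCount N := by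
    intro x
    have e : remainder A thr N x =
        (∑ i ∈ Finset.range (blk M / 2), dk (longLen i) (blkBase A thr (2 * i + 1) * x)
          + dk (M - start (blk M)) (blkBase A thr (blk M) * x))
        + ∑ q ∈ Finset.range (fillCount N),
            Real.cos (2 * π * (freq A thr (Nat.nth (IsFiller thr) q)) * x) := by
      rw [remainder, trigSum, sum_perm thr (fun k => Real.cos (2 * π * (freq A thr k) * x)),
        sum_main_split, rounds]
      ring
    rw [e]
    refine (abs_add_le _ _).trans (add_le_add ((abs_add_le _ _).trans (add_le_add ?_ le_rfl)) ?_)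
    · refine (Finset.abs_sum_le_sum_abs _ _).trans ?_
      refine Finset.sum_le_sum_of_subset_of_nonneg ?_ fun _ _ _ => abs_nonneg _
      exact Finset.range_mono (by rw [rounds, ← hM]; omega)
    · refine (Finset.abs_sum_le_sum_abs _ _).trans ?_
      refine (Finset.sum_le_sum fun q _ => Real.abs_cos_le_one _).trans ?_
      simp
  have hcs : Continuous (fun x : ℝ => ∑ i ∈ Finset.range (rounds N),
      |dk (longLen i) (blkBase A thr (2 * i + 1) * x)|) :=
    continuous_finsetSum _ fun i _ => hdc _ _
  have hc2 : Continuous (fun x : ℝ => ∑ i ∈ Finset.range (rounds N),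
      |dk (longLen i) (blkBase A thr (2 * i + 1) * x)|
        + |dk (M - start (blk M)) (blkBase A thr (blk M) * x)|) := hcs.add (hdc _ _)
  calc _ ≤ ∫ x in (0:ℝ)..1, ((∑ i ∈ Finset.range (rounds N),
          |dk (longLen i) (blkBase A thr (2 * i + 1) * x)|
        + |dk (M - start (blk M)) (blkBase A thr (blk M) * x)|) + (fillCount N : ℝ)) := by
        refine intervalIntegral.integral_mono_on zero_le_one
          ((remainder_continuous A thr N).abs.intervalIntegrable _ _)
          ((hc2.add continuous_const).intervalIntegrable _ _) fun x _ => hbound x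
    _ = (∑ i ∈ Finset.range (rounds N), ∫ x in (0:ℝ)..1,
          |dk (longLen i) (blkBase A thr (2 * i + 1) * x)|)
        + (∫ x in (0:ℝ)..1, |dk (M - start (blk M)) (blkBase A thr (blk M) * x)|)
        + fillCount N := by
        rw [intervalIntegral.integral_add (hc2.intervalIntegrable _ _) (by simp),
          intervalIntegral.integral_add (hcs.intervalIntegrable _ _)
            ((hdc _ _).intervalIntegrable _ _),
          intervalIntegral.integral_finsetSum fun i _ => (hdc _ _).intervalIntegrable _ _]
        simp
    _ ≤ _ := by
        rw [Finset.mul_sum]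
        gcongr
        · exact integral_abs_dk_dilate_le _ _ (base_pos hA _)
        · refine (integral_abs_dk_dilate_le _ _ (base_pos hA _)).trans ?_
          gcongr
          have := mainCount_add_fillCount N
          omega

/-- Convergence of the characteristic functions of the normalized rearranged sums. -/
lemma charFun_trigSum_tendsto {A : ℕ} (hA : 0 < A) (thr : ℕ → ℕ) (t : ℝ) :
    Tendsto (fun N : ℕ => ∫ x in (0:ℝ)..1,
        Complex.exp ((t * (1 / Real.sqrt N) * trigSum A thr N x : ℝ) * Complex.I))
      atTop (𝓝 (Complex.exp (levyI t))) := by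
  set μ := roundBase A thr with hμ
  have hμ1 : ∀ i, 1 ≤ μ i := fun i => base_pos hA _
  set S : ℕ → ℝ := fun N => 1 / Real.sqrt N with hS
  have hSn : ∀ N, 0 ≤ S N := fun N => by positivity
  have hS0 : Tendsto S atTop (𝓝 0) := sqrt_tendsto.const_div_atTop 1
  have hP := prod_blockChar_tendsto t rounds S rounds_tendsto rounds_ratio
  -- discarding the remainder costs at most its mean
  have hd1 : ∀ N, ‖(∫ x in (0:ℝ)..1,
        Complex.exp ((t * S N * trigSum A thr N x : ℝ) * Complex.I))
      - ∫ x in (0:ℝ)..1, Complex.exp ((t * S N * blockSum μ (rounds N) x : ℝ) * Complex.I)‖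
      ≤ |t| * (S N * ∫ x in (0:ℝ)..1, |remainder A thr N x|) := by
    intro N
    have hc1 := trigSum_continuous A thr N
    have hc2 := blockSum_continuous μ (rounds N)
    have hc3 := remainder_continuous A thr N
    rw [← intervalIntegral.integral_sub
      (Continuous.intervalIntegrable (by fun_prop) _ _)
      (Continuous.intervalIntegrable (by fun_prop) _ _), ← mul_assoc,
      ← intervalIntegral.integral_const_mul]
    refine intervalIntegral.norm_integral_le_of_norm_le zero_le_one ?_
      (Continuous.intervalIntegrable (by fun_prop) _ _)
    refine Eventually.of_forall fun x _ => ?_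
    have e : Complex.exp ((t * S N * trigSum A thr N x : ℝ) * Complex.I)
        - Complex.exp ((t * S N * blockSum μ (rounds N) x : ℝ) * Complex.I)
        = Complex.exp ((t * S N * blockSum μ (rounds N) x : ℝ) * Complex.I)
          * (Complex.exp ((t * S N * remainder A thr N x : ℝ) * Complex.I) - 1) := by
      rw [mul_sub, ← Complex.exp_add, mul_one, remainder]
      congr 2
      push_cast; ring
    rw [e, norm_mul, Complex.norm_exp_ofReal_mul_I, one_mul]
    refine (norm_exp_ofReal_sub_one_le _).trans (le_of_eq ?_)
    rw [abs_mul, abs_mul, abs_of_nonneg (hSn N)]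
  have hd2 : ∀ N, ‖(∫ x in (0:ℝ)..1,
        Complex.exp ((t * S N * blockSum μ (rounds N) x : ℝ) * Complex.I))
      - ∏ i ∈ Finset.range (rounds N), blockChar (i + 1) (t * S N)‖ ≤ |t| * (S N * (4 * π)) := by
    intro N
    refine (charFun_blockSum_sub_prod μ hμ1 (t * S N) (rounds N)).trans ?_
    rw [abs_mul, abs_of_nonneg (hSn N), mul_assoc]
    have := sum_blockLip_div_le hA thr (rounds N)
    have := hSn N
    gcongr
  have hR : Tendsto (fun N => S N * ∫ x in (0:ℝ)..1, |remainder A thr N x|) atTop (𝓝 0) := by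
    have hb : Tendsto (fun N : ℕ =>
        8 * ((∑ i ∈ Finset.range (rounds N), (longLen i : ℝ) ^ (1 / 4 : ℝ)) / Real.sqrt N)
        + 8 * ((N:ℝ) ^ (1 / 4 : ℝ) / Real.sqrt N) + (fillCount N : ℝ) / Real.sqrt N)
        atTop (𝓝 0) := by
      have := ((sum_longLen_div_sqrt.const_mul 8).add (fourthRoot_div_sqrt.const_mul 8)).add
        fillCount_div_sqrt
      simpa using this
    refine squeeze_zero (fun N => mul_nonneg (hSn N)
      (intervalIntegral.integral_nonneg zero_le_one fun _ _ => abs_nonneg _)) (fun N => ?_) hb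
    refine (mul_le_mul_of_nonneg_left (integral_abs_remainder_le hA thr N) (hSn N)).trans
      (le_of_eq ?_)
    simp only [hS]
    ring
  have herr : Tendsto (fun N => |t| * (S N * ∫ x in (0:ℝ)..1, |remainder A thr N x|)
      + |t| * (S N * (4 * π))) atTop (𝓝 0) := by
    have := (hR.const_mul |t|).add ((hS0.mul_const (4 * π)).const_mul |t|)
    simpa using this
  refine tendsto_of_tendsto_of_dist hP ?_
  refine squeeze_zero (fun _ => dist_nonneg) (fun N => ?_) herr
  rw [dist_comm, dist_eq_norm]
  refine (norm_sub_le_norm_sub_add_norm_sub _ _ _).trans (add_le_add (hd1 N) (hd2 N))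

/-- Theorem `counterex`, CLT part: for any positive `ε_k → 0` there are a sequence `(n_k)` of
positive integers with `n_{k+1}/n_k ≥ 1 + ε_k` for `k ≥ k₀`, a permutation `σ` of the indices,
a bounded sequence `(b_N)` and a nongaussian probability law `G` with the stated infinitely
divisible characteristic function, such that
`N^{-1/2} ∑_{k≤N} cos(2π n_{σ(k)} x) - b_N → G` in distribution on `(0,1)`. -/
theorem statement0
    (ε : ℕ → ℝ) (hε_pos : ∀ k, 0 < ε k) (hε_lim : Tendsto ε atTop (𝓝 0)) :
    ∃ (n : ℕ → ℕ) (k₀ : ℕ) (σ : Equiv.Perm ℕ) (b : ℕ → ℝ) (G : Measure ℝ),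
      (∀ k, 0 < n k) ∧
      (∀ k, k₀ ≤ k → (1 + ε k) * (n k : ℝ) ≤ (n (k + 1) : ℝ)) ∧
      IsProbabilityMeasure G ∧
      (∃ C : ℝ, ∀ N, |b N| ≤ C) ∧
      (∀ g : BoundedContinuousFunction ℝ ℝ,
        Tendsto (fun N : ℕ => ∫ x in Set.Ioo (0:ℝ) 1,
            g ((∑ k ∈ Finset.range N, Real.cos (2 * π * (n (σ k)) * x)) / Real.sqrt N - b N))
          atTop (𝓝 (∫ y, g y ∂G))) ∧
      (∀ (m : ℝ) (v : NNReal), G ≠ ProbabilityTheory.gaussianReal m v) ∧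
      (∀ t : ℝ,
        (∫ x : ℝ, Complex.exp (t * x * Complex.I) ∂G)
          = Complex.exp (∫ x : ℝ,
              (Complex.exp (t * x * Complex.I) - 1 -
                (t * x * Complex.I) / (1 + (x : ℂ) ^ 2)) ∂levyMeasure)) := by
  -- a natural number dominating all `1 + ε k`
  obtain ⟨A, hA0, hA⟩ : ∃ A : ℕ, 0 < A ∧ ∀ k, 1 + ε k ≤ A := by
    obtain ⟨C, hC⟩ := hε_lim.bddAbove_range
    obtain ⟨A, hA⟩ := exists_nat_ge (1 + C)
    have h : ∀ k, 1 + ε k ≤ A := fun k => by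
      have : ε k ≤ C := hC ⟨k, rfl⟩
      linarith
    refine ⟨A, ?_, h⟩
    have h0 : (0:ℝ) < A := by linarith [h 0, hε_pos 0]
    exact_mod_cast h0
  -- beyond the index `thr l`, gaps `ε k` are compatible with progressions of length `l`
  have hex : ∀ l : ℕ, ∃ n : ℕ, ∀ k, n ≤ k → ε k * l ≤ 1 := fun l => by
    have h : Tendsto (fun k => ε k * (l:ℝ)) atTop (𝓝 0) := by
      simpa using hε_lim.mul_const (l:ℝ)
    obtain ⟨n, hn⟩ := eventually_atTop.1 (h.eventually_le_const (zero_lt_one' ℝ))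
    exact ⟨n, hn⟩
  choose thr hthr using hex
  set X : ℕ → ℝ → ℝ := fun N x => trigSum A thr N x / Real.sqrt N - (-levyC) with hX
  have hXc : ∀ N, Continuous (X N) := fun N =>
    ((trigSum_continuous A thr N).div_const _).sub continuous_const
  set P : Measure ℝ := volume.restrict (Set.Ioo 0 1) with hP
  have : IsProbabilityMeasure P := ⟨by simp [hP]⟩
  let μ : ℕ → ProbabilityMeasure ℝ := fun N =>
    ⟨P.map (X N), Measure.isProbabilityMeasure_map (hXc N).aemeasurable⟩
  have hchar : ∀ t, Tendsto (fun N => charFun (μ N : Measure ℝ) t) atTop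
      (𝓝 (Complex.exp (levyI t + t * levyC * Complex.I))) := by
    intro t
    have h1 := (charFun_trigSum_tendsto hA0 thr t).mul_const (Complex.exp (t * levyC * Complex.I))
    rw [← Complex.exp_add] at h1
    refine h1.congr fun N => ?_
    change _ = charFun (P.map (X N)) t
    rw [charFun_apply_real, integral_map (hXc N).aemeasurable
      (Continuous.aestronglyMeasurable (by fun_prop)), ← intervalIntegral.integral_mul_const,
      intervalIntegral.integral_of_le zero_le_one, integral_Ioc_eq_integral_Ioo]
    refine integral_congr_ae (Eventually.of_forall fun x => ?_)
    simp only [← Complex.exp_add, hX]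
    congr 1
    push_cast
    ring
  have hcont : ContinuousAt (fun t : ℝ => Complex.exp (levyI t + t * levyC * Complex.I)) 0 := by
    have h0 : levyI 0 = 0 := by
      have := norm_levyI_le 0
      simpa using this
    have h1 : ContinuousAt levyI 0 := by
      rw [ContinuousAt, h0]
      refine squeeze_zero_norm norm_levyI_le ?_
      have : Continuous (fun t : ℝ => 2 * t ^ 2 * ∫ x, x ^ 2 ∂levyMeasure) := by fun_prop
      simpa using this.tendsto 0
    have h2 : ContinuousAt (fun t : ℝ => (t:ℂ) * levyC * Complex.I) 0 :=
      Continuous.continuousAt (by fun_prop)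
    exact (h1.add h2).cexp
  obtain ⟨G, hG, hlim⟩ := levy_continuity μ _ hcont hchar
  refine ⟨freq A thr, 0, Equiv.ofBijective _ (perm_bijective thr), fun _ => -levyC, G,
    freq_pos hA0 thr, fun k _ => freq_gap ε hε_pos thr hthr A hA0 hA k, inferInstance,
    ⟨|(-levyC)|, fun _ => le_rfl⟩, ?_, not_gaussian _ hG, ?_⟩
  · intro g
    refine (ProbabilityMeasure.tendsto_iff_forall_integral_tendsto.1 hlim g).congr fun N => ?_
    change ∫ y, g y ∂(P.map (X N)) = _
    rw [integral_map (hXc N).aemeasurable g.continuous.aestronglyMeasurable]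
    rfl
  · intro t
    rw [exponent_eq, ← hG t, charFun_apply_real]
end
end

section
/- For any sequence (ε_k) of positive reals tending to 0, there exist a sequence (n_k) of positive integers satisfying n_{k+1}/n_k ≥ 1 + ε_k for all k ≥ k₀ and a permutation σ of the positive integers such that limsup_{N→∞} ( Σ_{k=1}^N cos(2π n_{σ(k)} x) ) / √(2N log log N) = +∞ for Lebesgue-almost every x ∈ (0,1). -/
/-!
A block of `r` frequencies `m (r + j)`, `j < r`, has a cosine sum of at least `r / 2` on the peak set
`{x : {m x} < 1 / (16 r)}` (`block_sum_ge`). The construction proceeds in stages. In a stage with a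
large parameter `L = 2 ^ l` the `i`-th block has length `r_i` comparable to `L i`. After `i` blocks
about `N ≈ L i ^ 2` terms have been placed, so `r_i` is of order `√(L N)`, and `L` can be chosen to
dominate `log log N` throughout the stage. The peak sets have measures of order `1 / (L i)`, whose
sum over the stage can be made as large as desired, since the harmonic series diverges
(`exists_params`).

The factors `m` grow so fast that the peak sets of a stage are pairwise independent
(`integral_pk_mul_pk`), so most points lie in many of them. The sum of all earlier terms could spoil
a peak, but these terms are orthogonal on the peak set (`integral_sum_sq_mul_pk`), so that their sum
has typical size `√N` there, which is small compared with `r_i`. Hence all points outside a set of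
small measure see, at the end of some block of the stage, a partial sum of at least `r_i / 4`
(`stage_bound`). With exceptional sets of measure at most `2 ^ (-s)` in stage `s`, the Borel–Cantelli
lemma gives the result.

The ratios inside a block are only about `1 + 1 / (2 r)`, which the gap condition allows only where
`ε k` is small enough. Therefore each stage of the sequence `n` starts with sufficiently many lacunary
fillers, and the permutation moves the fillers of each stage behind its long blocks
(`Layout.perm`), so that the number of terms placed before the long blocks does not depend on the
number of fillers of the stage.
-/

open MeasureTheory Filter Real Topology

noncomputable section

/-! ### Peak indicators and their independence -/

/-- The indicator of the peak set `{x : {m x} < 1 / D}`, where `{·}` is the fractional part. It has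
period `1 / m` and mean `1 / D`. -/
def pk (m D : ℕ) (x : ℝ) : ℝ := if Int.fract ((m : ℝ) * x) < 1 / (D : ℝ) then 1 else 0

lemma pk_nonneg (m D : ℕ) (x : ℝ) : 0 ≤ pk m D x := by
  unfold pk; split_ifs <;> norm_num

lemma pk_le_one (m D : ℕ) (x : ℝ) : pk m D x ≤ 1 := by
  unfold pk; split_ifs <;> norm_num

lemma abs_pk_le_one (m D : ℕ) (x : ℝ) : |pk m D x| ≤ 1 := by
  rw [abs_of_nonneg (pk_nonneg m D x)]; exact pk_le_one m D x

@[fun_prop]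
lemma measurable_pk (m D : ℕ) : Measurable (pk m D) := by
  unfold pk
  refine Measurable.ite ?_ measurable_const measurable_const
  exact measurableSet_lt (measurable_fract.comp (measurable_const.mul measurable_id)) measurable_const

lemma pk_sq (m D : ℕ) (x : ℝ) : pk m D x * pk m D x = pk m D x := by
  unfold pk; split_ifs <;> norm_num

lemma intervalIntegrable_of_bdd {f : ℝ → ℝ} (hf : Measurable f) {C : ℝ} (hC : ∀ x, |f x| ≤ C)
    (a b : ℝ) : IntervalIntegrable f volume a b := by
  refine (intervalIntegrable_const (c := C)).mono_fun hf.aestronglyMeasurable ?_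
  refine Eventually.of_forall fun x => ?_
  simp only [Real.norm_eq_abs]
  exact (hC x).trans (le_abs_self C)

lemma integral_congr_Ioo' {f g : ℝ → ℝ} {a b : ℝ} (hab : a ≤ b)
    (h : ∀ x ∈ Set.Ioo a b, f x = g x) : ∫ x in a..b, f x = ∫ x in a..b, g x := by
  rw [intervalIntegral.integral_of_le hab, intervalIntegral.integral_of_le hab,
    integral_Ioc_eq_integral_Ioo, integral_Ioc_eq_integral_Ioo]
  exact setIntegral_congr_fun measurableSet_Ioo h

/-- On `[0, 1]`, a function of `⌊m x⌋` and a `1`-periodic function of `m x` are independent. -/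
lemma integral_floor_mul_periodic (F : ℤ → ℝ) {g : ℝ → ℝ} (hg : Function.Periodic g 1)
    (hgm : Measurable g) {C : ℝ} (hC : ∀ x, |g x| ≤ C) (m : ℕ) (hm : 0 < m) :
    ∫ x in (0:ℝ)..1, F ⌊(m : ℝ) * x⌋ * g (m * x)
      = (1 / (m : ℝ) * ∑ k ∈ Finset.range m, F k) * ∫ x in (0:ℝ)..1, g x := by
  have hm' : (m : ℝ) ≠ 0 := by positivity
  have h1 := intervalIntegral.integral_comp_mul_left (a := 0) (b := 1)
    (fun y : ℝ => F ⌊y⌋ * g y) hm'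
  simp only [mul_zero, mul_one, smul_eq_mul] at h1
  rw [h1]
  have hae : ∀ k : ℕ, ∀ x ∈ Set.Ioo (k : ℝ) ((k + 1 : ℕ) : ℝ), F k * g x = F ⌊x⌋ * g x := by
    intro k x hx
    have : ⌊x⌋ = (k : ℤ) := by
      rw [Int.floor_eq_iff]; push_cast at hx ⊢; exact ⟨hx.1.le, hx.2⟩
    rw [this]
  have hFg : ∀ k < m, IntervalIntegrable (fun y : ℝ => F ⌊y⌋ * g y) volume
      ((k : ℕ) : ℝ) ((k + 1 : ℕ) : ℝ) := by
    intro k _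
    have := (intervalIntegrable_of_bdd hgm hC (k : ℝ) ((k + 1 : ℕ) : ℝ)).const_mul (F k)
    refine this.congr_uIoo ?_
    rw [Set.uIoo_of_le (by push_cast; linarith)]
    exact hae k
  have h2 := intervalIntegral.sum_integral_adjacent_intervals hFg
  simp only [Nat.cast_zero] at h2
  rw [← h2]
  have h3 : ∀ k ∈ Finset.range m, ∫ y in ((k : ℕ) : ℝ)..((k + 1 : ℕ) : ℝ), F ⌊y⌋ * g y
      = F k * ∫ x in (0:ℝ)..1, g x := by
    intro k _
    have : ∫ y in ((k : ℕ) : ℝ)..((k + 1 : ℕ) : ℝ), F k * g y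
        = ∫ y in ((k : ℕ) : ℝ)..((k + 1 : ℕ) : ℝ), F ⌊y⌋ * g y := by
      refine integral_congr_Ioo' ?_ ?_
      · push_cast; linarith
      · exact hae k
    rw [← this, intervalIntegral.integral_const_mul]
    have h4 := hg.intervalIntegral_add_eq (k : ℝ) 0
    push_cast
    rw [h4, zero_add]
  rw [Finset.sum_congr rfl h3, ← Finset.sum_mul]
  ring

lemma integral_pk_one (D : ℕ) (hD : 0 < D) : ∫ x in (0:ℝ)..1, pk 1 D x = 1 / D := by
  have hD1 : (1 : ℝ) ≤ D := by exact_mod_cast hD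
  have h0 : (0:ℝ) ≤ 1 / D := by positivity
  have h1 : 1 / (D:ℝ) ≤ 1 := by rw [div_le_one (by positivity)]; exact hD1
  have hi : ∀ a b, IntervalIntegrable (pk 1 D) volume a b :=
    intervalIntegrable_of_bdd (measurable_pk 1 D) (abs_pk_le_one 1 D)
  rw [← intervalIntegral.integral_add_adjacent_intervals (hi 0 (1 / D)) (hi (1 / D) 1)]
  have e1 : ∫ x in (0:ℝ)..(1 / D), pk 1 D x = ∫ x in (0:ℝ)..(1 / D), (1:ℝ) := by
    refine integral_congr_Ioo' h0 fun x hx => ?_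
    have : Int.fract x = x := Int.fract_eq_self.2 ⟨hx.1.le, hx.2.trans_le h1⟩
    simp only [pk, Nat.cast_one, one_mul, this, if_pos hx.2]
  have e2 : ∫ x in (1 / D : ℝ)..1, pk 1 D x = ∫ x in (1 / D : ℝ)..1, (0:ℝ) := by
    refine integral_congr_Ioo' h1 fun x hx => ?_
    have : Int.fract x = x := Int.fract_eq_self.2 ⟨h0.trans hx.1.le, hx.2⟩
    simp only [pk, Nat.cast_one, one_mul, this, if_neg (not_lt.2 hx.1.le)]
  rw [e1, e2]; simp

lemma periodic_pk_one (D : ℕ) : Function.Periodic (pk 1 D) 1 := by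
  intro x; simp [pk]

lemma pk_eq_comp (m D : ℕ) (x : ℝ) : pk m D x = pk 1 D (m * x) := by simp [pk]

lemma integral_pk (m D : ℕ) (hm : 0 < m) (hD : 0 < D) :
    ∫ x in (0:ℝ)..1, pk m D x = 1 / D := by
  have h := integral_floor_mul_periodic (fun _ => 1) (periodic_pk_one D) (measurable_pk 1 D)
    (abs_pk_le_one 1 D) m hm
  have hm' : (m : ℝ) ≠ 0 := by positivity
  simp only [one_mul, Finset.sum_const, Finset.card_range, nsmul_eq_mul, mul_one,
    ← pk_eq_comp, integral_pk_one D hD] at h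
  rw [h]; field_simp

/-- If `m = m₁ D₁ t`, then `pk m₁ D₁ x` is a function of `⌊m x⌋`: the peak set is a union of cells
of the grid of mesh `1 / (m₁ D₁)`, which the grid of mesh `1 / m` refines. -/
lemma pk_eq_floor (m₁ D₁ t : ℕ) (hD : 0 < D₁) (ht : 0 < t) (x : ℝ) :
    pk m₁ D₁ x
      = (fun k : ℤ => if (k / (t : ℤ)) % (D₁ : ℤ) = 0 then (1:ℝ) else 0)
          ⌊((m₁ * D₁ * t : ℕ) : ℝ) * x⌋ := by
  have hD' : (0 : ℝ) < D₁ := by exact_mod_cast hD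
  have ht' : (0 : ℝ) < t := by exact_mod_cast ht
  have h1 : ⌊((m₁ * D₁ * t : ℕ) : ℝ) * x⌋ / (t : ℤ) = ⌊(D₁ : ℝ) * (m₁ * x)⌋ := by
    rw [← Int.floor_div_natCast]
    congr 1; push_cast; field_simp
  have h2 : ⌊(D₁ : ℝ) * (m₁ * x)⌋ % (D₁ : ℤ) = ⌊(D₁ : ℝ) * Int.fract (m₁ * x)⌋ := by
    set y := (m₁ : ℝ) * x
    have hf0 := Int.fract_nonneg y
    have hf1 := Int.fract_lt_one y
    have : (D₁ : ℝ) * y = (D₁ : ℝ) * Int.fract y + ((D₁ * ⌊y⌋ : ℤ) : ℝ) := by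
      push_cast
      rw [← mul_add, Int.fract_add_floor]
    rw [this, Int.floor_add_intCast, Int.add_mul_emod_self_left]
    refine Int.emod_eq_of_lt ?_ ?_
    · exact Int.floor_nonneg.2 (by positivity)
    · rw [Int.floor_lt]; push_cast; nlinarith
  simp only [h1, h2, pk, Int.floor_eq_zero_iff, Set.mem_Ico]
  have hf0 := Int.fract_nonneg ((m₁ : ℝ) * x)
  congr 1
  rw [lt_div_iff₀ hD', mul_comm, eq_iff_iff]
  exact ⟨fun h => ⟨by positivity, h⟩, fun h => h.2⟩

/-- Peaks at well separated scales are independent, by `pk_eq_floor` and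
`integral_floor_mul_periodic`. -/
lemma integral_pk_mul_pk (m₁ D₁ m D : ℕ) (hm₁ : 0 < m₁) (hD₁ : 0 < D₁) (hm : 0 < m) (hD : 0 < D)
    (hdvd : m₁ * D₁ ∣ m) :
    ∫ x in (0:ℝ)..1, pk m₁ D₁ x * pk m D x = (1 / D₁) * (1 / D) := by
  obtain ⟨t, rfl⟩ := hdvd
  have ht : 0 < t := Nat.pos_of_mul_pos_left hm
  set F : ℤ → ℝ := fun k : ℤ => if (k / (t : ℤ)) % (D₁ : ℤ) = 0 then (1:ℝ) else 0 with hF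
  have hpk : ∀ x, pk m₁ D₁ x = F ⌊((m₁ * D₁ * t : ℕ) : ℝ) * x⌋ := pk_eq_floor m₁ D₁ t hD₁ ht
  have h := integral_floor_mul_periodic F (periodic_pk_one D) (measurable_pk 1 D)
    (abs_pk_le_one 1 D) _ hm
  have h' := integral_floor_mul_periodic F (g := fun _ => 1) (fun _ => rfl) measurable_const
    (C := 1) (by simp) _ hm
  simp only [mul_one, ← hpk, intervalIntegral.integral_const, sub_zero, one_smul,
    integral_pk _ _ hm₁ hD₁] at h'
  simp only [← hpk, ← pk_eq_comp, integral_pk_one _ hD, ← h'] at h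
  exact h

/-! ### Orthogonality on a peak set -/

/-- Frequencies that are not multiples of `m` are orthogonal to `pk m D`. Since `pk m D` has period
`1 / m`, translating by `1 / m` rotates the vector of the cosine and sine integrals by the angle
`2π a / m`, which is not a multiple of `2π`; a vector fixed by such a rotation vanishes. -/
lemma integral_cos_mul_pk (a : ℤ) (m D : ℕ) (hm : 0 < m) (ha : ¬ (m : ℤ) ∣ a) :
    ∫ x in (0:ℝ)..1, cos (2 * π * a * x) * pk m D x = 0 := by
  have hm' : (m : ℝ) ≠ 0 := by positivity
  have hpkp : ∀ x, pk m D (x + 1 / m) = pk m D x := by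
    intro x; simp only [pk]
    rw [mul_add, mul_one_div_cancel hm', Int.fract_add_one]
  have hpk1 : ∀ x, pk m D (x + 1) = pk m D x := by
    intro x; simp only [pk]
    rw [mul_add, mul_one, Int.fract_add_natCast]
  set θ : ℝ := 2 * π * a / m with hθ
  have hic : IntervalIntegrable (fun x => cos (2 * π * a * x) * pk m D x) volume 0 1 :=
    intervalIntegrable_of_bdd (by fun_prop) (C := 1) (fun x => by
      rw [abs_mul]; exact mul_le_one₀ (abs_cos_le_one _) (abs_nonneg _) (abs_pk_le_one ..)) _ _
  have his : IntervalIntegrable (fun x => sin (2 * π * a * x) * pk m D x) volume 0 1 :=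
    intervalIntegrable_of_bdd (by fun_prop) (C := 1) (fun x => by
      rw [abs_mul]; exact mul_le_one₀ (abs_sin_le_one _) (abs_nonneg _) (abs_pk_le_one ..)) _ _
  set Ic := ∫ x in (0:ℝ)..1, cos (2 * π * a * x) * pk m D x with hIc
  set Is := ∫ x in (0:ℝ)..1, sin (2 * π * a * x) * pk m D x with hIs
  have shift : ∀ f : ℝ → ℝ, Function.Periodic f 1 →
      ∫ x in (0:ℝ)..1, f x = ∫ x in (0:ℝ)..1, f (x + 1 / m) := by
    intro f hf
    rw [intervalIntegral.integral_comp_add_right]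
    have := hf.intervalIntegral_add_eq 0 (0 + 1 / (m:ℝ))
    rw [zero_add] at this
    rw [this]; congr 1; ring
  have ec : Ic = cos θ * Ic - sin θ * Is := by
    refine (shift (fun x => cos (2 * π * a * x) * pk m D x) ?_).trans ?_
    on_goal 2 => rw [hIc, hIs,
      ← intervalIntegral.integral_const_mul,
      ← intervalIntegral.integral_const_mul, ← intervalIntegral.integral_sub
      (hic.const_mul _) (his.const_mul _)]
    on_goal 2 =>
      refine intervalIntegral.integral_congr fun x _ => ?_
      have : 2 * π * a * (x + 1 / m) = 2 * π * a * x + θ := by rw [hθ]; ring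
      simp only [hpkp, this, cos_add]; ring
    · intro x
      have : 2 * π * a * (x + 1) = 2 * π * a * x + a * (2 * π) := by ring
      simp only [hpk1, this, cos_add_int_mul_two_pi]
  have es : Is = sin θ * Ic + cos θ * Is := by
    refine (shift (fun x => sin (2 * π * a * x) * pk m D x) ?_).trans ?_
    on_goal 2 => rw [hIc, hIs,
      ← intervalIntegral.integral_const_mul,
      ← intervalIntegral.integral_const_mul, ← intervalIntegral.integral_add
      (hic.const_mul _) (his.const_mul _)]
    on_goal 2 =>
      refine intervalIntegral.integral_congr fun x _ => ?_
      have : 2 * π * a * (x + 1 / m) = 2 * π * a * x + θ := by rw [hθ]; ring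
      simp only [hpkp, this, sin_add]; ring
    · intro x
      have : 2 * π * a * (x + 1) = 2 * π * a * x + a * (2 * π) := by ring
      simp only [hpk1, this, sin_add_int_mul_two_pi]
  have hcos : cos θ ≠ 1 := by
    intro h
    obtain ⟨k, hk⟩ := (Real.cos_eq_one_iff θ).1 h
    apply ha
    refine ⟨k, ?_⟩
    rw [hθ, eq_div_iff hm'] at hk
    have : ((m * k : ℤ) : ℝ) = a := by
      push_cast
      have hpi := Real.two_pi_pos
      have : 2 * π * (m * k) = 2 * π * a := by linarith
      exact mul_left_cancel₀ hpi.ne' this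
    exact_mod_cast this.symm
  have key : (1 - cos θ) * (Ic ^ 2 + Is ^ 2) = 0 := by linear_combination Ic * ec + Is * es
  rcases mul_eq_zero.1 key with h | h
  · exact absurd (by linarith) hcos
  · nlinarith [sq_nonneg Ic, sq_nonneg Is]

lemma abs_sum_cos_le (ν : ℕ → ℕ) (N : ℕ) (x : ℝ) :
    |∑ k ∈ Finset.range N, cos (2 * π * (ν k) * x)| ≤ N := by
  refine (Finset.abs_sum_le_sum_abs _ _).trans ?_
  calc _ ≤ ∑ k ∈ Finset.range N, (1:ℝ) := Finset.sum_le_sum fun _ _ => abs_cos_le_one _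
    _ = N := by simp

/-- The second moment over a peak set of a cosine sum with frequencies below `m / 2`. It equals the
second moment over `[0, 1]` times the measure of the peak set, because all the frequencies
`ν k ± ν l` that occur in the square are smaller than `m` in absolute value. -/
lemma integral_sum_sq_mul_pk (ν : ℕ → ℕ) (hν : Function.Injective ν) (hpos : ∀ k, 0 < ν k)
    (N m D : ℕ) (hm : 0 < m) (hD : 0 < D) (hlt : ∀ k < N, 2 * ν k < m) :
    ∫ x in (0:ℝ)..1, (∑ k ∈ Finset.range N, cos (2 * π * (ν k) * x)) ^ 2 * pk m D x
      = N / 2 * (1 / D) := by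
  have hI : ∀ a : ℤ, IntervalIntegrable (fun x => cos (2 * π * a * x) * pk m D x) volume 0 1 :=
    fun a => intervalIntegrable_of_bdd (by fun_prop) (C := 1) (fun x => by
      rw [abs_mul]; exact mul_le_one₀ (abs_cos_le_one _) (abs_nonneg _) (abs_pk_le_one ..)) _ _
  have hexp : ∀ x, (∑ k ∈ Finset.range N, cos (2 * π * (ν k) * x)) ^ 2 * pk m D x
      = ∑ k ∈ Finset.range N, ∑ l ∈ Finset.range N,
        (1 / 2 * (cos (2 * π * ((ν k - ν l : ℤ) : ℤ) * x) * pk m D x)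
          + 1 / 2 * (cos (2 * π * ((ν k + ν l : ℤ) : ℤ) * x) * pk m D x)) := by
    intro x
    rw [sq, Finset.sum_mul_sum, Finset.sum_mul]
    refine Finset.sum_congr rfl fun k _ => ?_
    rw [Finset.sum_mul]
    refine Finset.sum_congr rfl fun l _ => ?_
    push_cast
    have e1 : 2 * π * ((ν k : ℝ) - ν l) * x = 2 * π * ν k * x - 2 * π * ν l * x := by ring
    have e2 : 2 * π * ((ν k : ℝ) + ν l) * x = 2 * π * ν k * x + 2 * π * ν l * x := by ring
    rw [e1, e2, cos_sub, cos_add]; ring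
  simp_rw [hexp]
  have hI2 : ∀ k l : ℕ, IntervalIntegrable (fun x =>
      (1 / 2 * (cos (2 * π * ((ν k - ν l : ℤ) : ℤ) * x) * pk m D x)
          + 1 / 2 * (cos (2 * π * ((ν k + ν l : ℤ) : ℤ) * x) * pk m D x))) volume 0 1 :=
    fun k l => ((hI _).const_mul _).add ((hI _).const_mul _)
  rw [intervalIntegral.integral_finsetSum fun k _ => by
    have := IntervalIntegrable.sum (Finset.range N) (fun l _ => hI2 k l)
    simpa only [Finset.sum_fn] using this]
  have hin : ∀ k ∈ Finset.range N, ∫ x in (0:ℝ)..1, ∑ l ∈ Finset.range N,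
        (1 / 2 * (cos (2 * π * ((ν k - ν l : ℤ) : ℤ) * x) * pk m D x)
          + 1 / 2 * (cos (2 * π * ((ν k + ν l : ℤ) : ℤ) * x) * pk m D x)) = 1 / 2 * (1 / D) := by
    intro k hk
    rw [intervalIntegral.integral_finsetSum fun l _ => hI2 k l]
    rw [Finset.sum_eq_single_of_mem k hk]
    · rw [intervalIntegral.integral_add ((hI _).const_mul _) ((hI _).const_mul _),
        intervalIntegral.integral_const_mul, intervalIntegral.integral_const_mul,
        integral_cos_mul_pk (ν k + ν k) m D hm]
      · simp [integral_pk m D hm hD]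
      · intro hd
        have h1 := hlt k (Finset.mem_range.1 hk)
        have h2 := hpos k
        have := Int.le_of_dvd (by omega) hd
        omega
    · intro l hl hkl
      have h1 := hlt k (Finset.mem_range.1 hk)
      have h1' := hlt l (Finset.mem_range.1 hl)
      have h2 := hpos k
      have h3 : ν k ≠ ν l := fun h => hkl (hν h).symm
      rw [intervalIntegral.integral_add ((hI _).const_mul _) ((hI _).const_mul _),
        intervalIntegral.integral_const_mul, intervalIntegral.integral_const_mul,
        integral_cos_mul_pk _ m D hm, integral_cos_mul_pk _ m D hm]
      · simp
      · intro hd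
        have := Int.le_of_dvd (by omega) hd
        omega
      · intro hd
        have := Int.eq_zero_of_abs_lt_dvd hd (by rw [abs_lt]; omega)
        omega
  rw [Finset.sum_congr rfl hin]
  simp; ring

/-- On the peak set every phase `2π m (r + j) x` with `j < r` is, modulo `2π`, between `0` and
`2π · 2r / (16 r) = π / 4`, so every cosine of the block is at least `1 / 2`. -/
lemma block_sum_ge (m r : ℕ) (hr : 0 < r) (x : ℝ) (hx : pk m (16 * r) x = 1) :
    (r : ℝ) / 2 ≤ ∑ j ∈ Finset.range r, cos (2 * π * ((m * (r + j) : ℕ) : ℝ) * x) := by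
  have hr' : (0 : ℝ) < r := by exact_mod_cast hr
  have hf : Int.fract ((m : ℝ) * x) < 1 / ((16 * r : ℕ) : ℝ) := by
    by_contra h
    simp [pk] at hx h
    linarith
  have hf0 := Int.fract_nonneg ((m : ℝ) * x)
  set f := Int.fract ((m : ℝ) * x) with hfd
  have : ∀ j ∈ Finset.range r, (1 / 2 : ℝ) ≤ cos (2 * π * ((m * (r + j) : ℕ) : ℝ) * x) := by
    intro j hj
    have hj' : (j : ℝ) < r := by exact_mod_cast Finset.mem_range.1 hj
    have e : 2 * π * ((m * (r + j) : ℕ) : ℝ) * x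
        = 2 * π * (r + j) * f + (((r + j : ℕ) : ℤ) * ⌊(m : ℝ) * x⌋ : ℤ) * (2 * π) := by
      have := Int.fract_add_floor ((m : ℝ) * x)
      push_cast
      rw [← hfd] at this
      linear_combination -(2 * π * (r + j)) * this
    rw [e, cos_add_int_mul_two_pi, ← cos_pi_div_three]
    have hpi := Real.pi_pos
    have hj0 : (0:ℝ) ≤ j := by positivity
    have hb : (r + j : ℝ) * f ≤ 1 / 8 := by
      push_cast at hf
      rw [lt_div_iff₀ (by positivity)] at hf
      nlinarith
    refine cos_le_cos_of_nonneg_of_le_pi (by positivity) (by linarith) ?_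
    nlinarith
  calc (r : ℝ) / 2 = ∑ j ∈ Finset.range r, (1 / 2 : ℝ) := by simp; ring
    _ ≤ _ := Finset.sum_le_sum this

/-! ### Block lengths and the one-stage estimate -/

/-- The length of the `i`-th long block in a stage with parameter `l`: `2 ^ l` times the largest
power of two not exceeding `i + 1`. It is comparable to `2 ^ l * (i + 1)`; being a power of two makes
the divisibility in `integral_pk_mul_pk` automatic. -/
def rr (l i : ℕ) : ℕ := 2 ^ (l + Nat.log 2 (i + 1))

/-- The total length of the first `i` long blocks in a stage with parameter `l`. -/
def RR (l i : ℕ) : ℕ := ∑ u ∈ Finset.range i, rr l u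

lemma rr_pos (l i : ℕ) : 0 < rr l i := by unfold rr; positivity

lemma RR_zero (l : ℕ) : RR l 0 = 0 := by simp [RR]

lemma RR_succ (l i : ℕ) : RR l (i + 1) = RR l i + rr l i := by
  simp [RR, Finset.sum_range_succ]

lemma rr_le (l i : ℕ) : rr l i ≤ 2 ^ l * (i + 1) := by
  unfold rr
  rw [pow_add]
  exact Nat.mul_le_mul_left _ (Nat.pow_log_le_self 2 (by omega))

lemma le_rr (l i : ℕ) : 2 ^ l * (i + 1) ≤ 2 * rr l i := by
  unfold rr
  rw [pow_add]
  have := Nat.lt_pow_succ_log_self (b := 2) (by norm_num) (i + 1)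
  rw [pow_succ] at this
  calc 2 ^ l * (i + 1) ≤ 2 ^ l * (2 ^ Nat.log 2 (i + 1) * 2) := Nat.mul_le_mul_left _ this.le
    _ = _ := by ring

lemma RR_le (l i : ℕ) : RR l i ≤ 2 ^ l * i ^ 2 := by
  induction i with
  | zero => simp [RR]
  | succ i ih =>
    rw [RR_succ]
    calc _ ≤ 2 ^ l * i ^ 2 + 2 ^ l * (i + 1) := add_le_add ih (rr_le l i)
      _ ≤ _ := by rw [← mul_add]; exact Nat.mul_le_mul_left _ (by nlinarith)

/-- The sum of the first `N` cosines with frequencies `ν 0, ν 1, …`. -/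
def SS (ν : ℕ → ℕ) (N : ℕ) (x : ℝ) : ℝ := ∑ k ∈ Finset.range N, cos (2 * π * (ν k) * x)

@[fun_prop]
lemma measurable_SS (ν : ℕ → ℕ) (N : ℕ) : Measurable (SS ν N) := by unfold SS; fun_prop

lemma abs_SS_le (ν : ℕ → ℕ) (N : ℕ) (x : ℝ) : |SS ν N x| ≤ N := abs_sum_cos_le ν N x

/-- A stage consists of `P` earlier terms followed by `I` long blocks. Outside a set of small
measure, at the end of some long block the partial sum is at least a quarter of the length of that
block.

Let `X` be the number of peaks of the stage; its mean is `p`, and by pairwise independence its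
variance is at most `p`. If a peak of block `i` does not bring the partial sum up to `rr l i / 4`,
then the sum `T` of the earlier terms is at most `-rr l i / 4`, so `16 T ^ 2 / (rr l i) ^ 2 ≥ 1`. The
number of such peaks is thus bounded by a function `W`, and the orthogonality relation gives `W` the
mean at most `64 p / 2 ^ l`. On the exceptional set all peaks are of this kind, that is `X ≤ W`, so
either `X ≤ p / 2` or `W ≥ p / 2`. -/
lemma stage_bound (ν : ℕ → ℕ) (hν : Function.Injective ν) (hpos : ∀ k, 0 < ν k)
    (P l I : ℕ) (hP : P ≤ 2 ^ l) (hI : 0 < I) (m : ℕ → ℕ) (hm : ∀ i, 0 < m i)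
    (hlt : ∀ i < I, ∀ k < P + RR l i, 2 * ν k < m i)
    (hblk : ∀ i < I, ∀ j < rr l i, ν (P + RR l i + j) = m i * (rr l i + j))
    (hdvd : ∀ i j, i < j → j < I → m i * (16 * rr l i) ∣ m j)
    (p : ℝ) (hp : p = ∑ i ∈ Finset.range I, 1 / ((16 * rr l i : ℕ) : ℝ)) :
    volume.restrict (Set.Ioo (0:ℝ) 1)
      {x | ∀ i < I, SS ν (P + RR l (i + 1)) x < rr l i / 4}
      ≤ ENNReal.ofReal (4 / p + 128 / 2 ^ l) := by
  have hr : ∀ i, (0:ℝ) < rr l i := fun i => by exact_mod_cast rr_pos l i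
  have hD : ∀ i, 0 < 16 * rr l i := fun i => by have := rr_pos l i; omega
  have hp0 : 0 < p := by
    rw [hp]
    refine Finset.sum_pos (fun i _ => ?_) ⟨0, by simpa using hI⟩
    have := hr i; push_cast; positivity
  set q : ℕ → ℝ → ℝ := fun i x => pk (m i) (16 * rr l i) x with hq
  set X : ℝ → ℝ := fun x => ∑ i ∈ Finset.range I, q i x with hX
  set W : ℝ → ℝ := fun x => ∑ i ∈ Finset.range I,
    16 / (rr l i : ℝ) ^ 2 * (SS ν (P + RR l i) x ^ 2 * q i x) with hW
  have hqm : ∀ i, Measurable (q i) := fun i => measurable_pk _ _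
  have hqI : ∀ i, IntervalIntegrable (q i) volume 0 1 := fun i =>
    intervalIntegrable_of_bdd (hqm i) (abs_pk_le_one _ _) _ _
  have hqqI : ∀ i j, IntervalIntegrable (fun x => q i x * q j x) volume 0 1 := fun i j =>
    intervalIntegrable_of_bdd ((hqm i).mul (hqm j)) (C := 1) (fun x => by
      rw [Pi.mul_apply, abs_mul]
      exact mul_le_one₀ (abs_pk_le_one ..) (abs_nonneg _) (abs_pk_le_one ..)) _ _
  have hTI : ∀ i, IntervalIntegrable (fun x => SS ν (P + RR l i) x ^ 2 * q i x) volume 0 1 :=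
    fun i => intervalIntegrable_of_bdd (((measurable_SS _ _).pow_const 2).mul (hqm i))
      (C := ((P + RR l i : ℕ) : ℝ) ^ 2) (fun x => by
        rw [Pi.mul_apply, abs_mul, abs_pow]
        have h1 := abs_SS_le ν (P + RR l i) x
        have h2 := abs_pk_le_one (m i) (16 * rr l i) x
        calc _ ≤ ((P + RR l i : ℕ) : ℝ) ^ 2 * 1 := by gcongr
          _ = _ := mul_one _) _ _
  have hXI : IntervalIntegrable X volume 0 1 := by
    have := IntervalIntegrable.sum (Finset.range I) (fun i _ => hqI i)
    simpa only [Finset.sum_fn] using this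
  have hXX : ∀ x, X x * X x = ∑ i ∈ Finset.range I, ∑ j ∈ Finset.range I, q i x * q j x :=
    fun x => Finset.sum_mul_sum ..
  have hXXin : ∀ i, IntervalIntegrable (fun x => ∑ j ∈ Finset.range I, q i x * q j x)
      volume 0 1 := by
    intro i
    have := IntervalIntegrable.sum (Finset.range I) (fun j _ => hqqI i j)
    simpa only [Finset.sum_fn] using this
  have hXXI : IntervalIntegrable (fun x => X x * X x) volume 0 1 := by
    simp_rw [hXX]
    have := IntervalIntegrable.sum (Finset.range I) (fun i _ => hXXin i)
    simpa only [Finset.sum_fn] using this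
  have hWin : ∀ i, IntervalIntegrable (fun x => 16 / (rr l i : ℝ) ^ 2 *
      (SS ν (P + RR l i) x ^ 2 * q i x)) volume 0 1 := fun i => (hTI i).const_mul _
  have hWI : IntervalIntegrable W volume 0 1 := by
    have := IntervalIntegrable.sum (Finset.range I) (fun i _ => hWin i)
    simpa only [Finset.sum_fn] using this
  have eX : ∫ x in (0:ℝ)..1, X x = p := by
    rw [hX, intervalIntegral.integral_finsetSum fun i _ => hqI i, hp]
    exact Finset.sum_congr rfl fun i _ => integral_pk _ _ (hm i) (hD i)
  have epair : ∀ i ∈ Finset.range I, ∀ j ∈ Finset.range I, i ≠ j →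
      ∫ x in (0:ℝ)..1, q i x * q j x
        = 1 / ((16 * rr l i : ℕ) : ℝ) * (1 / ((16 * rr l j : ℕ) : ℝ)) := by
    intro i hi j hj hij
    rw [Finset.mem_range] at hi hj
    rcases lt_or_gt_of_ne hij with h | h
    · exact integral_pk_mul_pk _ _ _ _ (hm i) (hD i) (hm j) (hD j) (hdvd i j h hj)
    · rw [mul_comm (1 / _), ← integral_pk_mul_pk _ _ _ _ (hm j) (hD j) (hm i) (hD i)
        (hdvd j i h hi)]
      simp only [hq, mul_comm]
  have eXX : ∫ x in (0:ℝ)..1, X x * X x ≤ p * p + p := by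
    simp_rw [hXX]
    rw [intervalIntegral.integral_finsetSum fun i _ => hXXin i]
    have : p * p + p = ∑ i ∈ Finset.range I, (∑ j ∈ Finset.range I,
        1 / ((16 * rr l i : ℕ) : ℝ) * (1 / ((16 * rr l j : ℕ) : ℝ))
          + 1 / ((16 * rr l i : ℕ) : ℝ)) := by
      rw [Finset.sum_add_distrib, ← Finset.sum_mul_sum, ← hp]
    rw [this]
    refine Finset.sum_le_sum fun i hi => ?_
    rw [intervalIntegral.integral_finsetSum fun j _ => hqqI i j]
    have hle : ∀ j ∈ Finset.range I, ∫ x in (0:ℝ)..1, q i x * q j x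
        ≤ 1 / ((16 * rr l i : ℕ) : ℝ) * (1 / ((16 * rr l j : ℕ) : ℝ))
          + if j = i then 1 / ((16 * rr l i : ℕ) : ℝ) else 0 := by
      intro j hj
      by_cases hij : i = j
      · subst hij
        have h1 : ∫ x in (0:ℝ)..1, q i x * q i x = 1 / ((16 * rr l i : ℕ) : ℝ) := by
          simp only [hq, pk_sq]
          exact integral_pk _ _ (hm i) (hD i)
        rw [h1, if_pos rfl]
        have : (0:ℝ) ≤ 1 / ((16 * rr l i : ℕ) : ℝ) * (1 / ((16 * rr l i : ℕ) : ℝ)) := by positivity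
        linarith
      · rw [epair i hi j hj hij, if_neg (Ne.symm hij), add_zero]
    refine (Finset.sum_le_sum hle).trans ?_
    rw [Finset.sum_add_distrib, Finset.sum_ite_eq' , if_pos hi]
  have eW : ∫ x in (0:ℝ)..1, W x ≤ 64 / 2 ^ l * p := by
    rw [hW, intervalIntegral.integral_finsetSum fun i _ => hWin i, hp, Finset.mul_sum]
    refine Finset.sum_le_sum fun i hi => ?_
    rw [intervalIntegral.integral_const_mul]
    have h1 := integral_sum_sq_mul_pk ν hν hpos (P + RR l i) (m i) (16 * rr l i) (hm i) (hD i)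
      (hlt i (Finset.mem_range.1 hi))
    change 16 / (rr l i : ℝ) ^ 2 * (∫ x in (0:ℝ)..1, (∑ k ∈ Finset.range (P + RR l i),
      cos (2 * π * (ν k) * x)) ^ 2 * pk (m i) (16 * rr l i) x) ≤ _
    rw [h1, ← mul_assoc]
    refine mul_le_mul_of_nonneg_right ?_ (by positivity)
    have hN : ((P + RR l i : ℕ) : ℝ) ≤ 2 * 2 ^ l * ((i : ℝ) + 1) ^ 2 := by
      have h2 := RR_le l i
      have h3 : P + RR l i ≤ 2 * 2 ^ l * (i + 1) ^ 2 := by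
        have : 2 ^ l * i ^ 2 + 2 ^ l ≤ 2 * 2 ^ l * (i + 1) ^ 2 := by
          have := Nat.zero_le (2 ^ l * (i ^ 2 + 4 * i + 1))
          nlinarith
        omega
      exact_mod_cast h3
    have hr2 : 2 ^ l * ((i : ℝ) + 1) ≤ 2 * rr l i := by exact_mod_cast le_rr l i
    have hri := hr i
    rw [div_mul_div_comm, div_le_div_iff₀ (by positivity) (by positivity)]
    have h4 : (2 ^ l * ((i : ℝ) + 1)) ^ 2 ≤ (2 * rr l i) ^ 2 := by gcongr
    have hl : (0:ℝ) < 2 ^ l := by positivity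
    calc 16 * ((P + RR l i : ℕ) : ℝ) * 2 ^ l
        ≤ 16 * (2 * 2 ^ l * ((i : ℝ) + 1) ^ 2) * 2 ^ l := by gcongr
      _ = 32 * (2 ^ l * ((i : ℝ) + 1)) ^ 2 := by ring
      _ ≤ 32 * (2 * rr l i) ^ 2 := by gcongr
      _ = _ := by ring
  -- On the exceptional set either summand of `Q` may be the one that is at least one; the bound is
  -- then the Markov inequality for `Q`, which combines Chebyshev for `X` and Markov for `W`.
  set Q : ℝ → ℝ := fun x => 4 / p ^ 2 * (X x * X x - 2 * p * X x + p ^ 2) + 2 / p * W x with hQ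
  have hQ1 : IntervalIntegrable (fun x => X x * X x - 2 * p * X x + p ^ 2) volume 0 1 :=
    (hXXI.sub (hXI.const_mul _)).add intervalIntegrable_const
  have hQI : IntervalIntegrable Q volume 0 1 := (hQ1.const_mul _).add (hWI.const_mul _)
  have eQ : ∫ x in (0:ℝ)..1, Q x ≤ 4 / p + 128 / 2 ^ l := by
    rw [hQ, intervalIntegral.integral_add (hQ1.const_mul _) (hWI.const_mul _),
      intervalIntegral.integral_const_mul, intervalIntegral.integral_const_mul,
      intervalIntegral.integral_add (hXXI.sub (hXI.const_mul _)) intervalIntegrable_const,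
      intervalIntegral.integral_sub hXXI (hXI.const_mul _), intervalIntegral.integral_const_mul,
      eX, intervalIntegral.integral_const]
    simp only [sub_zero, one_smul]
    have a1 : 4 / p ^ 2 * ((∫ x in (0:ℝ)..1, X x * X x) - 2 * p * p + p ^ 2) ≤ 4 / p ^ 2 * p := by
      gcongr; nlinarith
    have a2 : 2 / p * (∫ x in (0:ℝ)..1, W x) ≤ 2 / p * (64 / 2 ^ l * p) := by gcongr
    have a3 : 4 / p ^ 2 * p = 4 / p := by field_simp
    have a4 : 2 / p * (64 / 2 ^ l * p) = 128 / 2 ^ l := by field_simp; norm_num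
    linarith
  have hW0 : ∀ x, 0 ≤ W x := fun x => Finset.sum_nonneg fun i _ =>
    mul_nonneg (by positivity) (mul_nonneg (sq_nonneg _) (pk_nonneg _ _ _))
  have hXsq : ∀ x, X x * X x - 2 * p * X x + p ^ 2 = (X x - p) ^ 2 := fun x => by ring
  have hQ0 : ∀ x, 0 ≤ Q x := fun x => by
    simp only [hQ, hXsq]
    have := hW0 x
    positivity
  have hsub : {x | ∀ i < I, SS ν (P + RR l (i + 1)) x < rr l i / 4} ⊆ {x | 1 ≤ Q x} := by
    intro x hx
    have hXW : X x ≤ W x := by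
      refine Finset.sum_le_sum fun i hi => ?_
      rw [Finset.mem_range] at hi
      by_cases h1 : q i x = 1
      · have hs := hx i hi
        have hb := block_sum_ge (m i) (rr l i) (rr_pos l i) x h1
        have hsplit : SS ν (P + RR l (i + 1)) x = SS ν (P + RR l i) x
            + ∑ j ∈ Finset.range (rr l i),
              cos (2 * π * ((m i * (rr l i + j) : ℕ) : ℝ) * x) := by
          unfold SS
          rw [RR_succ, ← add_assoc, Finset.sum_range_add]
          congr 1
          refine Finset.sum_congr rfl fun j hj => ?_
          rw [hblk i hi j (Finset.mem_range.1 hj)]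
        have hri := hr i
        have hT : (rr l i : ℝ) / 4 ≤ - SS ν (P + RR l i) x := by linarith
        have hT2 : ((rr l i : ℝ) / 4) ^ 2 ≤ (- SS ν (P + RR l i) x) ^ 2 := by gcongr
        rw [h1, mul_one, div_mul_eq_mul_div, le_div_iff₀ (by positivity)]
        nlinarith
      · have h0 : q i x = 0 := by
          simp only [hq, pk] at h1 ⊢
          split_ifs at h1 ⊢ <;> simp_all
        rw [h0]; simp
    change 1 ≤ Q x
    simp only [hQ, hXsq]
    rcases le_or_gt (X x) (p / 2) with h | h
    · have h1 : (p / 2) ^ 2 ≤ (X x - p) ^ 2 := by nlinarith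
      have h2 : 4 / p ^ 2 * (p / 2) ^ 2 ≤ 4 / p ^ 2 * (X x - p) ^ 2 := by gcongr
      have h3 : 4 / p ^ 2 * (p / 2) ^ 2 = 1 := by field_simp; norm_num
      have h4 : 0 ≤ 2 / p * W x := mul_nonneg (by positivity) (hW0 x)
      linarith
    · have h1 : 2 / p * (p / 2) ≤ 2 / p * W x := by gcongr; linarith
      have h3 : 2 / p * (p / 2) = 1 := by field_simp
      have h4 : 0 ≤ 4 / p ^ 2 * (X x - p) ^ 2 := by positivity
      linarith
  refine (measure_mono hsub).trans ?_
  have hQI' : Integrable Q (volume.restrict (Set.Ioo (0:ℝ) 1)) :=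
    ((intervalIntegrable_iff_integrableOn_Ioo_of_le zero_le_one).1 hQI)
  have hmk := mul_meas_ge_le_integral_of_nonneg (Eventually.of_forall hQ0) hQI' 1
  rw [one_mul, ← integral_Ioc_eq_integral_Ioo,
    ← intervalIntegral.integral_of_le zero_le_one] at hmk
  rw [← ofReal_measureReal]
  exact ENNReal.ofReal_le_ofReal (hmk.trans eQ)

/-! ### Choice of the parameters of a stage -/

/-- Given the stage `s` and the number `P` of terms already placed, there are a parameter `l` and a
number `I` of long blocks such that the exceptional set of `stage_bound` has measure at most
`2 ^ (-s)`, while a quarter of each block length exceeds `s √(2 N log log N)` at the end `N` of the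
block.

With `L = 2 ^ l`, the choice is `I = 2 ^ (K L)` with `K = 256 · 2 ^ s`. The sum of `1 / (16 rr l i)` is
then at least `K / 32`, by comparison with the harmonic series. On the other hand `N ≤ 2 L (i + 1) ^ 2`
and `log N ≤ (2 K + 2) L`, so `log log N` is `O(√L)`; hence `256 s ^ 2 log log N ≤ L` for large `l`. -/
lemma exists_params (s P : ℕ) : ∃ l I : ℕ, 0 < I ∧ P ≤ 2 ^ l ∧ s ≤ 2 ^ l ∧
    (4 / (∑ i ∈ Finset.range I, 1 / ((16 * rr l i : ℕ) : ℝ)) + 128 / 2 ^ l ≤ (1 / 2 : ℝ) ^ s) ∧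
    ∀ i < I, 0 < √(2 * ((P + RR l (i + 1) : ℕ) : ℝ) * log (log ((P + RR l (i + 1) : ℕ) : ℝ))) ∧
      (s : ℝ) * √(2 * ((P + RR l (i + 1) : ℕ) : ℝ) * log (log ((P + RR l (i + 1) : ℕ) : ℝ)))
        ≤ rr l i / 4 := by
  set K : ℕ := 256 * 2 ^ s with hK
  set l : ℕ := P + s + 16 + 256 * 2 ^ s + (512 * s ^ 2) ^ 2 * (2 * K + 2) with hl
  have hlL : l < 2 ^ l := Nat.lt_two_pow_self
  set L : ℕ := 2 ^ l with hL
  have hLr : (2 : ℝ) ^ l = L := by rw [hL]; push_cast; rfl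
  refine ⟨l, 2 ^ (K * L), by positivity, by omega, by omega, ?_, ?_⟩
  · have hLpos : (0:ℝ) < L := by rw [← hLr]; positivity
    have hKr : (K : ℝ) = 256 * 2 ^ s := by rw [hK]; push_cast; rfl
    have hsum : (K : ℝ) / 32 ≤
        ∑ i ∈ Finset.range (2 ^ (K * L)), 1 / ((16 * rr l i : ℕ) : ℝ) := by
      have h1 : (1 / (16 * L) : ℝ) * ((harmonic (2 ^ (K * L)) : ℚ) : ℝ) ≤
          ∑ i ∈ Finset.range (2 ^ (K * L)), 1 / ((16 * rr l i : ℕ) : ℝ) := by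
        unfold harmonic
        push_cast
        rw [Finset.mul_sum]
        refine Finset.sum_le_sum fun i _ => ?_
        rw [← one_div, div_mul_div_comm, one_mul]
        have hh : (rr l i : ℝ) ≤ L * (i + 1) := by exact_mod_cast rr_le l i
        have hr0 : (0:ℝ) < rr l i := by exact_mod_cast rr_pos l i
        exact one_div_le_one_div_of_le (by positivity) (by linarith)
      refine le_trans ?_ h1
      have h2 := log_add_one_le_harmonic (2 ^ (K * L))
      have h3 : log ((2:ℝ) ^ (K * L)) ≤ log (((2 ^ (K * L) : ℕ) : ℝ) + 1) := by
        apply log_le_log (by positivity); push_cast; linarith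
      rw [log_pow] at h3
      push_cast at h2 h3
      have h4 : (K : ℝ) * L * (1 / 2) ≤ K * L * log 2 := by
        gcongr; linarith [log_two_gt_d9]
      calc (K : ℝ) / 32 = 1 / (16 * L) * (K * L * (1 / 2)) := by field_simp; ring
        _ ≤ _ := by gcongr; linarith
    have hs2 : (0:ℝ) < 2 ^ s := by positivity
    have hA : 4 / (∑ i ∈ Finset.range (2 ^ (K * L)), 1 / ((16 * rr l i : ℕ) : ℝ))
        ≤ 4 / (K / 32 : ℝ) := by gcongr
    have hB : 4 / (K / 32 : ℝ) = (1 / 2) * (1 / 2) ^ s := by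
      rw [hKr, one_div_pow]; field_simp; norm_num
    have hLge : (256 * 2 ^ s : ℝ) ≤ L := by
      have : 256 * 2 ^ s ≤ L := by omega
      exact_mod_cast this
    have hC : 128 / 2 ^ l ≤ (1 / 2 : ℝ) * (1 / 2) ^ s := by
      rw [hLr]
      calc (128 : ℝ) / L ≤ 128 / (256 * 2 ^ s) := by gcongr
        _ = _ := by rw [one_div_pow]; field_simp; norm_num
    linarith
  · intro i hi
    set N : ℕ := P + RR l (i + 1) with hN
    have hNub : N ≤ 2 * L * (i + 1) ^ 2 := by
      have := RR_le l (i + 1)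
      have h2 : L * 1 ≤ L * (i + 1) ^ 2 := Nat.mul_le_mul_left _ (Nat.one_le_pow _ _ (by omega))
      rw [← hL] at this
      have h3 : P ≤ L := by omega
      calc N ≤ L * (i + 1) ^ 2 + L * (i + 1) ^ 2 := by omega
        _ = _ := by ring
    have hNlb : 16 ≤ N := by
      have h1 := le_rr l i
      have h2 : L * 1 ≤ L * (i + 1) := Nat.mul_le_mul_left _ (by omega)
      rw [← hL] at h1
      rw [hN, RR_succ]
      have : 32 ≤ L := by
        have : 1 ≤ 2 ^ s := Nat.one_le_two_pow
        omega
      omega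
    have hNr : (16 : ℝ) ≤ N := by exact_mod_cast hNlb
    have hL1 : (1:ℝ) ≤ L := by exact_mod_cast (by omega : 1 ≤ L)
    have hlog1 : 1 < log N := by
      rw [lt_log_iff_exp_lt (by linarith)]
      linarith [exp_one_lt_d9]
    have hloglog : 0 < log (log N) := log_pos hlog1
    have hlogN : log N ≤ (2 * K + 2) * L := by
      have h1 : (N : ℝ) ≤ 2 * L * ((2:ℝ) ^ (K * L)) ^ 2 := by
        have h2 : N ≤ 2 * L * (2 ^ (K * L)) ^ 2 := by
          refine hNub.trans (Nat.mul_le_mul_left _ (Nat.pow_le_pow_left (by omega) 2))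
        exact_mod_cast h2
      have h2 := log_le_log (by linarith) h1
      rw [log_mul (by positivity) (by positivity), log_mul (by positivity) (by positivity),
        log_pow, log_pow] at h2
      have h3 := log_two_lt_d9
      have h4 := log_le_sub_one_of_pos (show (0:ℝ) < L by linarith)
      have h5 : ((K * L : ℕ) : ℝ) * log 2 ≤ K * L * 1 := by
        push_cast; gcongr; linarith
      have h6 : (0:ℝ) ≤ K * L := by positivity
      push_cast at h2 h5
      nlinarith
    set y : ℝ := (2 * K + 2) * L with hy
    have hy0 : 0 < y := by positivity
    have hll : log (log N) ≤ 2 * √y := by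
      have h1 := log_le_log (by linarith) hlogN
      have h2 : log y = 2 * log √y := by rw [log_sqrt hy0.le]; ring
      have h3 := log_le_sub_one_of_pos (sqrt_pos.2 hy0)
      linarith
    have hkey : 256 * (s : ℝ) ^ 2 * log (log N) ≤ L := by
      have h1 : 512 * (s : ℝ) ^ 2 * √y ≤ L := by
        rw [← abs_of_nonneg (show (0:ℝ) ≤ 512 * (s : ℝ) ^ 2 * √y by positivity)]
        refine abs_le_of_sq_le_sq ?_ (by positivity)
        rw [mul_pow, sq_sqrt hy0.le, hy]
        have : (512 * (s:ℝ) ^ 2) ^ 2 * (2 * K + 2) ≤ L := by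
          have : (512 * s ^ 2) ^ 2 * (2 * K + 2) ≤ L := by omega
          exact_mod_cast this
        nlinarith
      have h2 : 256 * (s : ℝ) ^ 2 * log (log N) ≤ 256 * (s : ℝ) ^ 2 * (2 * √y) := by gcongr
      linarith
    refine ⟨sqrt_pos.2 (by positivity), ?_⟩
    rw [← abs_of_nonneg (show (0:ℝ) ≤ (s : ℝ) * √(2 * N * log (log N)) by positivity)]
    refine abs_le_of_sq_le_sq ?_ (by positivity)
    rw [mul_pow, sq_sqrt (by positivity)]
    have hr2 : (L : ℝ) * ((i : ℝ) + 1) ≤ 2 * rr l i := by exact_mod_cast le_rr l i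
    have hNub' : (N : ℝ) ≤ 2 * L * ((i : ℝ) + 1) ^ 2 := by exact_mod_cast hNub
    have h4 : (L * ((i : ℝ) + 1)) ^ 2 ≤ (2 * rr l i) ^ 2 := by gcongr
    calc (s : ℝ) ^ 2 * (2 * N * log (log N))
        ≤ (s : ℝ) ^ 2 * (2 * (2 * L * ((i : ℝ) + 1) ^ 2) * log (log N)) := by gcongr
      _ = (256 * (s : ℝ) ^ 2 * log (log N)) * (L * ((i : ℝ) + 1) ^ 2 / 64) := by ring
      _ ≤ L * (L * ((i : ℝ) + 1) ^ 2 / 64) := by gcongr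
      _ = (L * ((i : ℝ) + 1)) ^ 2 / 64 := by ring
      _ ≤ (2 * rr l i) ^ 2 / 64 := by gcongr
      _ = (rr l i / 4) ^ 2 := by ring

/-! ### The layout of the blocks, the frequencies and the permutation -/

/-- The index `t` with `β t ≤ k < β (t + 1)`, for a strictly increasing `β` with `β 0 = 0`. -/
def idx (β : ℕ → ℕ) (k : ℕ) : ℕ := Nat.findGreatest (fun t => β t ≤ k) k

lemma idx_spec {β : ℕ → ℕ} (hβ : StrictMono β) (h0 : β 0 = 0) (k : ℕ) :
    β (idx β k) ≤ k ∧ k < β (idx β k + 1) := by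
  refine ⟨?_, ?_⟩
  · exact Nat.findGreatest_spec (P := fun t => β t ≤ k) (Nat.zero_le k) (by simp [h0])
  · by_contra h
    push Not at h
    have h1 : idx β k + 1 ≤ k := (hβ.le_apply).trans h
    have := Nat.le_findGreatest (P := fun t => β t ≤ k) h1 h
    unfold idx at this
    omega

lemma idx_eq {β : ℕ → ℕ} (hβ : StrictMono β) (h0 : β 0 = 0) {k t : ℕ} (h1 : β t ≤ k)
    (h2 : k < β (t + 1)) : idx β k = t := by
  obtain ⟨h3, h4⟩ := idx_spec hβ h0 k
  have h5 := hβ.lt_iff_lt.1 (h1.trans_lt h4)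
  have h6 := hβ.lt_iff_lt.1 (h3.trans_lt h2)
  omega

lemma RR_strictMono (l : ℕ) : StrictMono (RR l) :=
  strictMono_nat_of_lt_succ fun i => by rw [RR_succ]; have := rr_pos l i; omega

/-- A partition of the indices into consecutive stages. Stage `s` consists of `F s` fillers followed
by `I s` long blocks, the `i`-th of them of length `rr (l s) i`. -/
structure Layout where
  /-- The first index of stage `s`. -/
  a : ℕ → ℕ
  /-- The number of fillers of stage `s`. -/
  F : ℕ → ℕ
  /-- The parameter that determines the lengths of the long blocks of stage `s`. -/
  l : ℕ → ℕ
  /-- The number of long blocks of stage `s`. -/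
  I : ℕ → ℕ
  a_zero : a 0 = 0
  a_succ : ∀ s, a (s + 1) = a s + F s + RR (l s) (I s)
  F_pos : ∀ s, 0 < F s

namespace Layout

variable (Λ : Layout)

lemma a_strictMono : StrictMono Λ.a :=
  strictMono_nat_of_lt_succ fun s => by rw [Λ.a_succ]; have := Λ.F_pos s; omega

/-- The block containing index `k`, given that `k` lies in stage `s`: the pair of its first index
and its length. A filler is a block of length one. -/
def blkIn (s k : ℕ) : ℕ × ℕ :=
  if k < Λ.a s + Λ.F s then (k, 1)
  else
    (Λ.a s + Λ.F s + RR (Λ.l s) (idx (RR (Λ.l s)) (k - (Λ.a s + Λ.F s))),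
      rr (Λ.l s) (idx (RR (Λ.l s)) (k - (Λ.a s + Λ.F s))))

/-- The block containing index `k`: the pair of its first index and its length. -/
def blk (k : ℕ) : ℕ × ℕ := Λ.blkIn (idx Λ.a k) k

lemma blk_filler {s k : ℕ} (h1 : Λ.a s ≤ k) (h2 : k < Λ.a s + Λ.F s) : Λ.blk k = (k, 1) := by
  have : idx Λ.a k = s := idx_eq Λ.a_strictMono Λ.a_zero h1 (by rw [Λ.a_succ]; omega)
  simp [blk, blkIn, this, h2]

lemma RR_add_lt {l i I j : ℕ} (hi : i < I) (hj : j < rr l i) : RR l i + j < RR l I := by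
  have h1 : RR l (i + 1) ≤ RR l I := (RR_strictMono l).monotone hi
  rw [RR_succ] at h1
  omega

lemma blk_block {s i j : ℕ} (hi : i < Λ.I s) (hj : j < rr (Λ.l s) i) :
    Λ.blk (Λ.a s + Λ.F s + RR (Λ.l s) i + j)
      = (Λ.a s + Λ.F s + RR (Λ.l s) i, rr (Λ.l s) i) := by
  have hlt := RR_add_lt hi hj
  have hs : idx Λ.a (Λ.a s + Λ.F s + RR (Λ.l s) i + j) = s :=
    idx_eq Λ.a_strictMono Λ.a_zero (by omega) (by rw [Λ.a_succ]; omega)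
  have hi' : idx (RR (Λ.l s)) (RR (Λ.l s) i + j) = i :=
    idx_eq (RR_strictMono _) (RR_zero _) (by omega) (by rw [RR_succ]; omega)
  have e : Λ.a s + Λ.F s + RR (Λ.l s) i + j - (Λ.a s + Λ.F s) = RR (Λ.l s) i + j := by omega
  unfold blk
  rw [hs, blkIn, if_neg (by omega), e, hi']

/-- Every index is a filler or an element of a long block. -/
lemma cases (k : ℕ) : ∃ s, (Λ.a s ≤ k ∧ k < Λ.a s + Λ.F s) ∨
    ∃ i j, i < Λ.I s ∧ j < rr (Λ.l s) i ∧ k = Λ.a s + Λ.F s + RR (Λ.l s) i + j := by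
  obtain ⟨h1, h2⟩ := idx_spec Λ.a_strictMono Λ.a_zero k
  set s := idx Λ.a k
  refine ⟨s, ?_⟩
  by_cases h : k < Λ.a s + Λ.F s
  · exact Or.inl ⟨h1, h⟩
  · right
    obtain ⟨h3, h4⟩ := idx_spec (RR_strictMono (Λ.l s)) (RR_zero _) (k - (Λ.a s + Λ.F s))
    set i := idx (RR (Λ.l s)) (k - (Λ.a s + Λ.F s))
    rw [RR_succ] at h4
    rw [Λ.a_succ] at h2
    refine ⟨i, k - (Λ.a s + Λ.F s) - RR (Λ.l s) i, ?_, by omega, by omega⟩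
    exact (RR_strictMono (Λ.l s)).lt_iff_lt.1 (by omega)

lemma blk_start (s : ℕ) : Λ.blk (Λ.a s) = (Λ.a s, 1) :=
  Λ.blk_filler le_rfl (by have := Λ.F_pos s; omega)

/-- Either `k + 1` belongs to the same block as `k`, which is then a long block of some stage `s`, so
that `k` comes after the `F s` fillers of that stage; or `k + 1` is the first index of a block. -/
lemma blk_step (k : ℕ) :
    (k + 1 < (Λ.blk k).1 + (Λ.blk k).2 ∧ Λ.blk (k + 1) = Λ.blk k ∧
      ∃ s i, i < Λ.I s ∧ (Λ.blk k).2 = rr (Λ.l s) i ∧ Λ.F s ≤ k) ∨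
    (k + 1 = (Λ.blk k).1 + (Λ.blk k).2 ∧ (Λ.blk (k + 1)).1 = k + 1) := by
  -- the index right after the fillers, and right after any block, starts a block
  have hnext : ∀ s i, i ≤ Λ.I s → (Λ.blk (Λ.a s + Λ.F s + RR (Λ.l s) i)).1
      = Λ.a s + Λ.F s + RR (Λ.l s) i := by
    intro s i hi
    rcases hi.lt_or_eq with h | h
    · have := Λ.blk_block h (rr_pos (Λ.l s) i)
      rw [add_zero] at this
      rw [this]
    · subst h
      rw [← Λ.a_succ, Λ.blk_start]
  obtain ⟨s, ⟨h1, h2⟩ | ⟨i, j, hi, hj, rfl⟩⟩ := Λ.cases k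
  · right
    rw [Λ.blk_filler h1 h2]
    refine ⟨rfl, ?_⟩
    by_cases h : k + 1 < Λ.a s + Λ.F s
    · rw [Λ.blk_filler (by omega) h]
    · have e : k + 1 = Λ.a s + Λ.F s + RR (Λ.l s) 0 := by rw [RR_zero]; omega
      rw [e]
      exact hnext s 0 (Nat.zero_le _)
  · rw [Λ.blk_block hi hj]
    by_cases h : j + 1 < rr (Λ.l s) i
    · left
      refine ⟨by simp only; omega, ?_, s, i, hi, rfl, by omega⟩
      rw [add_assoc _ j 1, Λ.blk_block hi h]
    · right
      have e : Λ.a s + Λ.F s + RR (Λ.l s) i + j + 1 = Λ.a s + Λ.F s + RR (Λ.l s) (i + 1) := by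
        rw [RR_succ]; omega
      refine ⟨by simp only; omega, ?_⟩
      rw [e]
      exact hnext s (i + 1) hi

lemma blk_bounds (k : ℕ) : (Λ.blk k).1 ≤ k ∧ k < (Λ.blk k).1 + (Λ.blk k).2 ∧ 0 < (Λ.blk k).2 := by
  obtain ⟨s, ⟨h1, h2⟩ | ⟨i, j, hi, hj, rfl⟩⟩ := Λ.cases k
  · rw [Λ.blk_filler h1 h2]; simp
  · rw [Λ.blk_block hi hj]
    have := rr_pos (Λ.l s) i
    simp only; omega

/-- The frequencies: if `k` lies in the block with first index `b` and length `r`, then the `k`-th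
frequency is `2 ^ (e b) (r + (k - b))`. A filler `k` has frequency `2 ^ (e k)`. -/
def freq (e k : ℕ) : ℕ :=
  2 ^ (e * (Λ.blk k).1) * ((Λ.blk k).2 + (k - (Λ.blk k).1))

lemma freq_pos (e k : ℕ) : 0 < Λ.freq e k := by
  have := Λ.blk_bounds k
  unfold freq
  refine Nat.mul_pos (by positivity) (by omega)

lemma two_mul_add_one_le_pow {c : ℕ} (hc : 16 ≤ c) (t : ℕ) : 2 * t + 1 ≤ c ^ t := by
  induction t with
  | zero => simp
  | succ t ih => rw [pow_succ]; nlinarith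

/-- The gap condition. Inside a block of length `r` the ratio of successive frequencies is at least
`1 + 1 / (2 r)`, which suffices because the fillers postpone the block until `ε k ≤ 1 / (2 r)`. Between
blocks the ratio is at least `2 ^ e`. -/
lemma freq_ratio {ε : ℕ → ℝ} (hε : ∀ k, 0 < ε k) {e : ℕ} (he : 4 ≤ e)
    (heε : ∀ k, 1 + ε k ≤ (2:ℝ) ^ e)
    (hF : ∀ s k, Λ.F s ≤ k → ∀ i < Λ.I s, ε k * (2 * rr (Λ.l s) i) ≤ 1) (k : ℕ) :
    (1 + ε k) * (Λ.freq e k : ℝ) ≤ (Λ.freq e (k + 1) : ℝ) := by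
  obtain ⟨hb1, hb2, hb3⟩ := Λ.blk_bounds k
  rcases Λ.blk_step k with ⟨h1, h2, s, i, hi, h3, h4⟩ | ⟨h1, h2⟩
  · have hh := hF s k h4 i hi
    rw [← h3] at hh
    unfold freq
    rw [h2]
    set b := (Λ.blk k).1
    set r := (Λ.blk k).2
    obtain ⟨j, hkj⟩ := Nat.exists_eq_add_of_le hb1
    have e1 : k + 1 - b = j + 1 := by omega
    have e2 : k - b = j := by omega
    rw [e1, e2]
    push_cast
    have hj : (j : ℝ) ≤ r := by exact_mod_cast (by omega : j ≤ r)
    have hp : (0:ℝ) < 2 ^ (e * b) := by positivity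
    have h5 : (1 + ε k) * ((r : ℝ) + j) ≤ r + (j + 1) := by
      have := hε k
      nlinarith
    calc _ = (2:ℝ) ^ (e * b) * ((1 + ε k) * ((r : ℝ) + j)) := by ring
      _ ≤ _ := by gcongr
  · have h6 : 2 ^ (e * (k + 1)) ≤ Λ.freq e (k + 1) := by
      have := (Λ.blk_bounds (k + 1)).2.2
      unfold freq
      rw [h2]
      exact Nat.le_mul_of_pos_right _ (by omega)
    have h7 : 2 ^ e * Λ.freq e k ≤ 2 ^ (e * (k + 1)) := by
      unfold freq
      set b := (Λ.blk k).1
      obtain ⟨t, ht⟩ : ∃ t, (Λ.blk k).2 = t + 1 := ⟨(Λ.blk k).2 - 1, by omega⟩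
      have hk : k = b + t := by omega
      have e1 : (Λ.blk k).2 + (k - b) = 2 * t + 1 := by omega
      rw [e1]
      have hc : 16 ≤ 2 ^ e := by
        calc 16 = 2 ^ 4 := by norm_num
          _ ≤ 2 ^ e := Nat.pow_le_pow_right (by norm_num) he
      calc 2 ^ e * (2 ^ (e * b) * (2 * t + 1)) ≤ 2 ^ e * (2 ^ (e * b) * (2 ^ e) ^ t) := by
            gcongr; exact two_mul_add_one_le_pow hc t
        _ = 2 ^ (e * (b + t + 1)) := by ring
        _ = _ := by rw [← hk]
    have h8 : (2:ℝ) ^ e * Λ.freq e k ≤ Λ.freq e (k + 1) := by exact_mod_cast h7.trans h6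
    refine le_trans ?_ h8
    gcongr
    exact heε k

/-- All frequencies before the first index `b` of a block are less than half of `2 ^ (e b)`, the
common divisor of the frequencies of that block. -/
lemma two_mul_freq_lt {e : ℕ} (he : 4 ≤ e) {k b : ℕ} (hb : (Λ.blk b).1 = b) (hk : k < b)
    (hmono : StrictMono (Λ.freq e)) : 2 * Λ.freq e k < 2 ^ (e * b) := by
  obtain ⟨k', rfl⟩ : ∃ k', b = k' + 1 := ⟨b - 1, by omega⟩
  have hle : Λ.freq e k ≤ Λ.freq e k' := hmono.monotone (by omega)
  refine lt_of_le_of_lt (Nat.mul_le_mul_left 2 hle) ?_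
  obtain ⟨hb1, hb2, hb3⟩ := Λ.blk_bounds k'
  rcases Λ.blk_step k' with ⟨h1, h2, -⟩ | ⟨h1, h2⟩
  · rw [h2] at hb; omega
  · unfold freq
    set b := (Λ.blk k').1
    obtain ⟨t, ht⟩ : ∃ t, (Λ.blk k').2 = t + 1 := ⟨(Λ.blk k').2 - 1, by omega⟩
    have hk : k' = b + t := by omega
    have e1 : (Λ.blk k').2 + (k' - b) = 2 * t + 1 := by omega
    rw [e1]
    have hc : 16 ≤ 2 ^ e := by
      calc 16 = 2 ^ 4 := by norm_num
        _ ≤ 2 ^ e := Nat.pow_le_pow_right (by norm_num) he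
    have hpos : 0 < 2 ^ (e * b) * (2 ^ e) ^ t := by positivity
    calc 2 * (2 ^ (e * b) * (2 * t + 1)) ≤ 2 * (2 ^ (e * b) * (2 ^ e) ^ t) := by
          gcongr; exact two_mul_add_one_le_pow hc t
      _ < 2 ^ e * (2 ^ (e * b) * (2 ^ e) ^ t) := Nat.mul_lt_mul_of_pos_right (by omega) hpos
      _ = 2 ^ (e * (b + t + 1)) := by ring
      _ = _ := by rw [← hk]

/-- The rotation of stage `s` that lists its long blocks first and its fillers last. -/
def rotate (s k : ℕ) : ℕ :=
  if k < Λ.a s + RR (Λ.l s) (Λ.I s) then k + Λ.F s else k - RR (Λ.l s) (Λ.I s)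

/-- The inverse of `rotate` on stage `s`. -/
def unrotate (s k : ℕ) : ℕ :=
  if k < Λ.a s + Λ.F s then k + RR (Λ.l s) (Λ.I s) else k - Λ.F s

/-- The permutation that rotates every stage, so that in each stage the long blocks come before
the fillers. -/
def perm : Equiv.Perm ℕ where
  toFun k := Λ.rotate (idx Λ.a k) k
  invFun k := Λ.unrotate (idx Λ.a k) k
  left_inv k := by
    obtain ⟨h1, h2⟩ := idx_spec Λ.a_strictMono Λ.a_zero k
    obtain ⟨s, hs⟩ : ∃ s, idx Λ.a k = s := ⟨_, rfl⟩
    rw [hs] at h1 h2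
    rw [Λ.a_succ] at h2
    have : idx Λ.a (Λ.rotate s k) = s := by
      refine idx_eq Λ.a_strictMono Λ.a_zero ?_ ?_ <;>
        simp only [rotate, Λ.a_succ] <;> split_ifs <;> omega
    simp only [hs, this]
    simp only [rotate, unrotate]
    split_ifs <;> omega
  right_inv k := by
    obtain ⟨h1, h2⟩ := idx_spec Λ.a_strictMono Λ.a_zero k
    obtain ⟨s, hs⟩ : ∃ s, idx Λ.a k = s := ⟨_, rfl⟩
    rw [hs] at h1 h2
    rw [Λ.a_succ] at h2
    have : idx Λ.a (Λ.unrotate s k) = s := by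
      refine idx_eq Λ.a_strictMono Λ.a_zero ?_ ?_ <;>
        simp only [unrotate, Λ.a_succ] <;> split_ifs <;> omega
    simp only [hs, this]
    simp only [rotate, unrotate]
    split_ifs <;> omega

lemma perm_apply (k : ℕ) : Λ.perm k = Λ.rotate (idx Λ.a k) k := rfl

lemma perm_block {s u : ℕ} (hu : u < RR (Λ.l s) (Λ.I s)) :
    Λ.perm (Λ.a s + u) = Λ.a s + Λ.F s + u := by
  have : idx Λ.a (Λ.a s + u) = s :=
    idx_eq Λ.a_strictMono Λ.a_zero (by omega) (by rw [Λ.a_succ]; omega)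
  rw [perm_apply, this, rotate, if_pos (by omega)]; omega

lemma perm_lt {s k : ℕ} (hk : k < Λ.a s) : Λ.perm k < Λ.a s := by
  obtain ⟨h1, h2⟩ := idx_spec Λ.a_strictMono Λ.a_zero k
  rw [perm_apply, rotate]
  set t := idx Λ.a k
  have h3 : t < s := Λ.a_strictMono.lt_iff_lt.1 (h1.trans_lt hk)
  have h4 : Λ.a (t + 1) ≤ Λ.a s := Λ.a_strictMono.monotone h3
  rw [Λ.a_succ] at h2 h4
  split_ifs <;> omega

/-- The estimate of `stage_bound` for the permuted frequencies: the terms before stage `s` are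
permuted among themselves, and stage `s` then starts with its long blocks. -/
lemma stage_measure {e : ℕ} (he : 4 ≤ e) (hmono : StrictMono (Λ.freq e)) (s : ℕ)
    (hP : Λ.a s ≤ 2 ^ Λ.l s) (hI : 0 < Λ.I s) :
    volume.restrict (Set.Ioo (0:ℝ) 1)
      {x | ∀ i < Λ.I s, SS (fun k => Λ.freq e (Λ.perm k)) (Λ.a s + RR (Λ.l s) (i + 1)) x
        < rr (Λ.l s) i / 4}
      ≤ ENNReal.ofReal (4 / (∑ i ∈ Finset.range (Λ.I s), 1 / ((16 * rr (Λ.l s) i : ℕ) : ℝ))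
          + 128 / 2 ^ Λ.l s) := by
  refine stage_bound (fun k => Λ.freq e (Λ.perm k)) (hmono.injective.comp Λ.perm.injective)
    (fun k => Λ.freq_pos e _) (Λ.a s) (Λ.l s) (Λ.I s) hP hI
    (fun i => 2 ^ (e * (Λ.a s + Λ.F s + RR (Λ.l s) i))) (fun i => by positivity) ?_ ?_ ?_ _ rfl
  · intro i hi k hk
    have hb := Λ.blk_block hi (rr_pos (Λ.l s) i)
    rw [add_zero] at hb
    refine Λ.two_mul_freq_lt he (by rw [hb]) ?_ hmono
    by_cases h : k < Λ.a s
    · have := Λ.perm_lt h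
      omega
    · obtain ⟨u, rfl⟩ := Nat.exists_eq_add_of_le (not_lt.1 h)
      have h1 := (RR_strictMono (Λ.l s)) hi
      rw [Λ.perm_block (by omega)]
      omega
  · intro i hi j hj
    have h1 := RR_add_lt hi hj
    rw [add_assoc, Λ.perm_block h1, ← add_assoc, freq, Λ.blk_block hi hj]
    simp only
    rw [show Λ.a s + Λ.F s + RR (Λ.l s) i + j - (Λ.a s + Λ.F s + RR (Λ.l s) i) = j by omega]
  · intro i j hij hj
    have h1 : RR (Λ.l s) (i + 1) ≤ RR (Λ.l s) j := (RR_strictMono _).monotone hij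
    rw [RR_succ] at h1
    simp only [rr] at h1 ⊢
    set d := Λ.l s + Nat.log 2 (i + 1)
    rw [show (16:ℕ) = 2 ^ 4 by norm_num, ← pow_add, ← pow_add]
    refine pow_dvd_pow 2 ?_
    have h2 : d < 2 ^ d := Nat.lt_two_pow_self
    calc e * (Λ.a s + Λ.F s + RR (Λ.l s) i) + (4 + d)
        ≤ e * (Λ.a s + Λ.F s + RR (Λ.l s) i) + e * 2 ^ d := by
          have : 4 * 2 ^ d ≤ e * 2 ^ d := Nat.mul_le_mul_right _ he
          omega
      _ = e * (Λ.a s + Λ.F s + (RR (Λ.l s) i + 2 ^ d)) := by ring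
      _ ≤ _ := by gcongr

end Layout

/-! ### Construction of the layout and conclusion -/

/-- The parameters of each stage may be prescribed as functions of the stage and of the number of
terms already placed. -/
lemma exists_layout (l I F : ℕ → ℕ → ℕ) (hF : ∀ s P, 0 < F s P) :
    ∃ Λ : Layout, (∀ s, Λ.l s = l s (Λ.a s)) ∧ (∀ s, Λ.I s = I s (Λ.a s)) ∧
      ∀ s, Λ.F s = F s (Λ.a s) := by
  set a : ℕ → ℕ := fun s => Nat.rec 0 (fun s P => P + F s P + RR (l s P) (I s P)) s
  exact ⟨⟨a, fun s => F s (a s), fun s => l s (a s), fun s => I s (a s), rfl, fun _ => rfl,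
    fun s => hF _ _⟩, fun _ => rfl, fun _ => rfl, fun _ => rfl⟩

/-- Theorem `counterex`, LIL part: for any positive `ε_k → 0` there are a sequence `(n_k)` of
positive integers with `n_{k+1}/n_k ≥ 1 + ε_k` for `k ≥ k₀` and a permutation `σ` of the
positive integers such that `limsup_N (∑_{k≤N} cos(2π n_{σ(k)} x)) / √(2N log log N) = +∞`
for Lebesgue-almost every `x ∈ (0,1)`. -/
theorem statement1
    (ε : ℕ → ℝ) (hε_pos : ∀ k, 0 < ε k) (hε_lim : Tendsto ε atTop (𝓝 0)) :
    ∃ (n : ℕ → ℕ) (k₀ : ℕ) (σ : Equiv.Perm ℕ),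
      (∀ k, 0 < n k) ∧
      (∀ k, k₀ ≤ k → (1 + ε k) * (n k : ℝ) ≤ (n (k + 1) : ℝ)) ∧
      (∀ᵐ x ∂(volume.restrict (Set.Ioo (0:ℝ) 1)),
        Filter.limsup (fun N : ℕ =>
            (((∑ k ∈ Finset.range N, Real.cos (2 * π * (n (σ k)) * x)) /
              Real.sqrt (2 * N * Real.log (Real.log N))) : EReal)) atTop = ⊤) := by
  choose l I hIpos hPl hsl hsmall hbig using exists_params
  -- Enough fillers bring `ε` below `1 / (2 r)` for all block lengths `r` of the stage.
  have hFex : ∀ s P, ∃ F, 0 < F ∧ ∀ k, F ≤ k → ∀ i < I s P, ε k * (2 * rr (l s P) i) ≤ 1 := by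
    intro s P
    have hpos : (0:ℝ) < 1 / (2 * (2 ^ l s P * I s P)) := by
      have : (0:ℝ) < I s P := by exact_mod_cast hIpos s P
      positivity
    obtain ⟨F, hF⟩ := eventually_atTop.1 (hε_lim.eventually (eventually_lt_nhds hpos))
    refine ⟨F + 1, by omega, fun k hk i hi => ?_⟩
    have h1 := hF k (by omega)
    have h2 : (rr (l s P) i : ℝ) ≤ 2 ^ l s P * I s P := by
      have : rr (l s P) i ≤ 2 ^ l s P * I s P :=
        (rr_le _ _).trans (Nat.mul_le_mul_left _ hi)
      exact_mod_cast this
    have h3 := hε_pos k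
    have h0 : (0:ℝ) < 2 * (2 ^ l s P * I s P) := one_div_pos.1 hpos
    rw [lt_div_iff₀ h0] at h1
    nlinarith
  choose F hF0 hF using hFex
  obtain ⟨Λ, hΛl, hΛI, hΛF⟩ := exists_layout l I F hF0
  -- The factor `2 ^ e` between blocks has to dominate `1 + ε k` for every `k`.
  obtain ⟨C, hC⟩ := hε_lim.bddAbove_range
  obtain ⟨e₀, he₀⟩ := exists_nat_gt (1 + C)
  set e := e₀ + 4 with he
  have heε : ∀ k, 1 + ε k ≤ (2:ℝ) ^ e := by
    intro k
    have h1 : ε k ≤ C := hC ⟨k, rfl⟩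
    have h2 : (e : ℝ) < 2 ^ e := by exact_mod_cast (Nat.lt_two_pow_self : e < 2 ^ e)
    have h3 : (e : ℝ) = e₀ + 4 := by rw [he]; push_cast; rfl
    linarith
  have hratio : ∀ k, (1 + ε k) * (Λ.freq e k : ℝ) ≤ (Λ.freq e (k + 1) : ℝ) := by
    refine Λ.freq_ratio hε_pos (by omega) heε fun s k hk i hi => ?_
    rw [hΛF] at hk
    rw [hΛI] at hi
    rw [hΛl]
    exact hF s _ k hk i hi
  have hmono : StrictMono (Λ.freq e) := by
    refine strictMono_nat_of_lt_succ fun k => ?_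
    have h1 : (0:ℝ) < Λ.freq e k := by exact_mod_cast Λ.freq_pos e k
    have h2 := hratio k
    have h3 := hε_pos k
    have : (Λ.freq e k : ℝ) < Λ.freq e (k + 1) := by nlinarith
    exact_mod_cast this
  refine ⟨Λ.freq e, 0, Λ.perm, Λ.freq_pos e, fun k _ => hratio k, ?_⟩
  set ν : ℕ → ℕ := fun k => Λ.freq e (Λ.perm k) with hν
  set B : ℕ → Set ℝ := fun s => {x | ∀ i < Λ.I s,
    SS ν (Λ.a s + RR (Λ.l s) (i + 1)) x < rr (Λ.l s) i / 4} with hB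
  have hBm : ∀ s, volume.restrict (Set.Ioo (0:ℝ) 1) (B s) ≤ ENNReal.ofReal ((1 / 2 : ℝ) ^ s) := by
    intro s
    refine (Λ.stage_measure (by omega) hmono s ?_ ?_).trans (ENNReal.ofReal_le_ofReal ?_)
    · rw [hΛl]; exact hPl _ _
    · rw [hΛI]; exact hIpos _ _
    · rw [hΛl, hΛI]; exact hsmall _ _
  have hsum : ∑' s, volume.restrict (Set.Ioo (0:ℝ) 1) (B s) ≠ ⊤ := by
    refine ne_top_of_le_ne_top ?_ (ENNReal.tsum_le_tsum hBm)
    rw [← ENNReal.ofReal_tsum_of_nonneg (fun s => by positivity) summable_geometric_two]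
    exact ENNReal.ofReal_ne_top
  -- By the Borel–Cantelli lemma almost every `x` lies in only finitely many of the sets `B s`.
  filter_upwards [ae_eventually_notMem hsum] with x hx
  rw [eventually_atTop] at hx
  obtain ⟨s₀, hs₀⟩ := hx
  rw [EReal.eq_top_iff_forall_lt]
  intro y
  refine lt_of_lt_of_le (b := ((|y| + 1 : ℝ) : EReal))
    (EReal.coe_lt_coe_iff.2 (by linarith [le_abs_self y])) ?_
  refine le_limsup_of_frequently_le' ?_
  rw [frequently_atTop]
  intro M
  obtain ⟨t, ht⟩ := exists_nat_gt (|y| + 1)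
  set s := max s₀ (max M t) with hs
  have hxs := hs₀ s (le_max_left _ _)
  simp only [hB, Set.mem_ofPred_eq, not_forall, not_lt] at hxs
  obtain ⟨i, hi, hge⟩ := hxs
  have hi' := hi
  rw [hΛI] at hi'
  obtain ⟨hb0, hb1⟩ := hbig s (Λ.a s) i hi'
  rw [← hΛl] at hb0 hb1
  refine ⟨Λ.a s + RR (Λ.l s) (i + 1), ?_, ?_⟩
  · have h1 : s ≤ 2 ^ Λ.l s := by rw [hΛl]; exact hsl _ _
    have h2 : 2 ^ Λ.l s ≤ rr (Λ.l s) i := Nat.pow_le_pow_right (by norm_num) (by omega)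
    have h3 : M ≤ s := (le_max_left _ _).trans (le_max_right _ _)
    rw [RR_succ]
    omega
  · rw [← EReal.coe_div, EReal.coe_le_coe_iff, le_div_iff₀ hb0]
    have hts : (t : ℝ) ≤ s := by exact_mod_cast (le_max_right M t).trans (le_max_right _ _)
    calc (|y| + 1) * _ ≤ (s : ℝ) * _ := by
          refine mul_le_mul_of_nonneg_right ?_ hb0.le
          linarith
      _ ≤ _ := hb1
      _ ≤ _ := hge
end
end
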